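/- arXiv:1607.08716 — 7 statements merged into one kernel-verified Lean document; each statement's English description precedes it below -/
import Mathlib

section
/- Let d ≥ 1 and let M = QDT ∈ SL(d,ℝ), where Q ∈ SO(d), D = diag(c₁,…,c_d) with c_i > 0 and ∏_{i=1}^d c_i = 1, and T is a lower triangular matrix with 1's on the diagonal. Then for every u ∈ ℝ^d and every α > 0, Σ_{k∈ℤ^d} exp(−πα|Mk+u|²) ≥ Σ_{n∈ℤ^d} exp(−πα|D(n + (1/2,…,1/2))|²) = ∏_{i=1}^{d} θ₂(c_i² α), where θ₂(x) = Σ_{n∈ℤ} e^{−πx(n+1/2)²}. -/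
/-!
Since `Q` is orthogonal, `|Mk + u|² = |DTk + Qᵀu|² = Σ_i c_i² (k_i + s_i(k))²`, where the shift
`s_i(k)` depends only on the coordinates `k_j` with `j < i`. Summing out the last coordinate first,
then the last but one, and so on, every one-dimensional sum is a shifted Gaussian sum
`S(a, t) = Σ_n exp(-a (n + t)²)`, so everything reduces to `S(a, 1/2) ≤ S(a, t)`
(`gaussSum1_half_le`); a uniform upper bound for `S(a, ·)` gives the convergence
(`prod_le_tsum_prod_le`).

For the one-dimensional inequality, write `p = S(2a, t)`, `r = S(2a, t + 1/2)`, `A = S(2a, 0)`,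
`B = S(2a, 1/2)`. Rotating `ℤ²` by 45° gives the product formula
`S(a, x + y) S(a, x - y) = S(2a, x) S(2a, y) + S(2a, x + 1/2) S(2a, y + 1/2)`
(`gaussSum1_mul`), whence `S(a, t)² = pA + rB` and `S(a, 1/2)² = 2AB`, and also
`pr = C S(a, 2t + 1/2)`, `AB = C S(a, 1/2)` with the same constant `C = S(4a, 1/4)`. By AM-GM,
`S(a, t)⁴ ≥ 4 pA rB`, which says that `φ(t) = S(a, t) / S(a, 1/2)` satisfies
`φ(t)⁴ ≥ φ(2t + 1/2)`. So the infimum `m > 0` of `φ` satisfies `m⁴ ≥ m`, that is, `m ≥ 1`.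
-/

open scoped BigOperators

/-- The classical Jacobi theta function `θ₂(x) = Σ_{k∈ℤ} e^{−π(k+1/2)²x}`. -/
noncomputable def theta2 (x : ℝ) : ℝ :=
  ∑' n : ℤ, Real.exp (-Real.pi * ((n : ℝ) + 1 / 2) ^ 2 * x)

open scoped ENNReal

/-! ### Shifted Gaussian sums in dimension one -/

/-- The shifted Gaussian sum `S(a, t) = Σ_{n ∈ ℤ} exp(-a (n + t)²)`. -/
noncomputable def gaussSum1 (a t : ℝ) : ℝ :=
  ∑' n : ℤ, Real.exp (-a * ((n : ℝ) + t) ^ 2)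

lemma summable_gauss {a : ℝ} (ha : 0 < a) (t : ℝ) :
    Summable fun n : ℤ => Real.exp (-a * ((n : ℝ) + t) ^ 2) := by
  have hpi := Real.pi_pos
  -- Up to the factor `exp(-a t²)`, the terms are norms of terms of the two-variable Jacobi theta
  -- series.
  have h := ((summable_jacobiTheta₂_term_iff (⟨0, a * t / Real.pi⟩ : ℂ)
    (⟨0, a / Real.pi⟩ : ℂ)).2 (by positivity)).norm
  simp_rw [norm_jacobiTheta₂_term] at h
  refine (h.mul_left (Real.exp (-a * t ^ 2))).congr fun n => ?_
  rw [← Real.exp_add]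
  congr 1
  field_simp
  ring

lemma gaussSum1_pos {a : ℝ} (ha : 0 < a) (t : ℝ) : 0 < gaussSum1 a t :=
  (summable_gauss ha t).tsum_pos (fun _ => (Real.exp_pos _).le) 0 (Real.exp_pos _)

lemma gaussSum1_add_int (a t : ℝ) (m : ℤ) : gaussSum1 a (t + m) = gaussSum1 a t := by
  unfold gaussSum1
  rw [← (Equiv.addRight m).tsum_eq fun n : ℤ => Real.exp (-a * ((n : ℝ) + t) ^ 2)]
  refine tsum_congr fun n => ?_
  simp only [Equiv.coe_addRight]
  push_cast
  ring_nf

lemma gaussSum1_neg (a t : ℝ) : gaussSum1 a (-t) = gaussSum1 a t := by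
  unfold gaussSum1
  rw [← (Equiv.neg ℤ).tsum_eq fun n : ℤ => Real.exp (-a * ((n : ℝ) + t) ^ 2)]
  refine tsum_congr fun n => ?_
  simp only [Equiv.neg_apply]
  push_cast
  ring_nf

lemma gaussSum1_fract (a t : ℝ) : gaussSum1 a (Int.fract t) = gaussSum1 a t := by
  conv_rhs => rw [← Int.fract_add_floor t, gaussSum1_add_int]

lemma exp_neg_le_gaussSum1 {a : ℝ} (ha : 0 < a) (t : ℝ) : Real.exp (-a) ≤ gaussSum1 a t := by
  rw [← gaussSum1_fract]
  refine le_trans ?_ ((summable_gauss ha (Int.fract t)).le_tsum 0 fun _ _ => (Real.exp_pos _).le)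
  have h0 := Int.fract_nonneg t
  have h1 := (Int.fract_lt_one t).le
  apply Real.exp_le_exp.2
  have h2 : Int.fract t ^ 2 ≤ 1 := by nlinarith
  push_cast
  rw [zero_add]
  nlinarith

lemma gaussSum1_le {a : ℝ} (ha : 0 < a) (t : ℝ) :
    gaussSum1 a t ≤ Real.exp a * gaussSum1 (a / 2) 0 := by
  rw [← gaussSum1_fract]
  have h0 := Int.fract_nonneg t
  have h1 := (Int.fract_lt_one t).le
  unfold gaussSum1
  rw [← tsum_mul_left]
  refine (summable_gauss ha _).tsum_le_tsum (fun n => ?_)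
    ((summable_gauss (half_pos ha) 0).mul_left _)
  rw [← Real.exp_add]
  apply Real.exp_le_exp.2
  -- `(n + x)² ≥ n² / 2 - x²`, with `x` the fractional part of `t`.
  have h2 : (n : ℝ) ^ 2 / 2 - 1 ≤ ((n : ℝ) + Int.fract t) ^ 2 := by
    nlinarith [sq_nonneg ((n : ℝ) + 2 * Int.fract t)]
  nlinarith [mul_le_mul_of_nonneg_left h2 ha.le]

lemma tsum_eq_tsum_add_tsum_of_compl {β γ : Type*} {f : β → ℝ} (hf : Summable f) {i j : γ → β}
    (hi : Function.Injective i) (hj : Function.Injective j)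
    (hij : (Set.range i)ᶜ = Set.range j) :
    ∑' x, f x = ∑' y, f (i y) + ∑' y, f (j y) := by
  rw [← (hf.subtype (· ∈ Set.range i)).tsum_add_tsum_compl (s := Set.range i) (hf.subtype _), hij,
    tsum_range f hi, tsum_range f hj]

/-- The product formula obtained by splitting `ℤ²` into the two cosets of the sublattice
`{(p + q, p - q)}`. -/
lemma gaussSum1_mul {a : ℝ} (ha : 0 < a) (x y : ℝ) :
    gaussSum1 a (x + y) * gaussSum1 a (x - y) =
      gaussSum1 (2 * a) x * gaussSum1 (2 * a) y +
        gaussSum1 (2 * a) (x + 1 / 2) * gaussSum1 (2 * a) (y + 1 / 2) := by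
  have h2a : 0 < 2 * a := by positivity
  have hs : ∀ {b : ℝ}, 0 < b → ∀ s t : ℝ, Summable fun z : ℤ × ℤ =>
      Real.exp (-b * ((z.1 : ℝ) + s) ^ 2) * Real.exp (-b * ((z.2 : ℝ) + t) ^ 2) :=
    fun hb s t => (summable_gauss hb s).mul_of_nonneg (summable_gauss hb t)
      (fun _ => (Real.exp_pos _).le) (fun _ => (Real.exp_pos _).le)
  have hm : ∀ {b : ℝ}, 0 < b → ∀ s t : ℝ, gaussSum1 b s * gaussSum1 b t = ∑' z : ℤ × ℤ,
      Real.exp (-b * ((z.1 : ℝ) + s) ^ 2) * Real.exp (-b * ((z.2 : ℝ) + t) ^ 2) :=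
    fun hb s t => (summable_gauss hb s).tsum_mul_tsum (summable_gauss hb t) (hs hb s t)
  rw [hm ha, hm h2a, hm h2a, tsum_eq_tsum_add_tsum_of_compl (hs ha _ _)
    (i := fun z : ℤ × ℤ => (z.1 + z.2, z.1 - z.2))
    (j := fun z : ℤ × ℤ => (z.1 + z.2 + 1, z.1 - z.2))]
  · congr 1 <;> refine tsum_congr fun z => ?_ <;> rw [← Real.exp_add, ← Real.exp_add] <;>
      congr 1 <;> push_cast <;> ring
  · rintro ⟨p, q⟩ ⟨p', q'⟩ h
    simp only [Prod.mk.injEq] at h ⊢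
    omega
  · rintro ⟨p, q⟩ ⟨p', q'⟩ h
    simp only [Prod.mk.injEq] at h ⊢
    omega
  · ext ⟨m, n⟩
    simp only [Set.mem_compl_iff, Set.mem_range, Prod.exists, Prod.mk.injEq, not_exists]
    constructor
    · intro h
      have := h ((m + n) / 2) ((m - n) / 2)
      exact ⟨(m + n) / 2, (m - n) / 2, by omega, by omega⟩
    · rintro ⟨p, q, h1, h2⟩ p' q' h
      omega

lemma gaussSum1_parity {a : ℝ} (ha : 0 < a) (t : ℝ) :
    gaussSum1 (4 * a) t + gaussSum1 (4 * a) (t + 1 / 2) = gaussSum1 a (2 * t) := by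
  unfold gaussSum1
  rw [tsum_eq_tsum_add_tsum_of_compl (summable_gauss ha (2 * t))
    (i := fun n : ℤ => 2 * n) (j := fun n : ℤ => 2 * n + 1)]
  · congr 1 <;> refine tsum_congr fun z => ?_ <;> congr 1 <;> push_cast <;> ring
  · intro p q h
    simp only at h
    omega
  · intro p q h
    simp only at h
    omega
  · ext m
    simp only [Set.mem_compl_iff, Set.mem_range, not_exists]
    constructor
    · intro h
      have := h (m / 2)
      exact ⟨m / 2, by omega⟩
    · rintro ⟨p, h1⟩ p' h
      omega

lemma gaussSum1_mul_shift {a : ℝ} (ha : 0 < a) (t : ℝ) :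
    gaussSum1 (2 * a) t * gaussSum1 (2 * a) (t + 1 / 2) =
      gaussSum1 (4 * a) (1 / 4) * gaussSum1 a (2 * t + 1 / 2) := by
  have h := gaussSum1_mul (a := 2 * a) (by positivity) (t + 1 / 4) (-(1 / 4))
  have h3 := gaussSum1_parity ha (t + 1 / 4)
  rw [gaussSum1_neg, show -(1 / 4 : ℝ) + 1 / 2 = 1 / 4 by norm_num,
    show 2 * (2 * a) = 4 * a by ring, show t + 1 / 4 + -(1 / 4) = t by ring,
    show t + 1 / 4 - -(1 / 4) = t + 1 / 2 by ring] at h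
  rw [show 2 * t + 1 / 2 = 2 * (t + 1 / 4) by ring, ← h3, h]
  ring

/-- The inequality `φ(2t + 1/2) ≤ φ(t)⁴` for `φ(t) = S(a, t) / S(a, 1/2)`, cleared of
denominators. -/
lemma gaussSum1_pow_four {a : ℝ} (ha : 0 < a) (t : ℝ) :
    gaussSum1 a (1 / 2) ^ 3 * gaussSum1 a (2 * t + 1 / 2) ≤ gaussSum1 a t ^ 4 := by
  have hA := gaussSum1_mul ha t 0
  have hB := gaussSum1_mul ha (1 / 2) 0
  have hp := gaussSum1_mul_shift ha t
  have h0 := gaussSum1_mul_shift ha 0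
  have h1 : gaussSum1 (2 * a) (1 / 2 + 1 / 2) = gaussSum1 (2 * a) 0 := by
    have := gaussSum1_add_int (2 * a) 0 1
    rw [← this]
    norm_num
  rw [h1] at hB
  simp only [add_zero, sub_zero, zero_add, mul_zero] at hA hB h0
  have hh := gaussSum1_pos ha (1 / 2)
  generalize gaussSum1 (2 * a) t = p at *
  generalize gaussSum1 (2 * a) (t + 1 / 2) = r at *
  generalize gaussSum1 (2 * a) 0 = A at *
  generalize gaussSum1 (2 * a) (1 / 2) = B at *
  generalize gaussSum1 (4 * a) (1 / 4) = C at *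
  generalize gaussSum1 a (2 * t + 1 / 2) = y at *
  generalize gaussSum1 a (1 / 2) = h at *
  generalize gaussSum1 a t = x at *
  -- `h² = 2AB = 2Ch`, so `h = 2C` and `h³ y = 2AB · 2C y = 4AB · pr`.
  have hC2 : h = 2 * C := by
    refine mul_right_cancel₀ hh.ne' ?_
    linear_combination hB + 2 * h0
  have e : h ^ 3 * y = 4 * (p * A) * (r * B) := by
    linear_combination (h * y) * hB + 2 * A * B * y * hC2 - 4 * A * B * hp
  have e2 : x ^ 4 = (p * A + r * B) ^ 2 := by rw [← hA]; ring
  rw [e, e2]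
  nlinarith [sq_nonneg (p * A - r * B)]

theorem gaussSum1_half_le {a : ℝ} (ha : 0 < a) (t : ℝ) : gaussSum1 a (1 / 2) ≤ gaussSum1 a t := by
  have hbdd : BddBelow (Set.range (gaussSum1 a)) :=
    ⟨0, by rintro _ ⟨s, rfl⟩; exact (gaussSum1_pos ha s).le⟩
  set h := gaussSum1 a (1 / 2) with hh
  have hpos : 0 < h := gaussSum1_pos ha _
  set m := ⨅ s, gaussSum1 a s with hm
  have hm0 : 0 < m := (Real.exp_pos (-a)).trans_le (le_ciInf fun s => exp_neg_le_gaussSum1 ha s)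
  have hmle : ∀ s, m ≤ gaussSum1 a s := fun s => ciInf_le hbdd s
  refine le_trans ?_ (hmle t)
  by_contra! hlt
  -- Every value is at least the fourth root of `h³ m`, which exceeds `m` when `m < h`.
  have key : ∀ s, h ^ 3 * m ≤ gaussSum1 a s ^ 4 := fun s =>
    le_trans (mul_le_mul_of_nonneg_left (hmle _) (by positivity)) (gaussSum1_pow_four ha s)
  have hroot : (h ^ 3 * m) ^ (1 / 4 : ℝ) ≤ m := by
    refine le_ciInf fun s => ?_
    have h4 := Real.rpow_le_rpow (by positivity) (key s) (by norm_num : (0 : ℝ) ≤ 1 / 4)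
    rwa [← Real.rpow_natCast (gaussSum1 a s), ← Real.rpow_mul (gaussSum1_pos ha s).le,
      show ((4 : ℕ) : ℝ) * (1 / 4) = 1 by norm_num, Real.rpow_one] at h4
  have h5 : h ^ 3 * m ≤ m ^ 4 := by
    have := pow_le_pow_left₀ (by positivity) hroot 4
    rwa [← Real.rpow_natCast ((h ^ 3 * m) ^ (1 / 4 : ℝ)), ← Real.rpow_mul (by positivity),
      show (1 / 4 : ℝ) * ((4 : ℕ) : ℝ) = 1 by norm_num, Real.rpow_one] at this
  have h6 : h ^ 3 ≤ m ^ 3 := le_of_mul_le_mul_right (by linarith [h5]) hm0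
  exact absurd h6 (not_le.2 (pow_lt_pow_left₀ hlt hm0.le (by norm_num)))

/-! ### Triangular sums -/

/-- Iterated summation for a triangular family of shifts: if `s i k` depends only on the `k j` with
`j < i`, bounds on the one-dimensional sums multiply up to bounds on the sum over `ℤ^d`. Working in
`ℝ≥0∞` makes the interchange of sums unconditional. -/
lemma prod_le_tsum_prod_le (d : ℕ) (G : Fin d → ℝ → ℝ≥0∞) (s : Fin d → (Fin d → ℤ) → ℝ)
    (hs : ∀ i k k', (∀ j < i, k j = k' j) → s i k = s i k') (lo hi : Fin d → ℝ≥0∞)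
    (hlo : ∀ i k, lo i ≤ ∑' n : ℤ, G i (n + s i k))
    (hhi : ∀ i k, ∑' n : ℤ, G i (n + s i k) ≤ hi i) :
    ∏ i, lo i ≤ ∑' k : Fin d → ℤ, ∏ i, G i (k i + s i k) ∧
      ∑' k : Fin d → ℤ, ∏ i, G i (k i + s i k) ≤ ∏ i, hi i := by
  induction d with
  | zero => simp
  | succ d ih =>
    -- The shifts of the first `d` coordinates ignore the last one, which can be set to `0`.
    let e : (Fin d → ℤ) → (Fin (d + 1) → ℤ) := fun k => Fin.snoc (α := fun _ => ℤ) k 0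
    have hsnoc : ∀ (i : Fin (d + 1)) (k : Fin d → ℤ) (n : ℤ),
        s i (Fin.snoc (α := fun _ => ℤ) k n) = s i (e k) := by
      intro i k n
      refine hs _ _ _ fun j hj => ?_
      have hjl : j ≠ Fin.last d := (hj.trans_le (Fin.le_last i)).ne
      obtain ⟨j', rfl⟩ := Fin.exists_castSucc_eq.2 hjl
      simp [e]
    have hsum : ∑' k : Fin (d + 1) → ℤ, ∏ i, G i (k i + s i k) =
        ∑' k : Fin d → ℤ, (∏ i : Fin d, G i.castSucc (k i + s i.castSucc (e k))) *
          ∑' n : ℤ, G (Fin.last d) (n + s (Fin.last d) (e k)) := by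
      rw [← (Fin.snocEquiv fun _ => ℤ).tsum_eq, ENNReal.tsum_prod', ENNReal.tsum_comm]
      refine tsum_congr fun k => ?_
      rw [← ENNReal.tsum_mul_left]
      refine tsum_congr fun n => ?_
      have hE : (Fin.snocEquiv fun _ => ℤ) (n, k) = Fin.snoc (α := fun _ => ℤ) k n := rfl
      rw [hE, Fin.prod_univ_castSucc]
      simp only [hsnoc, Fin.snoc_castSucc, Fin.snoc_last]
    obtain ⟨h1, h2⟩ := ih (fun i => G i.castSucc) (fun i k => s i.castSucc (e k))
      (fun i k k' h => hs _ _ _ fun j hj => by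
        have hjl : j ≠ Fin.last d := (hj.trans_le (Fin.le_last _)).ne
        obtain ⟨j', rfl⟩ := Fin.exists_castSucc_eq.2 hjl
        simpa [e] using h j' (by simpa using hj))
      (fun i => lo i.castSucc) (fun i => hi i.castSucc)
      (fun i k => hlo _ _) (fun i k => hhi _ _)
    rw [hsum, Fin.prod_univ_castSucc, Fin.prod_univ_castSucc]
    constructor
    · refine le_trans (mul_le_mul_left h1 _) ?_
      rw [← ENNReal.tsum_mul_right]
      exact ENNReal.tsum_le_tsum fun k => mul_le_mul_right (hlo _ _) _
    · refine le_trans ?_ (mul_le_mul_left h2 _)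
      rw [← ENNReal.tsum_mul_right]
      exact ENNReal.tsum_le_tsum fun k => mul_le_mul_right (hhi _ _) _

lemma ofReal_gaussSum1 {a : ℝ} (ha : 0 < a) (t : ℝ) :
    ENNReal.ofReal (gaussSum1 a t) =
      ∑' n : ℤ, ENNReal.ofReal (Real.exp (-a * ((n : ℝ) + t) ^ 2)) :=
  ENNReal.ofReal_tsum_of_nonneg (fun _ => (Real.exp_pos _).le) (summable_gauss ha t)

/-- Real-valued form of the iterated summation for Gaussians; the upper bound supplies the
convergence of the multiple series. -/
lemma gauss_triangular (d : ℕ) (a : Fin d → ℝ) (ha : ∀ i, 0 < a i)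
    (s : Fin d → (Fin d → ℤ) → ℝ)
    (hs : ∀ i k k', (∀ j < i, k j = k' j) → s i k = s i k') (lo hi : Fin d → ℝ)
    (hlo0 : ∀ i, 0 ≤ lo i) (hlo : ∀ i k, lo i ≤ gaussSum1 (a i) (s i k))
    (hhi : ∀ i k, gaussSum1 (a i) (s i k) ≤ hi i) :
    ∏ i, lo i ≤ ∑' k : Fin d → ℤ, ∏ i, Real.exp (-a i * ((k i : ℝ) + s i k) ^ 2) ∧
      ∑' k : Fin d → ℤ, ∏ i, Real.exp (-a i * ((k i : ℝ) + s i k) ^ 2) ≤ ∏ i, hi i := by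
  have hhi0 : ∀ i, 0 ≤ hi i := fun i =>
    (hlo0 i).trans ((hlo i 0).trans (hhi i 0))
  obtain ⟨h1, h2⟩ := prod_le_tsum_prod_le d
    (fun i x => ENNReal.ofReal (Real.exp (-a i * x ^ 2))) s hs
    (fun i => ENNReal.ofReal (lo i)) (fun i => ENNReal.ofReal (hi i))
    (fun i k => by rw [← ofReal_gaussSum1 (ha i)]; exact ENNReal.ofReal_le_ofReal (hlo i k))
    (fun i k => by rw [← ofReal_gaussSum1 (ha i)]; exact ENNReal.ofReal_le_ofReal (hhi i k))
  have hnn : ∀ k : Fin d → ℤ, 0 ≤ ∏ i, Real.exp (-a i * ((k i : ℝ) + s i k) ^ 2) :=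
    fun k => Finset.prod_nonneg fun _ _ => (Real.exp_pos _).le
  have hG : ∀ k : Fin d → ℤ,
      ∏ i, ENNReal.ofReal (Real.exp (-a i * ((k i : ℝ) + s i k) ^ 2)) =
        ENNReal.ofReal (∏ i, Real.exp (-a i * ((k i : ℝ) + s i k) ^ 2)) :=
    fun k => (ENNReal.ofReal_prod_of_nonneg fun _ _ => (Real.exp_pos _).le).symm
  simp only [hG] at h1 h2
  rw [← ENNReal.ofReal_prod_of_nonneg fun i _ => hlo0 i] at h1
  rw [← ENNReal.ofReal_prod_of_nonneg fun i _ => hhi0 i] at h2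
  have hsum : Summable fun k : Fin d → ℤ =>
      ∏ i, Real.exp (-a i * ((k i : ℝ) + s i k) ^ 2) := by
    refine (ENNReal.summable_toReal (h2.trans_lt ENNReal.ofReal_lt_top).ne).congr fun k => ?_
    exact ENNReal.toReal_ofReal (hnn k)
  rw [← ENNReal.ofReal_tsum_of_nonneg hnn hsum] at h1 h2
  exact ⟨(ENNReal.ofReal_le_ofReal_iff (tsum_nonneg hnn)).1 h1,
    (ENNReal.ofReal_le_ofReal_iff (Finset.prod_nonneg fun i _ => hhi0 i)).1 h2⟩

/-! ### The Iwasawa decomposition -/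

lemma theta2_eq_gaussSum1 (x : ℝ) : theta2 x = gaussSum1 (Real.pi * x) (1 / 2) := by
  unfold theta2 gaussSum1
  refine tsum_congr fun n => ?_
  ring_nf

open Matrix in
lemma sum_sq_mulVec_of_orthogonal {d : ℕ} {Q : Matrix (Fin d) (Fin d) ℝ}
    (hQ : Q.transpose * Q = 1) (w : Fin d → ℝ) : ∑ i, (Q *ᵥ w) i ^ 2 = ∑ i, w i ^ 2 := by
  have h : (Q *ᵥ w) ⬝ᵥ (Q *ᵥ w) = w ⬝ᵥ w := by
    rw [Matrix.dotProduct_mulVec, Matrix.vecMul_mulVec, hQ, Matrix.vecMul_one]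
  simpa only [dotProduct, ← pow_two] using h

/-- for `M = QDT` with `Q ∈ SO(d)`, `D = diag(c₁,…,c_d)` (`c_i > 0`,
`∏ c_i = 1`) and `T` lower triangular unipotent, and for every `u ∈ ℝ^d`, `α > 0`:
`θ_{Mℤ^d+u}(α) ≥ θ_{D(ℤ+1/2)^d}(α) = ∏ θ₂(c_i²α)`. -/
theorem iwasawa_theta_lower_bound
    (d : ℕ) (hd : 1 ≤ d)
    (Q D T M : Matrix (Fin d) (Fin d) ℝ)
    (c : Fin d → ℝ) (hc : ∀ i, 0 < c i) (hprod : ∏ i, c i = 1)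
    (hQ : Q.transpose * Q = 1) (hQdet : Q.det = 1)
    (hD : D = Matrix.diagonal c)
    (hT : ∀ i j : Fin d, i < j → T i j = 0) (hTdiag : ∀ i, T i i = 1)
    (hM : M = Q * D * T)
    (u : Fin d → ℝ) (α : ℝ) (hα : 0 < α) :
    (∏ i, theta2 (c i ^ 2 * α))
      ≤ ∑' k : Fin d → ℤ,
          Real.exp (-Real.pi * α * ∑ i, (M.mulVec (fun j => (k j : ℝ)) i + u i) ^ 2) ∧
    (∑' n : Fin d → ℤ,
        Real.exp (-Real.pi * α * ∑ i, (D.mulVec (fun j => (n j : ℝ) + 1 / 2) i) ^ 2))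
      = ∏ i, theta2 (c i ^ 2 * α) := by
  have ha : ∀ i, 0 < Real.pi * (c i ^ 2 * α) := fun i => by
    have := hc i
    have := Real.pi_pos
    positivity
  simp only [theta2_eq_gaussSum1]
  constructor
  · let v := Q.transpose.mulVec u
    -- The shift of the `i`-th coordinate: the strictly lower triangular part of `T`, plus `D⁻¹Qᵀu`.
    let s : Fin d → (Fin d → ℤ) → ℝ := fun i k =>
      (∑ j, if j < i then T i j * (k j : ℝ) else 0) + v i / c i
    have hQ' : Q * Q.transpose = 1 := mul_eq_one_comm.1 hQ
    have hterm : ∀ k : Fin d → ℤ,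
        Real.exp (-Real.pi * α * ∑ i, (M.mulVec (fun j => (k j : ℝ)) i + u i) ^ 2) =
          ∏ i, Real.exp (-(Real.pi * (c i ^ 2 * α)) * ((k i : ℝ) + s i k) ^ 2) := by
      intro k
      have hT' : ∀ i, T.mulVec (fun j => (k j : ℝ)) i =
          k i + ∑ j, if j < i then T i j * (k j : ℝ) else 0 := by
        intro i
        rw [← Fintype.sum_ite_eq i fun j => (k j : ℝ), ← Finset.sum_add_distrib]
        simp only [Matrix.mulVec, dotProduct]
        refine Finset.sum_congr rfl fun j _ => ?_
        rcases lt_trichotomy j i with h | h | h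
        · simp [h, h.ne']
        · subst h
          simp [hTdiag]
        · simp [hT i j h, h.ne]
      have hMk : ∀ i, M.mulVec (fun j => (k j : ℝ)) i + u i =
          Q.mulVec (fun i => c i * (k i + s i k)) i := by
        have hfun : (fun i => c i * (k i + s i k)) =
            D.mulVec (T.mulVec fun j => (k j : ℝ)) + v := by
          funext i
          have := (hc i).ne'
          rw [Pi.add_apply, hD, Matrix.mulVec_diagonal, hT']
          simp only [s]
          field_simp
          ring
        intro i
        rw [hfun, Matrix.mulVec_add, hM]
        simp only [v, Matrix.mulVec_mulVec, hQ', Matrix.one_mulVec, Pi.add_apply, mul_assoc]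
      simp only [hMk]
      rw [sum_sq_mulVec_of_orthogonal hQ, ← Real.exp_sum, Finset.mul_sum]
      congr 1
      refine Finset.sum_congr rfl fun i _ => ?_
      ring
    simp only [hterm]
    refine (gauss_triangular d _ ha s ?_ _ _ (fun i => (gaussSum1_pos (ha i) _).le)
      (fun i k => gaussSum1_half_le (ha i) _) (fun i k => gaussSum1_le (ha i) _)).1
    intro i k k' h
    simp only [s]
    refine congrArg (· + v i / c i) (Finset.sum_congr rfl fun j _ => ?_)
    split_ifs with hj
    · rw [h j hj]
    · rfl
  · have hterm : ∀ k : Fin d → ℤ,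
        Real.exp (-Real.pi * α * ∑ i, (D.mulVec (fun j => (k j : ℝ) + 1 / 2) i) ^ 2) =
          ∏ i, Real.exp (-(Real.pi * (c i ^ 2 * α)) * ((k i : ℝ) + 1 / 2) ^ 2) := by
      intro k
      rw [← Real.exp_sum, Finset.mul_sum]
      congr 1
      refine Finset.sum_congr rfl fun i _ => ?_
      rw [hD, Matrix.mulVec_diagonal]
      ring
    simp only [hterm]
    -- With constant shifts the lower and upper bounds coincide.
    obtain ⟨h1, h2⟩ := gauss_triangular d _ ha (fun _ _ => 1 / 2) (fun _ _ _ _ => rfl) _ _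
      (fun i => (gaussSum1_pos (ha i) _).le) (fun i k => le_rfl) (fun i k => le_rfl)
    exact le_antisymm h2 h1
end

section
/- Let d ≥ 2 and α > 0. For k ≥ 1 let A_k = diag(1,…,1,k,1/k) be the d×d diagonal matrix with d−2 entries equal to 1, one entry k and one entry 1/k. Then lim_{k→∞} Σ_{n∈ℤ^d} exp(−πα|A_k(n + (1/2,…,1/2))|²) = 0; equivalently, lim_{k→∞} θ₂(α)^{d−2}·θ₂(k²α)·θ₂(α/k²) = 0, where θ₂(x) = Σ_{n∈ℤ} e^{−πx(n+1/2)²}. -/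
/-!
The Gaussian of a sum of squares is a product over the coordinates, so the lattice sum factors
(`hasSum_prod_pi`, Fubini for non-negative series) into one-dimensional theta values and both
claims are the same: `θ₂(α)^{d-2} θ₂(k²α) θ₂(α/k²) → 0`.

The one-dimensional values are controlled through `S = Σ_{n∈ℤ} 1/(n+1/2)² < ∞`. From
`e^{-y} ≤ 1/y` one gets `θ₂(x) ≤ S/x`, and from `e^{-y} ≤ 2/y²` together with
`(n+1/2)² ≥ 1/4` one gets `θ₂(x) ≤ 8S/x²`. Hence `θ₂(k²α) θ₂(α/k²) ≤ 8S²/(α³k²)`, which tends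
to zero. No functional equation for `θ₂` is needed.
-/

open scoped BigOperators

/-- A product of finitely many non-negative convergent series is the sum over the product of the
index sets. -/
lemma hasSum_prod_pi (d : ℕ) (f : Fin d → ℤ → ℝ) (h0 : ∀ i n, 0 ≤ f i n)
    (hs : ∀ i, Summable (f i)) :
    HasSum (fun n : Fin d → ℤ => ∏ i, f i (n i)) (∏ i, ∑' n, f i n) := by
  induction d with
  | zero => simp
  | succ d ih =>
    have ih' := ih (fun i => f i.succ) (fun i => h0 i.succ) (fun i => hs i.succ)
    have hsum := (hs 0).mul_of_nonneg ih'.summable (h0 0)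
      (fun n => Finset.prod_nonneg fun i _ => h0 i.succ (n i))
    have hprod := (hs 0).hasSum.mul ih' hsum
    rw [Fin.prod_univ_succ, ← (Fin.consEquiv fun _ : Fin (d + 1) => ℤ).hasSum_iff]
    refine hprod.congr_fun fun p => ?_
    simp [Fin.prod_univ_succ, Fin.consEquiv]

lemma half_int_sq_ge (n : ℤ) : 1 / 4 ≤ ((n : ℝ) + 1 / 2) ^ 2 := by
  have h : (0 : ℤ) ≤ n * (n + 1) := by
    rcases le_or_gt 0 n with h | h
    · positivity
    · exact mul_nonneg_of_nonpos_of_nonpos h.le (by omega)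
  have h' : (0 : ℝ) ≤ n * (n + 1) := by exact_mod_cast h
  nlinarith

lemma summable_half_int : Summable (fun n : ℤ => 1 / ((n : ℝ) + 1 / 2) ^ 2) := by
  have h := (Real.summable_one_div_int_add_rpow (1 / 2) 2).2 (by norm_num)
  simpa [sq_abs] using h

lemma theta2_term_le (x : ℝ) (hx : 0 < x) (n : ℤ) :
    Real.exp (-Real.pi * ((n : ℝ) + 1 / 2) ^ 2 * x) ≤ 1 / x * (1 / ((n : ℝ) + 1 / 2) ^ 2) := by
  have hq := half_int_sq_ge n
  set q := ((n : ℝ) + 1 / 2) ^ 2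
  have hq0 : 0 < q := by linarith
  have hle : -Real.pi * q * x ≤ -(x * q) := by
    nlinarith [Real.pi_gt_three, mul_pos hx hq0]
  refine (Real.exp_le_exp.2 hle).trans ?_
  rw [Real.exp_neg, ← one_div, one_div_mul_one_div]
  exact one_div_le_one_div_of_le (by positivity) (by linarith [Real.add_one_le_exp (x * q)])

lemma theta2_term_le_sq (x : ℝ) (hx : 0 < x) (n : ℤ) :
    Real.exp (-Real.pi * ((n : ℝ) + 1 / 2) ^ 2 * x) ≤
      8 / x ^ 2 * (1 / ((n : ℝ) + 1 / 2) ^ 2) := by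
  have hq := half_int_sq_ge n
  set q := ((n : ℝ) + 1 / 2) ^ 2
  have hq0 : 0 < q := by linarith
  have hle : -Real.pi * q * x ≤ -(x * q) := by
    nlinarith [Real.pi_gt_three, mul_pos hx hq0]
  refine (Real.exp_le_exp.2 hle).trans ?_
  have hexp := Real.quadratic_le_exp_of_nonneg (mul_pos hx hq0).le
  have hxq := mul_pos hx hq0
  have hx2 : 0 < x ^ 2 * q := by positivity
  rw [Real.exp_neg, div_mul_div_comm, mul_one, inv_le_comm₀ (Real.exp_pos _) (by positivity),
    inv_div]
  nlinarith

lemma summable_theta2 (x : ℝ) (hx : 0 < x) :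
    Summable (fun n : ℤ => Real.exp (-Real.pi * ((n : ℝ) + 1 / 2) ^ 2 * x)) :=
  Summable.of_nonneg_of_le (fun _ => (Real.exp_pos _).le) (theta2_term_le x hx)
    (summable_half_int.mul_left _)

lemma theta2_nonneg (x : ℝ) : 0 ≤ theta2 x := tsum_nonneg fun _ => (Real.exp_pos _).le

lemma theta2_le (x : ℝ) (hx : 0 < x) :
    theta2 x ≤ 1 / x * ∑' n : ℤ, 1 / ((n : ℝ) + 1 / 2) ^ 2 := by
  rw [← tsum_mul_left]
  exact (summable_theta2 x hx).tsum_le_tsum (theta2_term_le x hx) (summable_half_int.mul_left _)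

lemma theta2_le_sq (x : ℝ) (hx : 0 < x) :
    theta2 x ≤ 8 / x ^ 2 * ∑' n : ℤ, 1 / ((n : ℝ) + 1 / 2) ^ 2 := by
  rw [← tsum_mul_left]
  exact (summable_theta2 x hx).tsum_le_tsum (theta2_term_le_sq x hx)
    (summable_half_int.mul_left _)

lemma tendsto_theta2_prod (m : ℕ) (α : ℝ) (hα : 0 < α) :
    Filter.Tendsto (fun k : ℕ =>
        theta2 α ^ m * theta2 ((k : ℝ) ^ 2 * α) * theta2 (α / (k : ℝ) ^ 2))
      Filter.atTop (nhds 0) := by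
  set S := ∑' n : ℤ, 1 / ((n : ℝ) + 1 / 2) ^ 2 with hS
  have hlim : Filter.Tendsto (fun k : ℕ => theta2 α ^ m * (8 * S ^ 2 / α ^ 3) *
      ((k : ℝ)⁻¹) ^ 2) Filter.atTop (nhds 0) := by
    simpa using (tendsto_inv_atTop_nhds_zero_nat (𝕜 := ℝ)).pow 2 |>.const_mul
      (theta2 α ^ m * (8 * S ^ 2 / α ^ 3))
  refine tendsto_of_tendsto_of_tendsto_of_le_of_le' tendsto_const_nhds hlim
    (.of_forall fun k => mul_nonneg (mul_nonneg (pow_nonneg (theta2_nonneg _) _)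
      (theta2_nonneg _)) (theta2_nonneg _)) ?_
  filter_upwards [Filter.eventually_gt_atTop 0] with k hk
  have hk' : (0 : ℝ) < k := by exact_mod_cast hk
  have h1 := theta2_le_sq ((k : ℝ) ^ 2 * α) (by positivity)
  have h2 := theta2_le (α / (k : ℝ) ^ 2) (by positivity)
  rw [← hS] at h1 h2
  have h12 := mul_le_mul h1 h2 (theta2_nonneg _) ((theta2_nonneg _).trans h1)
  have h := mul_le_mul_of_nonneg_left h12 (pow_nonneg (theta2_nonneg α) m)
  rw [mul_assoc]
  refine h.trans (le_of_eq ?_)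
  field_simp

/-- The theta function of a half-integer translate of a diagonal lattice `diag(a) ℤ^d` is a
product of values of `θ₂`. -/
lemma tsum_diag_eq_prod (d : ℕ) (a : Fin d → ℝ) (ha : ∀ i, 0 < a i) (α : ℝ) (hα : 0 < α) :
    ∑' n : Fin d → ℤ, Real.exp (-Real.pi * α * ∑ i, (a i * ((n i : ℝ) + 1 / 2)) ^ 2) =
      ∏ i, theta2 (a i ^ 2 * α) := by
  have h := hasSum_prod_pi d
    (fun i n => Real.exp (-Real.pi * ((n : ℝ) + 1 / 2) ^ 2 * (a i ^ 2 * α)))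
    (fun _ _ => (Real.exp_pos _).le)
    (fun i => summable_theta2 _ (mul_pos (pow_pos (ha i) 2) hα))
  rw [show ∏ i, theta2 (a i ^ 2 * α) = _ from h.tsum_eq.symm]
  refine tsum_congr fun n => ?_
  rw [← Real.exp_sum, Finset.mul_sum]
  congr 1
  exact Finset.sum_congr rfl fun i _ => by ring

/-- with `A_k = diag(1,…,1,k,1/k)`,
`θ_{A_k(ℤ+1/2)^d}(α) = θ₂(α)^{d−2}·θ₂(k²α)·θ₂(α/k²) → 0` as `k → ∞`. -/
theorem theta_degenerate_diagonal
    (d : ℕ) (hd : 2 ≤ d) (α : ℝ) (hα : 0 < α) :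
    Filter.Tendsto (fun k : ℕ =>
        ∑' n : Fin d → ℤ,
          Real.exp (-Real.pi * α *
            ∑ i : Fin d,
              ((if (i : ℕ) = d - 2 then (k : ℝ)
                else if (i : ℕ) = d - 1 then 1 / (k : ℝ) else 1)
                  * ((n i : ℝ) + 1 / 2)) ^ 2))
      Filter.atTop (nhds 0) ∧
    Filter.Tendsto (fun k : ℕ =>
        theta2 α ^ (d - 2) * theta2 ((k : ℝ) ^ 2 * α) * theta2 (α / (k : ℝ) ^ 2))
      Filter.atTop (nhds 0) := by
  refine ⟨?_, tendsto_theta2_prod _ α hα⟩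
  refine (tendsto_theta2_prod (d - 2) α hα).congr' ?_
  -- `k = 0` is excluded: there the matrix is not invertible and `1 / k` is a junk value.
  filter_upwards [Filter.eventually_gt_atTop 0] with k hk
  have hk' : (0 : ℝ) < k := by exact_mod_cast hk
  rw [tsum_diag_eq_prod d (fun i => if (i : ℕ) = d - 2 then (k : ℝ)
    else if (i : ℕ) = d - 1 then 1 / (k : ℝ) else 1)
    (fun i => by split_ifs <;> positivity) α hα]
  obtain ⟨m, rfl⟩ := Nat.exists_eq_add_of_le' hd
  rw [Fin.prod_univ_castSucc, Fin.prod_univ_castSucc]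
  have hne (i : Fin m) : (i : ℕ) ≠ m ∧ (i : ℕ) ≠ m + 1 := by omega
  simp [hne, div_eq_inv_mul]
end

section
/- Let d ≥ 1 and α > 0. Assume c₁,…,c_d > 0 satisfy ∏_{i=1}^d c_i = 1 and not all c_i equal 1. Define U₄(t) = ∏_{i=1}^{d} θ₄(c_i^t α) for t ∈ ℝ, where θ₄(x) = Σ_{k∈ℤ} (−1)^k e^{−πk²x}. Then U₄'(0) = 0, U₄'(t) > 0 for t < 0, and U₄'(t) < 0 for t > 0; in particular t = 0 is the unique strict maximum of U₄. -/
/-!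
The function `F(s) = log θ₄(e^s)` is strictly concave on `ℝ`. Indeed Gauss's product
`θ₄(x) = ∏_{n ≥ 1} (1 - q^{2n-1})² (1 - q^{2n})`, `q = e^{-πx}` (`theta4_product`), writes `F` as a sum
of translates of `g(s) = log (1 - exp (-e^s))`, and `g'(s) = u / (e^u - 1)` with `u = e^s` is strictly
decreasing, being the reciprocal of a secant slope of the exponential
(`strictConcaveOn_log_one_sub_exp`, `strictConcaveOn_log_theta4`).

Then `G(t) = log U₄(t) = ∑ F(t log c_i + log α)` is strictly concave because some `log c_i ≠ 0`, and
`G'(0) = F'(log α) ∑ log c_i = 0`. Strict concavity gives the sign of `G'(t)`, hence of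
`U₄'(t) = U₄(t) G'(t)`, and the strict maximum at `0`.

Gauss's product is obtained from the finite identity
`∑_k (-1)^k q^{k²} [2N choose N+k]_{q²} = ∏_{i=1}^N (1 - q^{2i-1})²` (`hasSum_gaussTerm`), proved by
induction on `N`, by letting `N → ∞` under dominated convergence.
-/

open scoped BigOperators

/-- The classical Jacobi theta function `θ₄(x) = Σ_{k∈ℤ} (−1)^k e^{−πk²x}`. -/
noncomputable def theta4 (x : ℝ) : ℝ :=
  ∑' n : ℤ, (-1 : ℝ) ^ n * Real.exp (-Real.pi * (n : ℝ) ^ 2 * x)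

open Filter Topology

/-! ### Gauss's product for `θ₄` -/

/-- The finite `q`-Pochhammer symbol `(x; x)_n = ∏_{i=1}^n (1 - x^i)`. -/
noncomputable def qFac (x : ℝ) (n : ℕ) : ℝ := ∏ i ∈ Finset.range n, (1 - x ^ (i + 1))

/-- The reciprocal `1 / (x; x)_m`, extended by `0` to negative `m`; with this convention
`qFacInv_sub_one` holds for every integer `m`. -/
noncomputable def qFacInv (x : ℝ) (m : ℤ) : ℝ := if 0 ≤ m then (qFac x m.toNat)⁻¹ else 0

lemma qFac_pos {x : ℝ} (hx0 : 0 < x) (hx1 : x < 1) (n : ℕ) : 0 < qFac x n :=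
  Finset.prod_pos fun i _ => sub_pos.2 (pow_lt_one₀ hx0.le hx1 (by omega))

lemma qFac_succ (x : ℝ) (n : ℕ) : qFac x (n + 1) = qFac x n * (1 - x ^ (n + 1)) :=
  Finset.prod_range_succ _ _

lemma qFac_antitone {x : ℝ} (hx0 : 0 < x) (hx1 : x < 1) : Antitone (qFac x) := by
  refine antitone_nat_of_succ_le fun n => ?_
  rw [qFac_succ]
  have := pow_pos hx0 (n + 1)
  exact mul_le_of_le_one_right (qFac_pos hx0 hx1 n).le (by linarith)

lemma qFacInv_nonneg {x : ℝ} (hx0 : 0 < x) (hx1 : x < 1) (m : ℤ) : 0 ≤ qFacInv x m := by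
  unfold qFacInv
  split_ifs
  · exact (inv_pos.2 (qFac_pos hx0 hx1 _)).le
  · exact le_rfl

lemma qFacInv_sub_one {x : ℝ} (hx0 : 0 < x) (hx1 : x < 1) (m : ℤ) :
    qFacInv x (m - 1) = (1 - x ^ m) * qFacInv x m := by
  rcases lt_trichotomy m 0 with h | rfl | h
  · simp [qFacInv, show ¬ (1 ≤ m) by omega, show ¬ (0 ≤ m) by omega]
  · simp [qFacInv]
  · obtain ⟨n, rfl⟩ : ∃ n : ℕ, m = n + 1 := ⟨(m - 1).toNat, by omega⟩
    have h1 := (qFac_pos hx0 hx1 n).ne'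
    have h2 : (1 - x ^ (n + 1)) ≠ 0 := (sub_pos.2 (pow_lt_one₀ hx0.le hx1 (by omega))).ne'
    have e : ((n : ℤ) + 1).toNat = n + 1 := by omega
    have e2 : x ^ ((n : ℤ) + 1) = x ^ (n + 1) := by exact_mod_cast zpow_natCast x (n + 1)
    have p1 : (0 : ℤ) ≤ n := by omega
    have p2 : (0 : ℤ) ≤ n + 1 := by omega
    simp only [qFacInv, add_sub_cancel_right, p1, p2, if_true, e, e2, Int.toNat_natCast, qFac_succ]
    field_simp

/-- The `k`-th term `(-1)^k q^{k²} [2N choose N+k]_{q²}` of the finite form of the triple product at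
`z = -1`; it vanishes for `|k| > N`. -/
noncomputable def gaussTerm (q : ℝ) (N : ℕ) (k : ℤ) : ℝ :=
  (-1) ^ k * q ^ (k ^ 2) * qFac (q ^ 2) (2 * N) *
    (qFacInv (q ^ 2) (N - k) * qFacInv (q ^ 2) (N + k))

/-- The recurrence behind the finite identity: passing from `N` to `N + 1` multiplies the generating
function by `(1 + z q^{2N+1})(1 + z⁻¹ q^{2N+1})`, here read off at `z = -1`. -/
lemma gaussTerm_succ {q : ℝ} (hq0 : 0 < q) (hq1 : q < 1) (N : ℕ) (k : ℤ) :
    gaussTerm q (N + 1) k = (1 + q ^ (4 * N + 2)) * gaussTerm q N k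
      - q ^ (2 * N + 1) * (gaussTerm q N (k + -1) + gaussTerm q N (k + 1)) := by
  have hQ0 : 0 < q ^ 2 := by positivity
  have hQ1 : q ^ 2 < 1 := pow_lt_one₀ hq0.le hq1 two_ne_zero
  have hq := hq0.ne'
  have hrec := qFacInv_sub_one hQ0 hQ1
  have a1 : qFacInv (q ^ 2) (N - k) = (1 - (q ^ 2) ^ ((N : ℤ) + 1 - k)) *
      qFacInv (q ^ 2) (N + 1 - k) := by rw [← hrec]; congr 1; ring
  have a2 : qFacInv (q ^ 2) (N - (k + 1)) = (1 - (q ^ 2) ^ ((N : ℤ) - k)) *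
      qFacInv (q ^ 2) (N - k) := by rw [← hrec]; congr 1; ring
  have b1 : qFacInv (q ^ 2) (N + k) = (1 - (q ^ 2) ^ ((N : ℤ) + 1 + k)) *
      qFacInv (q ^ 2) (N + 1 + k) := by rw [← hrec]; congr 1; ring
  have b2 : qFacInv (q ^ 2) (N + (k + -1)) = (1 - (q ^ 2) ^ ((N : ℤ) + k)) *
      qFacInv (q ^ 2) (N + k) := by rw [← hrec]; congr 1; ring
  have a3 : qFacInv (q ^ 2) (N - (k + -1)) = qFacInv (q ^ 2) (N + 1 - k) := by congr 1; ring
  have b3 : qFacInv (q ^ 2) (N + (k + 1)) = qFacInv (q ^ 2) (N + 1 + k) := by congr 1; ring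
  have s1 : q ^ ((k + 1) ^ 2) = q ^ (k ^ 2) * (q ^ k) ^ 2 * q := by
    rw [← zpow_natCast, ← zpow_mul, ← zpow_add₀ hq, ← zpow_add_one₀ hq]; congr 1; push_cast; ring
  have s2 : q ^ ((k + -1) ^ 2) = q ^ (k ^ 2) / (q ^ k) ^ 2 * q := by
    rw [← zpow_natCast, ← zpow_mul, ← zpow_sub₀ hq, ← zpow_add_one₀ hq]; congr 1; push_cast; ring
  have m1 : (-1 : ℝ) ^ (k + 1) = -(-1) ^ k := by
    rw [zpow_add_one₀ (by norm_num)]; ring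
  have m2 : (-1 : ℝ) ^ (k + -1) = -(-1) ^ k := by
    rw [zpow_add₀ (by norm_num)]; norm_num
  have z : ∀ m : ℤ, (q ^ 2) ^ m = (q ^ m) ^ 2 := fun m => by
    rw [← zpow_natCast, ← zpow_natCast, ← zpow_mul, ← zpow_mul, mul_comm]
  have hY : q ^ k ≠ 0 := zpow_ne_zero _ hq
  have f : qFac (q ^ 2) (2 * (N + 1)) =
      qFac (q ^ 2) (2 * N) * (1 - (q ^ 2) ^ (2 * N + 1)) * (1 - (q ^ 2) ^ (2 * N + 2)) := by
    rw [show 2 * (N + 1) = 2 * N + 1 + 1 by ring, qFac_succ, qFac_succ]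
  unfold gaussTerm
  rw [a2, b2, a3, b3, a1, b1, s1, s2, m1, m2, f]
  push_cast
  simp only [z, zpow_sub₀ hq, zpow_add₀ hq, zpow_one, zpow_natCast]
  generalize qFacInv (q ^ 2) (N + 1 - k) = A
  generalize qFacInv (q ^ 2) (N + 1 + k) = B
  generalize qFac (q ^ 2) (2 * N) = C
  generalize (-1 : ℝ) ^ k = D
  generalize q ^ k ^ 2 = E
  generalize q ^ k = Y at *
  rw [show q ^ (4 * N + 2) = (q ^ N) ^ 4 * q ^ 2 by ring,
    show q ^ (2 * N + 1) = (q ^ N) ^ 2 * q by ring,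
    show (q ^ 2) ^ (2 * N + 1) = (q ^ N) ^ 4 * q ^ 2 by ring,
    show (q ^ 2) ^ (2 * N + 2) = (q ^ N) ^ 4 * q ^ 4 by ring]
  generalize q ^ N = X
  field_simp
  ring

/-- The finite form of Gauss's identity. -/
lemma hasSum_gaussTerm {q : ℝ} (hq0 : 0 < q) (hq1 : q < 1) (N : ℕ) :
    HasSum (gaussTerm q N) (∏ i ∈ Finset.range N, (1 - q ^ (2 * i + 1)) ^ 2) := by
  induction N with
  | zero =>
    convert hasSum_single (f := gaussTerm q 0) 0 ?_ using 1
    · simp [gaussTerm, qFac, qFacInv]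
    · intro k hk
      rcases lt_or_gt_of_ne hk with h | h
      · simp [gaussTerm, qFacInv, show ¬ 0 ≤ k by omega]
      · simp [gaussTerm, qFacInv, show ¬ k ≤ 0 by omega]
  | succ N ih =>
    have hshift : ∀ m : ℤ, HasSum (fun k : ℤ => gaussTerm q N (k + m))
        (∏ i ∈ Finset.range N, (1 - q ^ (2 * i + 1)) ^ 2) := fun m =>
      (Equiv.hasSum_iff (f := gaussTerm q N) (Equiv.addRight m)).2 ih
    have h := (ih.mul_left (1 + q ^ (4 * N + 2))).sub (((hshift (-1)).add (hshift 1)).mul_left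
      (q ^ (2 * N + 1)))
    have hfun : gaussTerm q (N + 1) = _ := funext (gaussTerm_succ hq0 hq1 N)
    rw [hfun, Finset.prod_range_succ]
    generalize (∏ i ∈ Finset.range N, (1 - q ^ (2 * i + 1)) ^ 2) = R at h ⊢
    rwa [show R * (1 - q ^ (2 * N + 1)) ^ 2 =
      (1 + q ^ (4 * N + 2)) * R - q ^ (2 * N + 1) * (R + R) by ring]

lemma hasSum_prod_tendsto {f : ℕ → ℝ} (hf : ∀ i, 0 < f i) {S : ℝ}
    (h : HasSum (fun i => Real.log (f i)) S) :
    Tendsto (fun N => ∏ i ∈ Finset.range N, f i) atTop (𝓝 (Real.exp S)) := by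
  exact (Real.hasProd_of_hasSum_log hf h).tendsto_prod_nat

lemma summable_theta4 {x : ℝ} (hx : 0 < x) :
    Summable fun n : ℤ => Real.exp (-Real.pi * (n : ℝ) ^ 2 * x) := by
  have h := (summable_jacobiTheta₂_term_iff 0 (x * Complex.I)).2 (by simpa using hx)
  refine h.norm.congr fun n => ?_
  rw [norm_jacobiTheta₂_term]
  simp

/-- Gauss's product formula `θ₄(x) = ∏_{n≥1} (1 - q^{2n-1})² (1 - q^{2n})` with `q = e^{-πx}`,
in logarithmic form. -/
lemma theta4_product {x : ℝ} (hx : 0 < x) :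
    0 < theta4 x ∧ HasSum (fun i : ℕ => 2 * Real.log (1 - Real.exp (-Real.pi * x) ^ (2 * i + 1)) +
      Real.log (1 - Real.exp (-Real.pi * x) ^ (2 * i + 2))) (Real.log (theta4 x)) := by
  set q := Real.exp (-Real.pi * x) with hq
  have hq0 : 0 < q := Real.exp_pos _
  have hq1 : q < 1 := by
    rw [hq, Real.exp_lt_one_iff]
    nlinarith [Real.pi_pos, mul_pos Real.pi_pos hx]
  have hQ0 : 0 < q ^ 2 := by positivity
  have hQ1 : q ^ 2 < 1 := pow_lt_one₀ hq0.le hq1 two_ne_zero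
  have hpos : ∀ i : ℕ, 0 < 1 - q ^ (i + 1) := fun i =>
    sub_pos.2 (pow_lt_one₀ hq0.le hq1 (by omega))
  have hgeo : Summable fun i : ℕ => -q ^ (i + 1) :=
    (((summable_geometric_of_lt_one hq0.le hq1).mul_left q).congr
      (fun i => by rw [pow_succ, mul_comm])).neg
  have hlog : Summable fun i : ℕ => Real.log (1 - q ^ (i + 1)) := by
    simpa [sub_eq_add_neg] using Real.summable_log_one_add_of_summable hgeo
  obtain ⟨A, hA⟩ : Summable fun i : ℕ => Real.log (1 - q ^ (2 * i + 1)) :=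
    hlog.comp_injective (i := fun i : ℕ => 2 * i) fun a b h => by simpa using h
  obtain ⟨B, hB⟩ : Summable fun i : ℕ => Real.log (1 - q ^ (2 * i + 2)) :=
    hlog.comp_injective (i := fun i : ℕ => 2 * i + 1) fun a b h => by simpa using h
  have tA : Tendsto (fun N => ∏ i ∈ Finset.range N, (1 - q ^ (2 * i + 1)) ^ 2) atTop
      (𝓝 (Real.exp A ^ 2)) := by
    simp_rw [Finset.prod_pow]
    exact (hasSum_prod_tendsto (fun i => hpos (2 * i)) hA).pow 2
  have tB : Tendsto (qFac (q ^ 2)) atTop (𝓝 (Real.exp B)) := by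
    refine (hasSum_prod_tendsto (fun i => hpos (2 * i + 1)) hB).congr fun N => ?_
    unfold qFac
    refine Finset.prod_congr rfl fun i _ => ?_
    rw [← pow_mul, mul_add, mul_one]
  have hBle : ∀ n, Real.exp B ≤ qFac (q ^ 2) n := fun n =>
    (qFac_antitone hQ0 hQ1).le_of_tendsto tB n
  have tInv : ∀ u : ℕ → ℤ, Tendsto u atTop atTop →
      Tendsto (fun N => qFacInv (q ^ 2) (u N)) atTop (𝓝 (Real.exp B)⁻¹) := by
    intro u hu
    have h1 : Tendsto (fun N => (qFac (q ^ 2) (u N).toNat)⁻¹) atTop (𝓝 (Real.exp B)⁻¹) := by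
      refine (tB.comp ?_).inv₀ (Real.exp_pos _).ne'
      refine tendsto_atTop.2 fun b => ?_
      filter_upwards [hu.eventually_ge_atTop (b : ℤ)] with N hN
      omega
    refine h1.congr' ?_
    filter_upwards [hu.eventually_ge_atTop 0] with N hN
    simp [qFacInv, hN]
  have hterm : ∀ n : ℤ, q ^ (n ^ 2) = Real.exp (-Real.pi * (n : ℝ) ^ 2 * x) := fun n => by
    rw [hq, ← Real.rpow_intCast, ← Real.exp_mul]; congr 1; push_cast; ring
  have hsum : Summable fun n : ℤ => q ^ (n ^ 2) := (summable_theta4 hx).congr fun n => (hterm n).symm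
  have lim : Tendsto (fun N => ∑' k, gaussTerm q N k) atTop
      (𝓝 (∑' k : ℤ, (-1 : ℝ) ^ k * q ^ (k ^ 2) * (Real.exp B)⁻¹)) := by
    -- all terms are dominated by `q^{k²} / (q²; q²)_∞`
    refine tendsto_tsum_of_dominated_convergence (hsum.mul_left (Real.exp B)⁻¹) ?_ ?_
    · intro k
      have e : (-1 : ℝ) ^ k * q ^ (k ^ 2) * (Real.exp B)⁻¹ = (-1 : ℝ) ^ k * q ^ (k ^ 2) *
          Real.exp B * ((Real.exp B)⁻¹ * (Real.exp B)⁻¹) := by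
        have := (Real.exp_pos B).ne'
        field_simp
      rw [e]
      refine Tendsto.mul (Tendsto.mul tendsto_const_nhds (tB.comp ?_)) (Tendsto.mul ?_ ?_)
      · exact tendsto_id.const_mul_atTop' (by norm_num)
      · exact tInv _ (tendsto_atTop_add_const_right _ _ tendsto_natCast_atTop_atTop)
      · exact tInv _ (tendsto_atTop_add_const_right _ _ tendsto_natCast_atTop_atTop)
    · refine Eventually.of_forall fun N k => ?_
      have hqk : 0 < q ^ (k ^ 2) := zpow_pos hq0 _
      have n1 := qFacInv_nonneg hQ0 hQ1 (N - k)
      have n2 := qFacInv_nonneg hQ0 hQ1 (N + k)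
      have n3 := qFac_pos hQ0 hQ1 (2 * N)
      have hn : ‖gaussTerm q N k‖ = q ^ (k ^ 2) * (qFac (q ^ 2) (2 * N) *
          (qFacInv (q ^ 2) (N - k) * qFacInv (q ^ 2) (N + k))) := by
        unfold gaussTerm
        rw [norm_mul, norm_mul, norm_mul, norm_zpow]
        simp only [norm_neg, norm_one, one_zpow, one_mul, Real.norm_eq_abs, abs_of_pos hqk,
          abs_of_pos n3, abs_of_nonneg (mul_nonneg n1 n2), mul_assoc]
      rw [hn, mul_comm]
      refine mul_le_mul_of_nonneg_right ?_ hqk.le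
      by_cases h : (0 : ℤ) ≤ N - k ∧ (0 : ℤ) ≤ N + k
      · -- With `Q = q²`: `(Q; Q)_{2N} ≤ (Q; Q)_{N+k}` since `N + k ≤ 2N`, and
        -- `(Q; Q)_{N-k} ≥ (Q; Q)_∞ = e^B`.
        simp only [qFacInv, h.1, h.2, if_true]
        have p1 := qFac_pos hQ0 hQ1 ((N : ℤ) - k).toNat
        have p2 := qFac_pos hQ0 hQ1 ((N : ℤ) + k).toNat
        have le1 : qFac (q ^ 2) (2 * N) ≤ qFac (q ^ 2) ((N : ℤ) + k).toNat :=
          qFac_antitone hQ0 hQ1 (by omega)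
        have le2 : (qFac (q ^ 2) ((N : ℤ) - k).toNat)⁻¹ ≤ (Real.exp B)⁻¹ :=
          inv_anti₀ (Real.exp_pos _) (hBle _)
        refine le_trans ?_ le2
        rw [mul_left_comm]
        refine mul_le_of_le_one_right (inv_pos.2 p1).le ?_
        rw [← div_eq_mul_inv]
        exact (div_le_one p2).2 le1
      · have : qFacInv (q ^ 2) (N - k) * qFacInv (q ^ 2) (N + k) = 0 := by
          rw [not_and_or] at h
          rcases h with h | h <;> simp only [qFacInv, h, if_false, zero_mul, mul_zero]
        rw [this, mul_zero]
        exact (inv_pos.2 (Real.exp_pos _)).le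
  have hθ : theta4 x = Real.exp (2 * A + B) := by
    simp_rw [fun N => (hasSum_gaussTerm hq0 hq1 N).tsum_eq] at lim
    have := tendsto_nhds_unique tA lim
    rw [tsum_mul_right] at this
    simp_rw [hterm] at this
    change _ = theta4 x * _ at this
    rw [Real.exp_add, two_mul, Real.exp_add, ← sq, this]
    have := (Real.exp_pos B).ne'
    field_simp
  refine ⟨hθ ▸ Real.exp_pos _, ?_⟩
  rw [hθ, Real.log_exp]
  exact (hA.mul_left 2).add hB

/-- Obtained from `θ₄(y) = jacobiTheta₂ (1/2) (iy)`. -/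
lemma differentiableAt_theta4 {x : ℝ} (hx : 0 < x) : DifferentiableAt ℝ theta4 x := by
  have key : ∀ y : ℝ, 0 < y → theta4 y = (jacobiTheta₂ (1 / 2) (y * Complex.I)).re := by
    intro y hy
    have h := Complex.hasSum_re (hasSum_jacobiTheta₂_term (1 / 2) (τ := y * Complex.I)
      (by simpa using hy))
    rw [← h.tsum_eq]
    refine tsum_congr fun n => ?_
    have e : jacobiTheta₂_term n (1 / 2) (y * Complex.I) =
        (((-1 : ℝ) ^ n * Real.exp (-Real.pi * (n : ℝ) ^ 2 * y) : ℝ) : ℂ) := by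
      rw [jacobiTheta₂_term, Complex.exp_add]
      push_cast
      congr 1
      · rw [← Complex.exp_pi_mul_I, ← Complex.exp_int_mul]; congr 1; ring
      · congr 1
        linear_combination (Real.pi * (n : ℂ) ^ 2 * y) * Complex.I_sq
    rw [e, Complex.ofReal_re]
  have hd : DifferentiableAt ℝ (fun y : ℝ => (jacobiTheta₂ (1 / 2) (y * Complex.I)).re) x := by
    have h1 : DifferentiableAt ℝ (fun y : ℝ => jacobiTheta₂ (1 / 2) (y * Complex.I)) x := by
      have := (differentiableAt_jacobiTheta₂_snd (1 / 2) (τ := x * Complex.I)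
        (by simpa using hx)).restrictScalars ℝ
      exact this.comp x (Complex.ofRealCLM.differentiableAt.mul_const Complex.I)
    exact Complex.reCLM.differentiableAt.comp x h1
  refine hd.congr_of_eventuallyEq ?_
  filter_upwards [lt_mem_nhds hx] with y hy using key y hy

/-! ### Log-concavity in the exponent -/

lemma strictConcaveOn_log_one_sub_exp :
    StrictConcaveOn ℝ Set.univ fun s : ℝ => Real.log (1 - Real.exp (-Real.exp s)) := by
  have hpos : ∀ s : ℝ, 0 < 1 - Real.exp (-Real.exp s) := fun s => by
    simpa using Real.exp_pos s
  have hderiv : ∀ s : ℝ, HasDerivAt (fun s : ℝ => Real.log (1 - Real.exp (-Real.exp s)))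
      (((Real.exp (Real.exp s) - Real.exp 0) / (Real.exp s - 0))⁻¹) s := by
    intro s
    refine ((((Real.hasDerivAt_exp s).neg.exp).const_sub 1).log (hpos s).ne').congr_deriv ?_
    have h1 := hpos s
    have h2 : Real.exp (-Real.exp s) = (Real.exp (Real.exp s))⁻¹ := Real.exp_neg _
    have h3 : 0 < Real.exp (Real.exp s) - 1 := by simpa using Real.exp_pos s
    have h4 := (Real.exp_pos (Real.exp s)).ne'
    rw [Pi.neg_apply, h2]
    rw [Real.exp_zero, sub_zero, inv_div]
    have h5 := h3.ne'
    field_simp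
  refine StrictAnti.strictConcaveOn_univ_of_deriv
    (continuous_iff_continuousAt.2 fun s => (hderiv s).continuousAt) fun s t hst => ?_
  rw [(hderiv s).deriv, (hderiv t).deriv]
  have hs := Real.exp_pos s
  -- the derivative is the reciprocal of a secant slope of `exp` based at `0`
  refine inv_strictAnti₀ (div_pos (by simpa using hs) (by simpa using hs)) ?_
  exact strictConvexOn_exp.secant_strict_mono (Set.mem_univ _) (Set.mem_univ _) (Set.mem_univ _)
    hs.ne' (Real.exp_pos t).ne' (Real.exp_lt_exp.2 hst)

/-- `s ↦ log θ₄(e^s)` is a convergent sum of translates of the strictly concave function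
`s ↦ log (1 - exp (-e^s))`, one for each factor of Gauss's product. -/
lemma strictConcaveOn_log_theta4 :
    StrictConcaveOn ℝ Set.univ fun s : ℝ => Real.log (theta4 (Real.exp s)) := by
  set g := fun s : ℝ => Real.log (1 - Real.exp (-Real.exp s)) with hg
  have hgc := strictConcaveOn_log_one_sub_exp
  have hsum : ∀ s : ℝ, HasSum (fun i : ℕ => 2 * g (s + Real.log (Real.pi * (2 * i + 1))) +
      g (s + Real.log (Real.pi * (2 * i + 2)))) (Real.log (theta4 (Real.exp s))) := by
    intro s
    convert (theta4_product (Real.exp_pos s)).2 using 2 with i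
    have hp := Real.pi_pos
    simp only [hg]
    rw [Real.exp_add, Real.exp_log (by positivity), Real.exp_add, Real.exp_log (by positivity),
      ← Real.exp_nat_mul, ← Real.exp_nat_mul]
    push_cast
    ring_nf
  refine ⟨convex_univ, fun x _ y _ hxy a b ha hb hab => ?_⟩
  have hterm : ∀ r : ℝ, a * g (x + r) + b * g (y + r) < g (a * x + b * y + r) := by
    intro r
    have h := hgc.2 (Set.mem_univ (x + r)) (Set.mem_univ (y + r)) (by simpa using hxy) ha hb hab
    simp only [smul_eq_mul] at h
    rwa [show a * (x + r) + b * (y + r) = a * x + b * y + r by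
      linear_combination r * hab] at h
  simp only [smul_eq_mul]
  have hlt : ∀ i : ℕ, a * (2 * g (x + Real.log (Real.pi * (2 * i + 1))) +
      g (x + Real.log (Real.pi * (2 * i + 2)))) + b * (2 * g (y + Real.log (Real.pi * (2 * i + 1))) +
      g (y + Real.log (Real.pi * (2 * i + 2)))) < 2 * g (a * x + b * y +
      Real.log (Real.pi * (2 * i + 1))) + g (a * x + b * y + Real.log (Real.pi * (2 * i + 2))) := by
    intro i
    linarith [hterm (Real.log (Real.pi * (2 * i + 1))), hterm (Real.log (Real.pi * (2 * i + 2)))]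
  exact hasSum_lt (fun i => (hlt i).le) (hlt 0) (((hsum x).mul_left a).add ((hsum y).mul_left b))
    (hsum _)

/-! ### The product of theta functions -/

/-- with `c_i > 0`, `∏ c_i = 1`, not all `c_i = 1`, the function
`U₄(t) = ∏ θ₄(c_i^t α)` satisfies `U₄'(0)=0`, `U₄' > 0` on `t<0`, `U₄' < 0` on `t>0`;
in particular `t = 0` is the unique strict maximum of `U₄`. -/
theorem U4_unique_maximum
    (d : ℕ) (hd : 1 ≤ d) (α : ℝ) (hα : 0 < α)
    (c : Fin d → ℝ) (hc : ∀ i, 0 < c i) (hprod : ∏ i, c i = 1)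
    (hne : ¬ ∀ i, c i = 1)
    (U : ℝ → ℝ) (hU : ∀ t : ℝ, U t = ∏ i, theta4 (Real.rpow (c i) t * α)) :
    deriv U 0 = 0 ∧ (∀ t : ℝ, t < 0 → 0 < deriv U t) ∧
      (∀ t : ℝ, 0 < t → deriv U t < 0) ∧ (∀ t : ℝ, t ≠ 0 → U t < U 0) := by
  set F := fun s : ℝ => Real.log (theta4 (Real.exp s)) with hF
  have hFc : StrictConcaveOn ℝ Set.univ F := strictConcaveOn_log_theta4
  have hFd : Differentiable ℝ F := fun s =>
    ((differentiableAt_theta4 (Real.exp_pos s)).comp s Real.differentiableAt_exp).log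
      (theta4_product (Real.exp_pos s)).1.ne'
  set G := fun t : ℝ => ∑ i, F (t * Real.log (c i) + Real.log α) with hG
  have harg : ∀ i t, Real.rpow (c i) t * α = Real.exp (t * Real.log (c i) + Real.log α) := by
    intro i t
    rw [Real.exp_add, Real.exp_log hα, mul_comm t]
    exact congrArg (· * α) (Real.rpow_def_of_pos (hc i) t)
  have hUG : U = fun t => Real.exp (G t) := by
    funext t
    rw [hU, hG, Real.exp_sum]
    refine Finset.prod_congr rfl fun i _ => ?_
    rw [harg, hF, Real.exp_log (theta4_product (Real.exp_pos _)).1]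
  have hGd : ∀ t, HasDerivAt G
      (∑ i, deriv F (t * Real.log (c i) + Real.log α) * Real.log (c i)) t := fun t =>
    HasDerivAt.fun_sum fun i _ => by
      have h := (hFd (t * Real.log (c i) + Real.log α)).hasDerivAt.comp t
        (((hasDerivAt_id t).mul_const (Real.log (c i))).add_const (Real.log α))
      simpa [Function.comp_def] using h
  have hG0 : HasDerivAt G 0 0 := by
    convert hGd 0 using 1
    simp only [zero_mul, zero_add]
    rw [← Finset.mul_sum, ← Real.log_prod (fun i _ => (hc i).ne'), hprod, Real.log_one, mul_zero]
  have hGc : StrictConcaveOn ℝ Set.univ G := by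
    obtain ⟨j, hj⟩ := not_forall.1 hne
    have hlj : Real.log (c j) ≠ 0 := Real.log_ne_zero_of_pos_of_ne_one (hc j) hj
    refine ⟨convex_univ, fun x _ y _ hxy a b ha hb hab => ?_⟩
    simp only [smul_eq_mul, hG]
    rw [Finset.mul_sum, Finset.mul_sum, ← Finset.sum_add_distrib]
    have e : ∀ i, (a * x + b * y) * Real.log (c i) + Real.log α =
        a * (x * Real.log (c i) + Real.log α) + b * (y * Real.log (c i) + Real.log α) := fun i => by
      linear_combination (-Real.log α) * hab
    refine Finset.sum_lt_sum (fun i _ => ?_) ⟨j, Finset.mem_univ _, ?_⟩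
    · rw [e]
      exact hFc.concaveOn.2 (Set.mem_univ _) (Set.mem_univ _) ha.le hb.le hab
    · rw [e]
      refine hFc.2 (Set.mem_univ _) (Set.mem_univ _) (fun h => hxy ?_) ha hb hab
      exact mul_right_cancel₀ hlj (add_right_cancel h)
  have hUd : ∀ t, deriv U t = Real.exp (G t) * deriv G t := fun t => by
    rw [hUG]
    have := ((hGd t).differentiableAt.hasDerivAt).exp
    exact this.deriv
  have hu : ∀ t : ℝ, t ∈ Set.univ := Set.mem_univ
  have hneg : ∀ t : ℝ, 0 < t → deriv G t < slope G 0 t ∧ slope G 0 t < 0 := fun t ht =>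
    ⟨hGc.lt_slope_of_hasDerivAt (hu 0) (hu t) ht (hGd t).differentiableAt.hasDerivAt,
      hGc.slope_lt_of_hasDerivAt (hu 0) (hu t) ht hG0⟩
  have hpos : ∀ t : ℝ, t < 0 → slope G t 0 < deriv G t ∧ 0 < slope G t 0 := fun t ht =>
    ⟨hGc.slope_lt_of_hasDerivAt (hu t) (hu 0) ht (hGd t).differentiableAt.hasDerivAt,
      hGc.lt_slope_of_hasDerivAt (hu t) (hu 0) ht hG0⟩
  refine ⟨by rw [hUd, hG0.deriv, mul_zero], fun t ht => ?_, fun t ht => ?_, fun t ht => ?_⟩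
  · rw [hUd]
    exact mul_pos (Real.exp_pos _) ((hpos t ht).2.trans (hpos t ht).1)
  · rw [hUd]
    exact mul_neg_of_pos_of_neg (Real.exp_pos _) ((hneg t ht).1.trans (hneg t ht).2)
  · rw [hUG]
    refine Real.exp_lt_exp.2 ?_
    rcases lt_or_gt_of_ne ht with h | h
    · have := (hpos t h).2
      rw [slope_def_field, div_pos_iff_of_pos_right (by linarith)] at this
      linarith
    · have := (hneg t h).2
      rw [slope_def_field, div_neg_iff] at this
      rcases this with ⟨_, h2⟩ | ⟨h1, _⟩ <;> linarith
end

section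
/- Let d ≥ 1 and α > 0. Assume c₁,…,c_d > 0 satisfy ∏_{i=1}^d c_i = 1 and not all c_i equal 1. Define U₂(t) = ∏_{i=1}^{d} θ₂(c_i^t α) for t ∈ ℝ, where θ₂(x) = Σ_{k∈ℤ} e^{−π(k+1/2)²x}; equivalently U₂(t) = Σ_{n∈ℤ^d} exp(−πα|A_t(n+(1/2,…,1/2))|²) with A_t = diag(c₁^t,…,c_d^t). Then U₂'(0) = 0, U₂'(t) > 0 for t < 0, and U₂'(t) < 0 for t > 0; in particular t = 0 is the unique strict maximum of U₂. -/
open scoped BigOperators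

/-!
The theorem reduces to a one-variable fact: `log θ₂(exp s)` is strictly concave in `s`, that is,
`φ(x) = x θ₂'(x) / θ₂(x)` is strictly decreasing on `(0, ∞)` (`phi_strictAntiOn`). Indeed
`U'(t) / U(t) = ∑ log c_i * φ(c_i ^ t * α)`, and since `∑ log c_i = 0` this equals
`∑ log c_i * (φ(c_i ^ t * α) - φ(α))`. For `t > 0` every summand is nonpositive, and it is negative
when `c_i ≠ 1`; the case `t < 0` follows by replacing each `c_i` with its inverse.

Monotonicity of `φ` is proved separately on `[1, ∞)` and `(0, 1]`.

* For `x ≥ 1`, write `θ₂(x) = 2 exp (-π x / 4) D(x)` with `D(x) = ∑ exp (-π k (k + 1) x)`, so that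
  `-φ(x) = π x / 4 + x M(x) / D(x)` with `M = -D'`. As `D ≥ 1` is decreasing, it is enough that
  `x M(x)` decreases with slope less than `π / 4` in absolute value, and a crude termwise estimate
  (`term_sub_le`) bounds that slope by `20 / π ^ 3`.
* For `x ≤ 1`, the modular relation `θ₂(x) = x ^ (-1/2) θ₄(1 / x)` gives
  `φ(x) = -1/2 - y θ₄'(y) / θ₄(y)` with `y = 1 / x ≥ 1`. There `θ₄` is positive and increasing, and
  `y θ₄'(y)` is positive and strictly decreasing, both because the relevant series alternate with
  strictly decreasing terms (`alternating_pos`).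
-/

namespace ThetaTwo

open Real Set Filter Topology

/-! ### Dirichlet-type series `∑ ε k * exp (-s k * x)` -/

lemma summable_exp_neg {s : ℕ → ℝ} (hs : ∀ k : ℕ, (k : ℝ) ≤ s k) {x : ℝ} (hx : 0 < x) :
    Summable fun k => exp (-(s k * x)) := by
  refine Summable.of_nonneg_of_le (fun k => (exp_pos _).le) (fun k => ?_)
    (Real.summable_exp_nat_mul_iff.mpr (neg_lt_zero.mpr hx))
  rw [exp_le_exp]
  nlinarith [mul_le_mul_of_nonneg_right (hs k) hx.le]

lemma summable_mul_exp_neg {s : ℕ → ℝ} (hs : ∀ k : ℕ, (k : ℝ) ≤ s k) {x : ℝ} (hx : 0 < x) :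
    Summable fun k => s k * exp (-(s k * x)) := by
  have hs0 : ∀ k, 0 ≤ s k := fun k => (Nat.cast_nonneg k).trans (hs k)
  refine Summable.of_nonneg_of_le (fun k => mul_nonneg (hs0 k) (exp_pos _).le) (fun k => ?_)
    ((summable_exp_neg hs (half_pos hx)).mul_left (2 / x))
  have h1 : s k * (x / 2) ≤ exp (s k * (x / 2)) := by
    linarith [add_one_le_exp (s k * (x / 2))]
  have h2 : s k ≤ 2 / x * exp (s k * (x / 2)) := by
    rw [div_mul_eq_mul_div, le_div_iff₀ hx]
    linarith
  calc s k * exp (-(s k * x)) ≤ 2 / x * exp (s k * (x / 2)) * exp (-(s k * x)) := by gcongr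
    _ = 2 / x * exp (-(s k * (x / 2))) := by
      rw [mul_assoc, ← exp_add]
      ring_nf

lemma hasDerivAt_series {s ε : ℕ → ℝ} (hs : ∀ k : ℕ, (k : ℝ) ≤ s k) (hε : ∀ k, |ε k| ≤ 1)
    {x : ℝ} (hx : 0 < x) :
    HasDerivAt (fun y => ∑' k, ε k * exp (-(s k * y)))
      (∑' k, -(ε k * (s k * exp (-(s k * x))))) x := by
  have hs0 : ∀ k, 0 ≤ s k := fun k => (Nat.cast_nonneg k).trans (hs k)
  have hmem : x ∈ Ioi (x / 2) := half_lt_self hx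
  refine hasDerivAt_tsum_of_isPreconnected (t := Ioi (x / 2))
    (g := fun k y => ε k * exp (-(s k * y)))
    (g' := fun k y => -(ε k * (s k * exp (-(s k * y)))))
    (summable_mul_exp_neg hs (half_pos hx)) isOpen_Ioi isPreconnected_Ioi ?_ ?_ hmem ?_ hmem
  · intro k y _
    have h := (((hasDerivAt_id y).const_mul (s k)).neg.exp).const_mul (ε k)
    refine h.congr_deriv ?_
    simp only [id, mul_one, Pi.neg_apply]
    ring
  · intro k y hy
    rw [norm_neg, norm_mul, norm_mul, norm_of_nonneg (hs0 k), norm_of_nonneg (exp_pos _).le]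
    have hy' : x / 2 ≤ y := le_of_lt hy
    calc ‖ε k‖ * (s k * exp (-(s k * y))) ≤ 1 * (s k * exp (-(s k * (x / 2)))) := by
          have := hs0 k
          gcongr
          exact hε k
      _ = _ := one_mul _
  · refine Summable.of_norm_bounded (summable_exp_neg hs hx) (fun k => ?_)
    rw [norm_mul, norm_of_nonneg (exp_pos _).le]
    exact mul_le_of_le_one_left (exp_pos _).le (hε k)

lemma alternating_pos {t : ℕ → ℝ} (ht : StrictAnti t) (hsum : Summable t) :
    0 < ∑' k, (-1) ^ k * t k := by
  have hs : Summable fun k => (-1 : ℝ) ^ k * t k := by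
    refine Summable.of_norm ?_
    simpa using hsum.norm
  have h := ht.antitone.alternating_series_le_tendsto hs.hasSum.tendsto_sum_nat 1
  have h01 : t 1 < t 0 := ht Nat.zero_lt_one
  simp [Finset.sum_range_succ] at h
  linarith

/-! ### Large arguments: the series of `θ₂` itself -/

/-- The exponents `π k (k + 1)` of `θ₂` after the factor `2 exp (-π x / 4)` is removed. -/
noncomputable def expo (k : ℕ) : ℝ := π * (k * (k + 1))

/-- `θ₂(x) = 2 exp (-π x / 4) * reduced x`. -/
noncomputable def reduced (x : ℝ) : ℝ := ∑' k, exp (-(expo k * x))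

/-- Minus the derivative of `reduced`. -/
noncomputable def moment (x : ℝ) : ℝ := ∑' k, expo k * exp (-(expo k * x))

lemma le_expo (k : ℕ) : (k : ℝ) ≤ expo k := by
  unfold expo
  have hk : (0 : ℝ) ≤ k := Nat.cast_nonneg k
  nlinarith [pi_gt_three, mul_nonneg hk hk]

lemma expo_nonneg (k : ℕ) : 0 ≤ expo k := (Nat.cast_nonneg k).trans (le_expo k)

lemma hasDerivAt_reduced {x : ℝ} (hx : 0 < x) : HasDerivAt reduced (-moment x) x := by
  have h := hasDerivAt_series (s := expo) (ε := fun _ => 1) le_expo (by simp) hx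
  simp only [one_mul, tsum_neg] at h
  exact h

lemma theta2_eq {x : ℝ} (hx : 0 < x) : theta2 x = 2 * exp (-(π / 4 * x)) * reduced x := by
  have h := (summable_exp_neg le_expo hx).hasSum.mul_left (exp (-(π / 4 * x)))
  have hs : HasSum (fun n : ℤ => exp (-π * ((n : ℝ) + 1 / 2) ^ 2 * x))
      (exp (-(π / 4 * x)) * reduced x + exp (-(π / 4 * x)) * reduced x) := by
    refine HasSum.of_nat_of_neg_add_one ?_ ?_
    · refine h.congr_fun fun k => ?_
      rw [← exp_add, expo]
      push_cast
      ring_nf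
    · refine h.congr_fun fun k => ?_
      rw [← exp_add, expo]
      push_cast
      ring_nf
  rw [theta2, hs.tsum_eq]
  ring

lemma one_le_reduced {x : ℝ} (hx : 0 < x) : 1 ≤ reduced x := by
  have h := (summable_exp_neg le_expo hx).le_tsum 0 (fun k _ => (exp_pos _).le)
  simpa [expo, reduced] using h

lemma theta2_pos {x : ℝ} (hx : 0 < x) : 0 < theta2 x := by
  rw [theta2_eq hx]
  have := one_le_reduced hx
  positivity

lemma reduced_anti {x y : ℝ} (hx : 0 < x) (hxy : x ≤ y) : reduced y ≤ reduced x := by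
  refine Summable.tsum_le_tsum (fun k => ?_) (summable_exp_neg le_expo (hx.trans_le hxy))
    (summable_exp_neg le_expo hx)
  have := expo_nonneg k
  gcongr

lemma moment_nonneg (x : ℝ) : 0 ≤ moment x :=
  tsum_nonneg fun k => mul_nonneg (expo_nonneg k) (exp_pos _).le

/-- The logarithmic derivative `x θ₂'(x) / θ₂(x)` of `θ₂` in the variable `log x`. -/
noncomputable def phi (x : ℝ) : ℝ := x * deriv theta2 x / theta2 x

lemma hasDerivAt_theta2 {x : ℝ} (hx : 0 < x) :
    HasDerivAt theta2
      (2 * (exp (-(π / 4 * x)) * -(π / 4)) * reduced x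
        + 2 * exp (-(π / 4 * x)) * -moment x) x := by
  have h1 : HasDerivAt (fun y => exp (-(π / 4 * y))) (exp (-(π / 4 * x)) * -(π / 4)) x := by
    simpa using! (((hasDerivAt_id x).const_mul (π / 4)).neg.exp)
  have h2 := (h1.const_mul 2).mul (hasDerivAt_reduced hx)
  refine h2.congr_of_eventuallyEq ?_
  filter_upwards [eventually_gt_nhds hx] with y hy
  exact theta2_eq hy

lemma differentiableAt_theta2 {x : ℝ} (hx : 0 < x) : DifferentiableAt ℝ theta2 x :=
  (hasDerivAt_theta2 hx).differentiableAt

lemma phi_eq {x : ℝ} (hx : 0 < x) : phi x = -(π / 4 * x) - x * moment x / reduced x := by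
  have h1 := one_le_reduced hx
  have h2 : reduced x ≠ 0 := by positivity
  have h3 := (exp_pos (-(π / 4 * x))).ne'
  rw [phi, (hasDerivAt_theta2 hx).deriv, theta2_eq hx]
  field_simp
  ring

/-- Telescoping majorant of `expo k ^ 2 * exp (-expo k)`; its sum is `20 / π ^ 3`. -/
noncomputable def majorant : ℕ → ℝ
  | 0 => 0
  | j + 1 => 20 / π ^ 3 * (1 / ((j : ℝ) + 1) ^ 2 - 1 / ((j : ℝ) + 2) ^ 2)

lemma hasSum_majorant : HasSum majorant (20 / π ^ 3) := by
  rw [← hasSum_nat_add_iff' 1]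
  simp only [Finset.sum_range_one, majorant, sub_zero]
  have h : HasSum (fun j : ℕ => 1 / ((j : ℝ) + 1) ^ 2 - 1 / ((j : ℝ) + 2) ^ 2) 1 := by
    rw [hasSum_iff_tendsto_nat_of_nonneg]
    · have h1 : ∀ n : ℕ, ∑ j ∈ Finset.range n, (1 / ((j : ℝ) + 1) ^ 2 - 1 / ((j : ℝ) + 2) ^ 2)
          = 1 - 1 / ((n : ℝ) + 1) ^ 2 := by
        intro n
        induction n with
        | zero => simp
        | succ n ih =>
          rw [Finset.sum_range_succ, ih]
          push_cast
          ring_nf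
      simp only [h1]
      have h2 : Tendsto (fun n : ℕ => 1 / ((n : ℝ) + 1)) atTop (𝓝 0) :=
        tendsto_one_div_add_atTop_nhds_zero_nat
      have h3 := (h2.pow 2).const_sub 1
      simpa using h3
    · intro j
      rw [sub_nonneg]
      gcongr
      norm_num
  simpa using h.mul_left (20 / π ^ 3)

lemma expo_sq_mul_exp_le (k : ℕ) : expo k ^ 2 * exp (-expo k) ≤ majorant k := by
  cases k with
  | zero => simp [expo, majorant]
  | succ j =>
    have hb : 0 < expo (j + 1) := lt_of_lt_of_le (by positivity) (le_expo (j + 1))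
    have h1 := pow_div_factorial_le_exp (expo (j + 1)) hb.le 5
    have h2 : expo (j + 1) ^ 2 * exp (-expo (j + 1)) ≤ 120 / expo (j + 1) ^ 3 := by
      rw [exp_neg, ← div_eq_mul_inv, div_le_div_iff₀ (exp_pos _) (by positivity)]
      norm_num [Nat.factorial] at h1
      nlinarith
    refine h2.trans ?_
    have hj : (0 : ℝ) ≤ j := Nat.cast_nonneg j
    simp only [majorant, expo]
    push_cast
    rw [← sub_nonneg]
    have : 20 / π ^ 3 * (1 / ((j : ℝ) + 1) ^ 2 - 1 / ((j : ℝ) + 2) ^ 2)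
        - 120 / (π * (((j : ℝ) + 1) * (j + 1 + 1))) ^ 3
        = 20 * ((2 * j + 3) * (j + 1) * (j + 2) - 6) / (π ^ 3 * (j + 1) ^ 3 * (j + 2) ^ 3) := by
      rw [show (j : ℝ) + 1 + 1 = j + 2 by ring]
      field_simp
      ring
    rw [this]
    apply div_nonneg _ (by positivity)
    nlinarith [mul_nonneg hj hj, mul_nonneg (mul_nonneg hj hj) hj]

/-- Each summand of `x * moment x` decreases between `x` and `y` by at most
`(y - x) * majorant k`. -/
lemma term_sub_le {x y : ℝ} (hx : 1 ≤ x) (hxy : x ≤ y) (k : ℕ) :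
    x * (expo k * exp (-(expo k * x))) - y * (expo k * exp (-(expo k * y)))
      ≤ (y - x) * majorant k := by
  rcases Nat.eq_zero_or_pos k with rfl | hk
  · simp [expo, majorant]
  have hb : 1 ≤ expo k := le_trans (by exact_mod_cast hk) (le_expo k)
  have hmaj := expo_sq_mul_exp_le k
  set b := expo k with hbdef
  have h1 : exp (-(b * y)) = exp (-(b * x)) * exp (-(b * (y - x))) := by
    rw [← exp_add]
    ring_nf
  have h2 : 1 - b * (y - x) ≤ exp (-(b * (y - x))) := by
    linarith [add_one_le_exp (-(b * (y - x)))]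
  have h3 : x * exp (-(b * x)) ≤ exp (-b) := by
    have h4 : x ≤ exp (b * (x - 1)) := by
      nlinarith [add_one_le_exp (b * (x - 1))]
    calc x * exp (-(b * x)) ≤ exp (b * (x - 1)) * exp (-(b * x)) := by gcongr
      _ = exp (-b) := by
        rw [← exp_add]
        ring_nf
  have hE := exp_pos (-(b * x))
  calc x * (b * exp (-(b * x))) - y * (b * exp (-(b * y)))
      ≤ x * (b * exp (-(b * x))) - x * (b * exp (-(b * y))) := by
        have : 0 ≤ b * exp (-(b * y)) := by positivity
        nlinarith
    _ = x * b * exp (-(b * x)) * (1 - exp (-(b * (y - x)))) := by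
        rw [h1]
        ring
    _ ≤ x * b * exp (-(b * x)) * (b * (y - x)) := by
        gcongr
        linarith
    _ = (y - x) * (b ^ 2 * (x * exp (-(b * x)))) := by ring
    _ ≤ (y - x) * (b ^ 2 * exp (-b)) := by
        have : 0 ≤ y - x := sub_nonneg.mpr hxy
        gcongr
    _ ≤ (y - x) * majorant k := mul_le_mul_of_nonneg_left hmaj (sub_nonneg.mpr hxy)

lemma phi_strictAntiOn_Ici : StrictAntiOn phi (Ici 1) := by
  intro x hx y _ hxy
  have hx1 : (1 : ℝ) ≤ x := hx
  have hx0 : 0 < x := by linarith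
  have hy0 : 0 < y := hx0.trans hxy
  have hsx := (summable_mul_exp_neg le_expo hx0).hasSum.mul_left x
  have hsy := (summable_mul_exp_neg le_expo hy0).hasSum.mul_left y
  have hdiff : x * moment x - y * moment y ≤ (y - x) * (20 / π ^ 3) :=
    hasSum_le (term_sub_le hx1 hxy.le) (hsx.sub hsy) (hasSum_majorant.mul_left (y - x))
  have hconst : 20 / π ^ 3 < π / 4 := by
    rw [div_lt_div_iff₀ (by positivity) (by norm_num)]
    have h3 : (3 : ℝ) ^ 4 ≤ π ^ 4 := by
      have := pi_gt_three.le
      gcongr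
    nlinarith
  have hrx := one_le_reduced hx0
  have hry := one_le_reduced hy0
  have hr := reduced_anti hx0 hxy.le
  have hm : 0 ≤ y * moment y := mul_nonneg hy0.le (moment_nonneg y)
  have h1 : y * moment y / reduced x ≤ y * moment y / reduced y := by gcongr
  have h2 : x * moment x / reduced x - y * moment y / reduced x ≤ (y - x) * (20 / π ^ 3) := by
    rw [← sub_div]
    refine div_le_of_le_mul₀ (by positivity) (by nlinarith [show 0 < 20 / π ^ 3 by positivity]) ?_
    refine hdiff.trans (le_mul_of_one_le_right ?_ hrx)
    have : 0 ≤ y - x := by linarith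
    positivity
  rw [phi_eq hx0, phi_eq hy0]
  nlinarith

/-! ### Small arguments: the series of `θ₄` -/

/-- The exponents `π (k + 1) ^ 2` of `θ₄`. -/
noncomputable def sqExpo (k : ℕ) : ℝ := π * ((k : ℝ) + 1) ^ 2

/-- The theta function `θ₄`, written as `1 - 2 ∑ (-1) ^ k exp (-π (k + 1) ^ 2 y)`. -/
noncomputable def theta4 (y : ℝ) : ℝ := 1 - 2 * ∑' k, (-1) ^ k * exp (-(sqExpo k * y))

/-- The termwise derivative of `theta4`. -/
noncomputable def theta4' (y : ℝ) : ℝ := 2 * ∑' k, (-1) ^ k * (sqExpo k * exp (-(sqExpo k * y)))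

lemma le_sqExpo (k : ℕ) : (k : ℝ) ≤ sqExpo k := by
  unfold sqExpo
  have hk : (0 : ℝ) ≤ k := Nat.cast_nonneg k
  nlinarith [pi_gt_three, mul_nonneg hk hk]

lemma pi_le_sqExpo (k : ℕ) : π ≤ sqExpo k := by
  unfold sqExpo
  have hk : (0 : ℝ) ≤ k := Nat.cast_nonneg k
  nlinarith [pi_gt_three, mul_nonneg hk hk]

lemma sqExpo_strictMono : StrictMono sqExpo := by
  intro j k hjk
  unfold sqExpo
  gcongr

lemma hasDerivAt_theta4 {y : ℝ} (hy : 0 < y) : HasDerivAt theta4 (theta4' y) y := by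
  have h := hasDerivAt_series (s := sqExpo) (ε := fun k => (-1) ^ k) le_sqExpo (by simp) hy
  have h2 := (h.const_mul 2).const_sub 1
  simp only [tsum_neg] at h2
  refine h2.congr_deriv ?_
  rw [theta4']
  ring

/-- The modular relation between `θ₂` and `θ₄`, a case of Poisson summation. -/
lemma theta2_eq_theta4 {x : ℝ} (hx : 0 < x) :
    theta2 x = 1 / x ^ (1 / 2 : ℝ) * theta4 (1 / x) := by
  have h1 : theta2 x = HurwitzZeta.evenKernel ((1 / 2 : ℝ) : UnitAddCircle) x :=
    (HurwitzZeta.hasSum_int_evenKernel (1 / 2) hx).tsum_eq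
  have hy : 0 < 1 / x := by positivity
  have h2 := (HurwitzZeta.hasSum_nat_cosKernel₀ (1 / 2) hy).tsum_eq
  have h3 : ∀ n : ℕ, 2 * Real.cos (2 * π * (1 / 2) * (n + 1)) * exp (-π * (n + 1) ^ 2 * (1 / x))
      = -2 * ((-1) ^ n * exp (-(sqExpo n * (1 / x)))) := by
    intro n
    have : Real.cos (2 * π * (1 / 2) * (n + 1)) = (-1) ^ (n + 1) := by
      rw [← Real.cos_nat_mul_pi]
      push_cast
      ring_nf
    rw [this, sqExpo, pow_succ]
    ring_nf
  simp only [h3, tsum_mul_left] at h2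
  rw [h1, HurwitzZeta.evenKernel_functional_equation, theta4]
  congr 1
  linarith

lemma theta4_pos {y : ℝ} (hy : 0 < y) : 0 < theta4 y := by
  have hx : 0 < 1 / y := by positivity
  have h := theta2_pos hx
  rw [theta2_eq_theta4 hx, one_div_one_div] at h
  exact pos_of_mul_pos_right h (by positivity)

lemma phi_eq_theta4 {x : ℝ} (hx : 0 < x) :
    phi x = -(1 / 2) - (1 / x) * theta4' (1 / x) / theta4 (1 / x) := by
  have hy : 0 < 1 / x := by positivity
  have h4 := theta4_pos hy
  have hinv : HasDerivAt (fun u : ℝ => 1 / u) (-(x ^ 2)⁻¹) x := by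
    simpa using hasDerivAt_inv hx.ne'
  have hpow : HasDerivAt (fun u : ℝ => u ^ (-(1 / 2) : ℝ)) (-(1 / 2) * x ^ (-(1 / 2) - 1 : ℝ)) x :=
    Real.hasDerivAt_rpow_const (Or.inl hx.ne')
  have hd := hpow.mul ((hasDerivAt_theta4 hy).comp x hinv)
  have hd2 := hd.congr_of_eventuallyEq (f₁ := theta2) (by
    filter_upwards [eventually_gt_nhds hx] with u hu
    rw [theta2_eq_theta4 hu, one_div, ← rpow_neg hu.le]
    rfl)
  have hp : x ^ (-(1 / 2) - 1 : ℝ) = x ^ (-(1 / 2) : ℝ) / x := rpow_sub_one hx.ne' _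
  have hq : 0 < x ^ (-(1 / 2) : ℝ) := rpow_pos_of_pos hx _
  rw [phi, hd2.deriv, theta2_eq_theta4 hx, one_div (x ^ (1 / 2 : ℝ)), ← rpow_neg hx.le, hp]
  simp only [Function.comp]
  field_simp
  ring

lemma mul_exp_neg_strictAntiOn : StrictAntiOn (fun u : ℝ => u * exp (-u)) (Ici 1) := by
  refine strictAntiOn_of_hasDerivWithinAt_neg (f' := fun u => (1 - u) * exp (-u)) (convex_Ici 1)
    (by fun_prop) (fun u _ => ?_) (fun u hu => ?_)
  · have h := (hasDerivAt_id u).mul (hasDerivAt_id u).neg.exp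
    refine (h.congr_deriv ?_).hasDerivWithinAt
    simp only [id, Pi.neg_apply]
    ring
  · rw [interior_Ici] at hu
    exact mul_neg_of_neg_of_pos (by linarith [mem_Ioi.mp hu]) (exp_pos _)

lemma quad_mul_exp_neg_strictMonoOn :
    StrictMonoOn (fun u : ℝ => u * (1 - u) * exp (-u)) (Ici 3) := by
  refine strictMonoOn_of_hasDerivWithinAt_pos (f' := fun u => (u ^ 2 - 3 * u + 1) * exp (-u))
    (convex_Ici 3) (by fun_prop) (fun u _ => ?_) (fun u hu => ?_)
  · have h := ((hasDerivAt_id u).mul ((hasDerivAt_id u).const_sub 1)).mul (hasDerivAt_id u).neg.exp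
    refine (h.congr_deriv ?_).hasDerivWithinAt
    simp only [id, Pi.mul_apply, Pi.neg_apply]
    ring
  · rw [interior_Ici] at hu
    have hu3 : 3 < u := hu
    exact mul_pos (by nlinarith) (exp_pos _)

lemma hasDerivAt_mul_exp_neg (s y : ℝ) :
    HasDerivAt (fun s : ℝ => y * (s * exp (-(s * y)))) (y * ((1 - s * y) * exp (-(s * y)))) s := by
  have h := ((hasDerivAt_id s).mul ((hasDerivAt_id s).mul_const y).neg.exp).const_mul y
  refine h.congr_deriv ?_
  simp only [id, Pi.neg_apply]
  ring

/-- Half the absolute value of the summand of `y θ₄'(y) - z θ₄'(z)` with exponent `s` is strictly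
decreasing in `s`, so this difference is an alternating series with decreasing terms. -/
lemma diff_strictAntiOn {y z : ℝ} (hy : 1 ≤ y) (hyz : y < z) :
    StrictAntiOn (fun s : ℝ => y * (s * exp (-(s * y))) - z * (s * exp (-(s * z)))) (Ici 3) := by
  refine strictAntiOn_of_hasDerivWithinAt_neg
    (f' := fun s => y * ((1 - s * y) * exp (-(s * y))) - z * ((1 - s * z) * exp (-(s * z))))
    (convex_Ici 3) (by fun_prop)
    (fun s _ => ((hasDerivAt_mul_exp_neg s y).sub (hasDerivAt_mul_exp_neg s z)).hasDerivWithinAt)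
    (fun s hs => ?_)
  rw [interior_Ici] at hs
  have hs3 : 3 < s := hs
  have hs0 : 0 < s := by linarith
  have h := quad_mul_exp_neg_strictMonoOn (a := s * y) (b := s * z)
    (by rw [mem_Ici]; nlinarith) (by rw [mem_Ici]; nlinarith) (by gcongr)
  simp only at h
  refine neg_of_mul_neg_right (a := s) ?_ hs0.le
  linarith

lemma sqExpo_mem (k : ℕ) : sqExpo k ∈ Ici (3 : ℝ) := pi_gt_three.le.trans (pi_le_sqExpo k)

lemma theta4'_pos {y : ℝ} (hy : 1 ≤ y) : 0 < theta4' y := by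
  have hy0 : 0 < y := by linarith
  refine mul_pos two_pos (alternating_pos ?_ (summable_mul_exp_neg le_sqExpo hy0))
  intro j k hjk
  have h3 : ∀ i, 3 ≤ sqExpo i := sqExpo_mem
  have h := mul_exp_neg_strictAntiOn (a := sqExpo j * y) (b := sqExpo k * y)
    (by rw [mem_Ici]; nlinarith [h3 j]) (by rw [mem_Ici]; nlinarith [h3 k])
    (mul_lt_mul_of_pos_right (sqExpo_strictMono hjk) hy0)
  simp only at h
  refine lt_of_mul_lt_mul_right (a := y) ?_ hy0.le
  linarith

lemma mul_theta4'_lt {y z : ℝ} (hy : 1 ≤ y) (hyz : y < z) : z * theta4' z < y * theta4' y := by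
  have hy0 : 0 < y := by linarith
  have hz0 : 0 < z := by linarith
  have hsy := summable_mul_exp_neg le_sqExpo hy0
  have hsz := summable_mul_exp_neg le_sqExpo hz0
  have halt : ∀ {t : ℕ → ℝ}, Summable t → Summable fun k => (-1 : ℝ) ^ k * t k := by
    intro t ht
    refine Summable.of_norm ?_
    simpa using ht.norm
  have h := alternating_pos
    (t := fun k => y * (sqExpo k * exp (-(sqExpo k * y))) - z * (sqExpo k * exp (-(sqExpo k * z))))
    (fun j k hjk => diff_strictAntiOn hy hyz (sqExpo_mem j) (sqExpo_mem k) (sqExpo_strictMono hjk))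
    ((hsy.mul_left y).sub (hsz.mul_left z))
  have heq : ∑' k, (-1 : ℝ) ^ k *
      (y * (sqExpo k * exp (-(sqExpo k * y))) - z * (sqExpo k * exp (-(sqExpo k * z))))
      = y * ∑' k, (-1 : ℝ) ^ k * (sqExpo k * exp (-(sqExpo k * y)))
        - z * ∑' k, (-1 : ℝ) ^ k * (sqExpo k * exp (-(sqExpo k * z))) := by
    rw [← tsum_mul_left, ← tsum_mul_left,
      ← ((halt hsy).mul_left y).tsum_sub ((halt hsz).mul_left z)]
    exact tsum_congr fun k => by ring
  rw [heq] at h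
  rw [theta4', theta4']
  linarith

lemma theta4_strictMonoOn : StrictMonoOn theta4 (Ici 1) := by
  refine strictMonoOn_of_hasDerivWithinAt_pos (f' := theta4') (convex_Ici 1) ?_ ?_ ?_
  · intro y hy
    exact (hasDerivAt_theta4 (lt_of_lt_of_le one_pos hy)).continuousAt.continuousWithinAt
  · intro y hy
    rw [interior_Ici] at hy
    exact (hasDerivAt_theta4 (one_pos.trans hy)).hasDerivWithinAt
  · intro y hy
    exact theta4'_pos (interior_subset hy)

lemma phi_strictAntiOn_Ioc : StrictAntiOn phi (Ioc 0 1) := by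
  intro x hx y hy hxy
  have hz1 : 1 ≤ 1 / y := by
    rw [le_div_iff₀ hy.1]
    linarith [hy.2]
  have hlt : 1 / y < 1 / x := one_div_lt_one_div_of_lt hx.1 hxy
  have hw1 : 1 ≤ 1 / x := hz1.trans hlt.le
  rw [phi_eq_theta4 hx.1, phi_eq_theta4 hy.1]
  have h1 := mul_theta4'_lt hz1 hlt
  have h2 := theta4_strictMonoOn hz1 hw1 hlt
  have h3 := theta4_pos (lt_of_lt_of_le one_pos hz1)
  have h4 := theta4'_pos hw1
  have h5 : 1 / x * theta4' (1 / x) / theta4 (1 / x)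
      < 1 / y * theta4' (1 / y) / theta4 (1 / y) := by
    have : 0 < 1 / x * theta4' (1 / x) := mul_pos (by linarith) h4
    calc _ ≤ 1 / x * theta4' (1 / x) / theta4 (1 / y) := by gcongr
      _ < _ := by gcongr
  linarith

/-! ### Log-concavity and the product -/

/-- `log θ₂(exp s)` is strictly concave in `s`. -/
lemma phi_strictAntiOn : StrictAntiOn phi (Ioi 0) := by
  rw [← Ioc_union_Ici_eq_Ioi (zero_lt_one' ℝ)]
  exact phi_strictAntiOn_Ioc.union phi_strictAntiOn_Ici (isGreatest_Ioc one_pos) isLeast_Ici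

lemma hasDerivAt_log_factor {α c : ℝ} (hα : 0 < α) (hc : 0 < c) (t : ℝ) :
    HasDerivAt (fun t => Real.log (theta2 (c ^ t * α))) (Real.log c * phi (c ^ t * α)) t := by
  have hx : 0 < c ^ t * α := mul_pos (rpow_pos_of_pos hc t) hα
  have h1 : HasDerivAt (fun t : ℝ => c ^ t * α) (c ^ t * Real.log c * α) t :=
    ((hasStrictDerivAt_const_rpow hc t).hasDerivAt).mul_const α
  have h2 := (HasDerivAt.comp (h₂ := theta2) t (differentiableAt_theta2 hx).hasDerivAt h1).log
    (theta2_pos hx).ne'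
  refine h2.congr_deriv ?_
  simp only [phi, Function.comp]
  ring

/-- For `t > 0` the factor `c ^ t` lies on the same side of `1` as `c`. -/
lemma log_mul_phi_le {α c t : ℝ} (hα : 0 < α) (hc : 0 < c) (ht : 0 < t) :
    Real.log c * phi (c ^ t * α) ≤ Real.log c * phi α ∧
      (c ≠ 1 → Real.log c * phi (c ^ t * α) < Real.log c * phi α) := by
  have hx : 0 < c ^ t * α := mul_pos (rpow_pos_of_pos hc t) hα
  have key : c ≠ 1 → Real.log c * phi (c ^ t * α) < Real.log c * phi α := by
    intro h
    rcases lt_or_gt_of_ne h with h | h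
    · have hlt : c ^ t * α < α := mul_lt_of_lt_one_left hα (rpow_lt_one hc.le h ht)
      exact mul_lt_mul_of_neg_left (phi_strictAntiOn hx hα hlt) (Real.log_neg hc h)
    · have hlt : α < c ^ t * α := lt_mul_of_one_lt_left hα (one_lt_rpow h ht)
      exact mul_lt_mul_of_pos_left (phi_strictAntiOn hα hx hlt) (Real.log_pos h)
  refine ⟨?_, key⟩
  by_cases h : c = 1
  · simp [h]
  · exact (key h).le

/-- The derivative of `∑ log θ₂(c i ^ t * α)`. -/
noncomputable def slope {d : ℕ} (α : ℝ) (c : Fin d → ℝ) (t : ℝ) : ℝ :=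
  ∑ i, Real.log (c i) * phi (c i ^ t * α)

lemma slope_neg {d : ℕ} {α : ℝ} (hα : 0 < α) {c : Fin d → ℝ} (hc : ∀ i, 0 < c i)
    (hprod : ∏ i, c i = 1) (hne : ¬ ∀ i, c i = 1) {t : ℝ} (ht : 0 < t) : slope α c t < 0 := by
  have hlog : ∑ i, Real.log (c i) = 0 := by
    rw [← Real.log_prod (fun i _ => (hc i).ne'), hprod, Real.log_one]
  push Not at hne
  obtain ⟨i, hi⟩ := hne
  calc slope α c t < ∑ i, Real.log (c i) * phi α :=
        Finset.sum_lt_sum (fun j _ => (log_mul_phi_le hα (hc j) ht).1)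
          ⟨i, Finset.mem_univ i, (log_mul_phi_le hα (hc i) ht).2 hi⟩
    _ = 0 := by rw [← Finset.sum_mul, hlog, zero_mul]

lemma slope_inv {d : ℕ} (α : ℝ) {c : Fin d → ℝ} (hc : ∀ i, 0 < c i) (t : ℝ) :
    slope α (fun i => (c i)⁻¹) t = -slope α c (-t) := by
  simp only [slope, Real.log_inv, ← Finset.sum_neg_distrib, neg_mul]
  refine Finset.sum_congr rfl fun i _ => ?_
  rw [rpow_neg (hc i).le, inv_rpow (hc i).le]

lemma slope_zero {d : ℕ} {α : ℝ} {c : Fin d → ℝ} (hc : ∀ i, 0 < c i)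
    (hprod : ∏ i, c i = 1) : slope α c 0 = 0 := by
  simp only [slope, rpow_zero, one_mul, ← Finset.sum_mul]
  rw [← Real.log_prod (fun i _ => (hc i).ne'), hprod, Real.log_one, zero_mul]

lemma slope_pos {d : ℕ} {α : ℝ} (hα : 0 < α) {c : Fin d → ℝ} (hc : ∀ i, 0 < c i)
    (hprod : ∏ i, c i = 1) (hne : ¬ ∀ i, c i = 1) {t : ℝ} (ht : t < 0) : 0 < slope α c t := by
  have h := slope_neg hα (c := fun i => (c i)⁻¹) (fun i => inv_pos.mpr (hc i))
    (by rw [Finset.prod_inv_distrib, hprod, inv_one]) (by simpa using hne) (neg_pos.mpr ht)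
  rw [slope_inv α hc, neg_neg] at h
  linarith

end ThetaTwo

/-- with `c_i > 0`, `∏ c_i = 1`, not all `c_i = 1`, the function
`U₂(t) = ∏ θ₂(c_i^t α) = θ_{A_t(ℤ+1/2)^d}(α)` satisfies `U₂'(0)=0`, `U₂' > 0` on `t<0`,
`U₂' < 0` on `t>0`; in particular `t = 0` is the unique strict maximum of `U₂`. -/
theorem U2_unique_maximum
    (d : ℕ) (hd : 1 ≤ d) (α : ℝ) (hα : 0 < α)
    (c : Fin d → ℝ) (hc : ∀ i, 0 < c i) (hprod : ∏ i, c i = 1)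
    (hne : ¬ ∀ i, c i = 1)
    (U : ℝ → ℝ) (hU : ∀ t : ℝ, U t = ∏ i, theta2 (Real.rpow (c i) t * α)) :
    deriv U 0 = 0 ∧ (∀ t : ℝ, t < 0 → 0 < deriv U t) ∧
      (∀ t : ℝ, 0 < t → deriv U t < 0) ∧ (∀ t : ℝ, t ≠ 0 → U t < U 0) := by
  have hpos : ∀ t, 0 < U t := by
    intro t
    rw [hU]
    exact Finset.prod_pos fun i _ =>
      ThetaTwo.theta2_pos (mul_pos (Real.rpow_pos_of_pos (hc i) t) hα)
  have hexp : U = fun t => Real.exp (∑ i, Real.log (theta2 (c i ^ t * α))) := by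
    funext t
    rw [hU, Real.exp_sum]
    refine Finset.prod_congr rfl fun i _ => ?_
    exact (Real.exp_log
      (ThetaTwo.theta2_pos (mul_pos (Real.rpow_pos_of_pos (hc i) t) hα))).symm
  have hder : ∀ t, HasDerivAt U (U t * ThetaTwo.slope α c t) t := by
    intro t
    have h := (HasDerivAt.fun_sum (u := Finset.univ)
      fun i _ => ThetaTwo.hasDerivAt_log_factor hα (hc i) t).exp
    rw [hexp]
    exact h
  have hneg : ∀ t, 0 < t → deriv U t < 0 := fun t ht => by
    rw [(hder t).deriv]
    exact mul_neg_of_pos_of_neg (hpos t) (ThetaTwo.slope_neg hα hc hprod hne ht)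
  have hposd : ∀ t, t < 0 → 0 < deriv U t := fun t ht => by
    rw [(hder t).deriv]
    exact mul_pos (hpos t) (ThetaTwo.slope_pos hα hc hprod hne ht)
  have hcont : Continuous U := continuous_iff_continuousAt.mpr fun t => (hder t).continuousAt
  refine ⟨?_, hposd, hneg, fun t ht => ?_⟩
  · rw [(hder 0).deriv, ThetaTwo.slope_zero hc hprod, mul_zero]
  · rcases lt_or_gt_of_ne ht with h | h
    · have hmono : StrictMonoOn U (Set.Iic 0) :=
        strictMonoOn_of_deriv_pos (convex_Iic 0) hcont.continuousOn fun s hs => by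
          rw [interior_Iic] at hs
          exact hposd s hs
      exact hmono h.le Set.self_mem_Iic h
    · have hanti : StrictAntiOn U (Set.Ici 0) :=
        strictAntiOn_of_deriv_neg (convex_Ici 0) hcont.continuousOn fun s hs => by
          rw [interior_Ici] at hs
          exact hneg s hs
      exact hanti Set.self_mem_Ici h.le h
end

section
/- Let d ≥ 1 and α > 0. Assume c₁,…,c_d > 0 satisfy ∏_{i=1}^d c_i = 1 and not all c_i equal 1. Define P₃₄(t) = ∏_{i=1}^{d} θ₃(c_i^t α)·θ₄(c_i^t α) and P₂₃(t) = ∏_{i=1}^{d} θ₂(c_i^t α)·θ₃(c_i^t α) for t ∈ ℝ. Then for each f ∈ {P₃₄, P₂₃}: f'(0) = 0, f'(t) > 0 for t < 0, and f'(t) < 0 for t > 0; in particular t = 0 is the unique strict maximum of f. -/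
/-!
By the Jacobi triple product, with `Q = e^{-2πx}`,
`θ₃(x) θ₄(x) = ∏_{k ≥ 0} (1 - Q^{k+1})² (1 - Q^{2k+1})²` (`theta3_mul_theta4`).
Every factor has the form `1 - e^{-ax}` with `a > 0`, and
`x · (d/dx) log (1 - e^{-ax}) = ax / (e^{ax} - 1)` is strictly decreasing in `x`, because
`s ↦ s / (e^s - 1)` is. Hence `G(x) = x · (d/dx) log (θ₃ θ₄)^{1/2}(x)` is strictly decreasing
(`mul_logProdDeriv_strictAnti`); equivalently `u ↦ log (θ₃ θ₄)(e^u)` is strictly concave.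

The logarithmic derivative of `P₃₄` at `t` is `2 Σ log c_i · G(c_i^t α)`. Since `Σ log c_i = 0`, it
equals `2 Σ log c_i · (G(c_i^t α) - G(α))`, where each summand with `c_i ≠ 1` has the sign of `-t`
(`unique_maximum_core`). Poisson summation gives `θ₂(x) θ₃(x) = x⁻¹ θ₃(1/x) θ₄(1/x)`
(`theta2_mul_theta3`), and since `∏ c_i = 1` the factors `x⁻¹` multiply to the constant `α^{-d}`;
so `P₂₃` is a constant multiple of `P₃₄` for the data `c_i⁻¹`, `α⁻¹`.

The triple product is the limit of its finite form (`finite_triple_product`), whose coefficients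
are `Q`-binomial coefficients satisfying a double Pascal rule (`qBinom_rec`); dominated convergence
for series justifies passing to the limit (`triple_product`).
-/

open scoped BigOperators

/-- The classical Jacobi theta function `θ₃(x) = Σ_{k∈ℤ} e^{−πk²x}`. -/
noncomputable def theta3 (x : ℝ) : ℝ :=
  ∑' n : ℤ, Real.exp (-Real.pi * (n : ℝ) ^ 2 * x)

open Filter Topology

/-! ### The Jacobi triple product at `z = ±1` -/

/-- The finite `Q`-Pochhammer product `(Q; Q)_n = ∏_{k=1}^n (1 - Q^k)`. -/
noncomputable def qPoch (Q : ℝ) (n : ℕ) : ℝ := ∏ k ∈ Finset.range n, (1 - Q ^ (k + 1))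

/-- The reciprocal `1 / (Q; Q)_m`, extended by `0` to negative `m`, so that the recursion
`qPochInv_sub_one` holds for every integer. -/
noncomputable def qPochInv (Q : ℝ) (m : ℤ) : ℝ := if 0 ≤ m then (qPoch Q m.toNat)⁻¹ else 0

/-- The `Q`-binomial coefficient `[2n choose n + j]_Q`, which is `0` for `|j| > n`. -/
noncomputable def qBinom (Q : ℝ) (n : ℕ) (j : ℤ) : ℝ :=
  qPoch Q (2 * n) * (qPochInv Q (n - j) * qPochInv Q (n + j))

lemma one_sub_pow_succ_pos {Q : ℝ} (h0 : 0 < Q) (h1 : Q < 1) (k : ℕ) : 0 < 1 - Q ^ (k + 1) :=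
  sub_pos.2 (pow_lt_one₀ h0.le h1 k.succ_ne_zero)

lemma qPoch_pos {Q : ℝ} (h0 : 0 < Q) (h1 : Q < 1) (n : ℕ) : 0 < qPoch Q n :=
  Finset.prod_pos fun k _ => one_sub_pow_succ_pos h0 h1 k

lemma qPoch_succ (Q : ℝ) (n : ℕ) : qPoch Q (n + 1) = qPoch Q n * (1 - Q ^ (n + 1)) :=
  Finset.prod_range_succ _ _

lemma qPoch_antitone {Q : ℝ} (h0 : 0 < Q) (h1 : Q < 1) : Antitone (qPoch Q) := by
  refine antitone_nat_of_succ_le fun n => ?_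
  rw [qPoch_succ]
  exact mul_le_of_le_one_right (qPoch_pos h0 h1 n).le (by linarith [pow_pos h0 (n + 1)])

lemma qPoch_le_one {Q : ℝ} (h0 : 0 < Q) (h1 : Q < 1) (n : ℕ) : qPoch Q n ≤ 1 := by
  simpa [qPoch] using qPoch_antitone h0 h1 (Nat.zero_le n)

lemma qPochInv_sub_one {Q : ℝ} (h0 : 0 < Q) (h1 : Q < 1) (m : ℤ) :
    qPochInv Q (m - 1) = (1 - Q ^ m) * qPochInv Q m := by
  rcases lt_trichotomy m 0 with h | rfl | h
  · simp [qPochInv, not_le.2 h, show ¬ (1 ≤ m) by omega]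
  · simp [qPochInv]
  · obtain ⟨k, rfl⟩ : ∃ k : ℕ, m = k + 1 := ⟨(m - 1).toNat, by omega⟩
    have e : ((k : ℤ) + 1).toNat = k + 1 := by omega
    have hp := one_sub_pow_succ_pos h0 h1 k
    have hq := qPoch_pos h0 h1 k
    rw [qPochInv, qPochInv, if_pos (by omega), if_pos (by omega), e, add_sub_cancel_right,
      Int.toNat_natCast, qPoch_succ]
    have : Q ^ ((k : ℤ) + 1) = Q ^ (k + 1) := by exact_mod_cast zpow_natCast Q (k + 1)
    rw [this]
    field_simp

lemma qBinom_eq_zero (Q : ℝ) (n : ℕ) (j : ℤ) (hj : j ∉ Finset.Icc (-n : ℤ) n) :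
    qBinom Q n j = 0 := by
  rw [Finset.mem_Icc, not_and_or] at hj
  rcases hj with h | h
  · simp [qBinom, qPochInv, show ¬ (0 ≤ (n : ℤ) + j) by omega]
  · simp [qBinom, qPochInv, show ¬ (j ≤ (n : ℤ)) by omega]

/-- The double Pascal rule for the coefficients of the finite Jacobi triple product. -/
lemma qBinom_rec {q : ℝ} (h0 : 0 < q) (h1 : q < 1) (n : ℕ) (j : ℤ) :
    q ^ (j ^ 2) * qBinom (q ^ 2) (n + 1) j =
      (1 + q ^ (2 * (2 * n + 1))) * (q ^ (j ^ 2) * qBinom (q ^ 2) n j) +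
      q ^ (2 * n + 1) * (q ^ ((j - 1) ^ 2) * qBinom (q ^ 2) n (j - 1) +
        q ^ ((j + 1) ^ 2) * qBinom (q ^ 2) n (j + 1)) := by
  have hq : q ≠ 0 := h0.ne'
  have H0 : 0 < q ^ 2 := by positivity
  have H1 : q ^ 2 < 1 := pow_lt_one₀ h0.le h1 two_ne_zero
  have R := qPochInv_sub_one H0 H1
  have key : ∀ m : ℤ, (q ^ 2) ^ m = q ^ (2 * m) := fun m => by
    rw [zpow_mul]; norm_cast
  obtain ⟨X, hX⟩ : ∃ X, X = q ^ (2 * ((n : ℤ) + 1 - j)) := ⟨_, rfl⟩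
  obtain ⟨Y, hY⟩ : ∃ Y, Y = q ^ (2 * ((n : ℤ) + 1 + j)) := ⟨_, rfl⟩
  have hXY : X * Y = q ^ (4 * n + 4) := by
    rw [hX, hY, ← zpow_add₀ hq, ← zpow_natCast]; congr 1; push_cast; ring
  have e1 : q ^ (2 * n + 1) * q ^ ((j - 1) ^ 2) = X * q ^ (j ^ 2) := by
    rw [hX, ← zpow_natCast, ← zpow_add₀ hq, ← zpow_add₀ hq]; congr 1; push_cast; ring
  have e2 : q ^ (2 * n + 1) * q ^ ((j + 1) ^ 2) = Y * q ^ (j ^ 2) := by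
    rw [hY, ← zpow_natCast, ← zpow_add₀ hq, ← zpow_add₀ hq]; congr 1; push_cast; ring
  have a1 : qPochInv (q ^ 2) (n - j) = (1 - X) * qPochInv (q ^ 2) (n + 1 - j) := by
    rw [hX, ← key, ← R]; congr 1; ring
  have a2 : qPochInv (q ^ 2) (n + j) = (1 - Y) * qPochInv (q ^ 2) (n + 1 + j) := by
    rw [hY, ← key, ← R]; congr 1; ring
  have a3 : qPochInv (q ^ 2) (n - (j + 1)) = (1 - X / q ^ 2) * qPochInv (q ^ 2) (n - j) := by
    have : X / q ^ 2 = (q ^ 2) ^ ((n : ℤ) - j) := by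
      rw [key, hX, div_eq_iff H0.ne', ← zpow_natCast, ← zpow_add₀ hq]; congr 1; push_cast; ring
    rw [this, ← R]; congr 1; ring
  have a4 : qPochInv (q ^ 2) (n + (j - 1)) = (1 - Y / q ^ 2) * qPochInv (q ^ 2) (n + j) := by
    have : Y / q ^ 2 = (q ^ 2) ^ ((n : ℤ) + j) := by
      rw [key, hY, div_eq_iff H0.ne', ← zpow_natCast, ← zpow_add₀ hq]; congr 1; push_cast; ring
    rw [this, ← R]; congr 1; ring
  have c1 : q ^ (2 * (2 * n + 1)) = X * Y / q ^ 2 := by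
    rw [hXY, eq_div_iff H0.ne', ← pow_add]; congr 1; ring
  have p : qPoch (q ^ 2) (2 * (n + 1)) =
      qPoch (q ^ 2) (2 * n) * (1 - X * Y / q ^ 2) * (1 - X * Y) := by
    rw [show 2 * (n + 1) = 2 * n + 1 + 1 by ring, qPoch_succ, qPoch_succ, ← c1, hXY, ← pow_mul,
      ← pow_mul, show 4 * n + 4 = 2 * (2 * n + 1 + 1) by ring]
  rw [mul_add (q ^ (2 * n + 1)), ← mul_assoc (q ^ (2 * n + 1)), ← mul_assoc (q ^ (2 * n + 1)),
    e1, e2, c1]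
  simp only [qBinom]
  rw [p, a3, a4, show (n : ℤ) - (j - 1) = n + 1 - j by ring,
    show (n : ℤ) + (j + 1) = n + 1 + j by ring, a1, a2]
  push_cast
  field_simp
  ring

lemma summable_mul_qBinom (Q : ℝ) (n : ℕ) (w : ℤ → ℝ) :
    Summable fun j : ℤ => w j * qBinom Q n j :=
  summable_of_ne_finset_zero (s := Finset.Icc (-n : ℤ) n) fun j hj => by
    rw [qBinom_eq_zero Q n j hj, mul_zero]

/-- The finite form of the Jacobi triple product at `z = ±1`. -/
lemma finite_triple_product {q z : ℝ} (h0 : 0 < q) (h1 : q < 1) (hz : z * z = 1) (n : ℕ) :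
    ∑' j : ℤ, z ^ j * q ^ (j ^ 2) * qBinom (q ^ 2) n j =
      ∏ k ∈ Finset.range n, (1 + z * q ^ (2 * k + 1)) ^ 2 := by
  have hz0 : z ≠ 0 := by rintro rfl; simp at hz
  induction n with
  | zero =>
    rw [tsum_eq_single 0]
    · simp [qBinom, qPoch, qPochInv]
    · intro j hj
      rw [qBinom_eq_zero _ _ _ (by simpa using hj), mul_zero]
  | succ n ih =>
    set T : ℤ → ℝ := fun j => z ^ j * q ^ (j ^ 2) * qBinom (q ^ 2) n j with hT
    have hs : Summable T := summable_mul_qBinom (q ^ 2) n fun j => z ^ j * q ^ (j ^ 2)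
    have hs1 : Summable fun j => T (j - 1) := 
      hs.comp_injective (i := fun j : ℤ => j - 1) fun a b h => by simpa using h
    have hs2 : Summable fun j => T (j + 1) := 
      hs.comp_injective (i := fun j : ℤ => j + 1) fun a b h => by simpa using h
    have t1 : ∑' j, T (j - 1) = ∑' j, T j := (Equiv.subRight (1 : ℤ)).tsum_eq T
    have t2 : ∑' j, T (j + 1) = ∑' j, T j := (Equiv.addRight (1 : ℤ)).tsum_eq T
    have hstep : ∀ j : ℤ, z ^ j * q ^ (j ^ 2) * qBinom (q ^ 2) (n + 1) j =
        (1 + q ^ (2 * (2 * n + 1))) * T j + z * q ^ (2 * n + 1) * (T (j - 1) + T (j + 1)) := by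
      intro j
      have m1 : z * z ^ (j - 1) = z ^ j := by rw [zpow_sub_one₀ hz0]; field_simp
      have m2 : z * z ^ (j + 1) = z ^ j := by
        rw [zpow_add_one₀ hz0, mul_comm (z ^ j) z, ← mul_assoc, hz, one_mul]
      rw [mul_assoc, qBinom_rec h0 h1]
      simp only [hT]
      linear_combination (-(q ^ (2 * n + 1) * q ^ ((j - 1) ^ 2) * qBinom (q ^ 2) n (j - 1))) * m1
        - (q ^ (2 * n + 1) * q ^ ((j + 1) ^ 2) * qBinom (q ^ 2) n (j + 1)) * m2
    rw [tsum_congr hstep, (hs.mul_left _).tsum_add ((hs1.add hs2).mul_left _), tsum_mul_left,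
      tsum_mul_left, hs1.tsum_add hs2, t1, t2, ih, Finset.prod_range_succ, pow_mul']
    linear_combination (-(∏ k ∈ Finset.range n, (1 + z * q ^ (2 * k + 1)) ^ 2) *
      (q ^ (2 * n + 1)) ^ 2) * hz

lemma tendsto_prod_one_add {f : ℕ → ℝ} (hf : Summable f) (hpos : ∀ k, 0 < 1 + f k) :
    Tendsto (fun n => ∏ k ∈ Finset.range n, (1 + f k)) atTop
      (𝓝 (Real.exp (∑' k, Real.log (1 + f k)))) := by
  have h := (Real.summable_log_one_add_of_summable hf).hasSum.tendsto_sum_nat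
  refine ((Real.continuous_exp.tendsto _).comp h).congr fun n => ?_
  simp only [Function.comp, Real.exp_sum]
  exact Finset.prod_congr rfl fun k _ => Real.exp_log (hpos k)

/-- The Jacobi triple product at `z = ±1`: `∏ (1 + z q^{2k+1})² = (Σ z^j q^{j²}) / (q²; q²)_∞`,
with `E` standing for `(q²; q²)_∞`. -/
lemma triple_product {q z E : ℝ} (h0 : 0 < q) (h1 : q < 1) (hz : z * z = 1) (hE : 0 < E)
    (hlim : Tendsto (qPoch (q ^ 2)) atTop (𝓝 E)) (hs : Summable fun j : ℤ => q ^ (j ^ 2)) :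
    Tendsto (fun n => ∏ k ∈ Finset.range n, (1 + z * q ^ (2 * k + 1)) ^ 2) atTop
      (𝓝 ((∑' j : ℤ, z ^ j * q ^ (j ^ 2)) * E⁻¹)) := by
  have H0 : 0 < q ^ 2 := by positivity
  have H1 : q ^ 2 < 1 := pow_lt_one₀ h0.le h1 two_ne_zero
  have hzabs : |z| = 1 := by
    rcases mul_self_eq_one_iff.1 hz with rfl | rfl <;> simp
  have hEle : ∀ n, E ≤ qPoch (q ^ 2) n := fun n => (qPoch_antitone H0 H1).le_of_tendsto hlim n
  have hr0 : ∀ m, 0 ≤ qPochInv (q ^ 2) m := fun m => by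
    unfold qPochInv; split_ifs
    · exact (inv_pos.2 (qPoch_pos H0 H1 _)).le
    · rfl
  have hr1 : ∀ m, qPochInv (q ^ 2) m ≤ E⁻¹ := fun m => by
    unfold qPochInv; split_ifs
    · exact inv_anti₀ hE (hEle _)
    · exact (inv_pos.2 hE).le
  have hrlim : ∀ u : ℕ → ℤ, Tendsto u atTop atTop →
      Tendsto (fun n => qPochInv (q ^ 2) (u n)) atTop (𝓝 E⁻¹) := by
    intro u hu
    have h2 : Tendsto (fun n => (u n).toNat) atTop atTop := by
      refine tendsto_atTop.2 fun b => ?_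
      filter_upwards [hu.eventually_ge_atTop (b : ℤ)] with n hn
      omega
    refine ((hlim.comp h2).inv₀ hE.ne').congr' ?_
    filter_upwards [hu.eventually_ge_atTop 0] with n hn
    simp [qPochInv, hn]
  rw [← tsum_mul_right]
  simp_rw [← finite_triple_product h0 h1 hz]
  refine tendsto_tsum_of_dominated_convergence
    (bound := fun j : ℤ => q ^ (j ^ 2) * (1 * (E⁻¹ * E⁻¹))) (hs.mul_right _) ?_ ?_
  · intro j
    refine Tendsto.const_mul _ ?_
    have hn : Tendsto (fun n : ℕ => (n : ℤ)) atTop atTop := tendsto_natCast_atTop_atTop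
    have b1 := hrlim (fun n => (n : ℤ) - j) (tendsto_atTop_add_const_right _ (-j) hn)
    have b2 := hrlim (fun n => (n : ℤ) + j) (tendsto_atTop_add_const_right _ j hn)
    have b3 : Tendsto (fun n => qPoch (q ^ 2) (2 * n)) atTop (𝓝 E) :=
      hlim.comp (tendsto_id.const_mul_atTop' two_pos)
    have := b3.mul (b1.mul b2)
    rwa [mul_inv_cancel_left₀ hE.ne'] at this
  · refine Eventually.of_forall fun n j => ?_
    rw [norm_mul, norm_mul, norm_zpow, Real.norm_eq_abs z, hzabs, one_zpow, one_mul,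
      Real.norm_of_nonneg (zpow_pos h0 _).le]
    refine mul_le_mul_of_nonneg_left ?_ (zpow_pos h0 _).le
    have hb : 0 ≤ qBinom (q ^ 2) n j :=
      mul_nonneg (qPoch_pos H0 H1 _).le (mul_nonneg (hr0 _) (hr0 _))
    rw [Real.norm_of_nonneg hb]
    exact mul_le_mul (qPoch_le_one H0 H1 _)
      (mul_le_mul (hr1 _) (hr1 _) (hr0 _) (inv_pos.2 hE).le)
      (mul_nonneg (hr0 _) (hr0 _)) zero_le_one

/-! ### Logarithmic derivative of products of `1 - e^{-ax}` -/

/-- The logarithm of the infinite product `∏_{k ≥ 0} (1 - e^{-(bk + c)x})`, meaningful for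
`b, c, x > 0`. -/
noncomputable def logProd (b c x : ℝ) : ℝ := ∑' k : ℕ, Real.log (1 - Real.exp (-((b * k + c) * x)))

/-- The termwise derivative of `logProd b c`. -/
noncomputable def logProdDeriv (b c x : ℝ) : ℝ :=
  ∑' k : ℕ, (b * k + c) / (Real.exp ((b * k + c) * x) - 1)

lemma exp_sub_one_pos {s : ℝ} (hs : 0 < s) : 0 < Real.exp s - 1 := by
  have := Real.add_one_lt_exp hs.ne'
  linarith

lemma one_sub_exp_neg_pos {s : ℝ} (hs : 0 < s) : 0 < 1 - Real.exp (-s) :=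
  sub_pos.2 (Real.exp_lt_one_iff.2 (neg_neg_of_pos hs))

lemma div_exp_sub_one_strictAnti {s t : ℝ} (hs : 0 < s) (hst : s < t) :
    t / (Real.exp t - 1) < s / (Real.exp s - 1) := by
  have ht := hs.trans hst
  rw [div_lt_div_iff₀ (exp_sub_one_pos ht) (exp_sub_one_pos hs)]
  have h := strictConvexOn_exp.2 (Set.mem_univ t) (Set.mem_univ 0) ht.ne'
    (div_pos hs ht) (sub_pos.2 ((div_lt_one ht).2 hst)) (by ring)
  simp only [smul_eq_mul, mul_zero, add_zero, Real.exp_zero, mul_one, div_mul_cancel₀ s ht.ne'] at h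
  have h2 := mul_lt_mul_of_pos_left h ht
  have h3 : t * (s / t * Real.exp t + (1 - s / t)) = s * Real.exp t + (t - s) := by
    field_simp
  linarith

lemma summable_exp_neg_linear {b c x : ℝ} (hb : 0 < b) (hx : 0 < x) :
    Summable fun k : ℕ => Real.exp (-((b * k + c) * x)) := by
  have hr : Real.exp (-(b * x)) < 1 := Real.exp_lt_one_iff.2 (neg_neg_of_pos (mul_pos hb hx))
  refine ((summable_geometric_of_lt_one (Real.exp_pos _).le hr).mul_left
    (Real.exp (-(c * x)))).congr fun k => ?_
  rw [← Real.exp_nat_mul, ← Real.exp_add]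
  congr 1; ring

lemma summable_linear_mul_exp {b c x : ℝ} (hb : 0 < b) (hx : 0 < x) :
    Summable fun k : ℕ => (b * k + c) * Real.exp (-((b * k + c) * x)) := by
  have hr : Real.exp (-(b * x)) < 1 := Real.exp_lt_one_iff.2 (neg_neg_of_pos (mul_pos hb hx))
  have h1 : Summable fun k : ℕ => (k : ℝ) ^ 1 * Real.exp (-(b * x)) ^ k :=
    summable_pow_mul_geometric_of_norm_lt_one 1
      (by rwa [Real.norm_of_nonneg (Real.exp_pos _).le])
  have h2 := summable_exp_neg_linear (c := c) hb hx
  refine ((h1.mul_left (b * Real.exp (-(c * x)))).add (h2.mul_left c)).congr fun k => ?_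
  have : Real.exp (-((b * k + c) * x)) = Real.exp (-(c * x)) * Real.exp (-(b * x)) ^ k := by
    rw [← Real.exp_nat_mul, ← Real.exp_add]
    congr 1; ring
  rw [this]; ring

lemma logProd_term_deriv_bound {b c e x : ℝ} (hb : 0 < b) (hc : 0 < c) (he : 0 < e) (hx : e ≤ x)
    (k : ℕ) : (b * k + c) / (Real.exp ((b * k + c) * x) - 1) ≤
      (b * k + c) * Real.exp (-((b * k + c) * e)) / (1 - Real.exp (-(c * e))) := by
  have ha : 0 < b * k + c := by positivity
  have hca : c ≤ b * k + c := by linarith [show 0 ≤ b * (k : ℝ) by positivity]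
  have p1 := exp_sub_one_pos (mul_pos ha (he.trans_le hx))
  have p2 := one_sub_exp_neg_pos (mul_pos hc he)
  rw [div_le_div_iff₀ p1 p2, mul_assoc]
  refine mul_le_mul_of_nonneg_left ?_ ha.le
  have h1 : Real.exp ((b * k + c) * e) ≤ Real.exp ((b * k + c) * x) :=
    Real.exp_le_exp.2 (mul_le_mul_of_nonneg_left hx ha.le)
  have h2 : Real.exp (-((b * k + c) * e)) ≤ Real.exp (-(c * e)) :=
    Real.exp_le_exp.2 (neg_le_neg (mul_le_mul_of_nonneg_right hca he.le))
  have h3 : Real.exp (-((b * k + c) * e)) * Real.exp ((b * k + c) * e) = 1 := by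
    rw [← Real.exp_add]; simp
  have h4 := mul_le_mul_of_nonneg_left h1 (Real.exp_pos (-((b * k + c) * e))).le
  linarith

lemma summable_logProdDeriv {b c x : ℝ} (hb : 0 < b) (hc : 0 < c) (hx : 0 < x) :
    Summable fun k : ℕ => (b * k + c) / (Real.exp ((b * k + c) * x) - 1) := by
  refine Summable.of_nonneg_of_le (fun k => ?_)
    (logProd_term_deriv_bound hb hc hx le_rfl) ((summable_linear_mul_exp hb hx).div_const _)
  have ha : 0 < b * k + c := by positivity
  exact (div_pos ha (exp_sub_one_pos (mul_pos ha hx))).le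

lemma summable_logProd {b c x : ℝ} (hb : 0 < b) (hx : 0 < x) :
    Summable fun k : ℕ => Real.log (1 - Real.exp (-((b * k + c) * x))) := by
  simpa only [sub_eq_add_neg] using
    Real.summable_log_one_add_of_summable (summable_exp_neg_linear (c := c) hb hx).neg

lemma hasDerivAt_logProd {b c x : ℝ} (hb : 0 < b) (hc : 0 < c) (hx : 0 < x) :
    HasDerivAt (logProd b c) (logProdDeriv b c x) x := by
  have he : 0 < x / 2 := by positivity
  refine hasDerivAt_tsum_of_isPreconnected
    (u := fun k : ℕ => (b * k + c) * Real.exp (-((b * k + c) * (x / 2))) /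
      (1 - Real.exp (-(c * (x / 2)))))
    (g := fun (k : ℕ) y => Real.log (1 - Real.exp (-((b * k + c) * y))))
    (g' := fun (k : ℕ) y => (b * k + c) / (Real.exp ((b * k + c) * y) - 1))
    (t := Set.Ioi (x / 2)) (y₀ := x)
    ((summable_linear_mul_exp hb he).div_const _) isOpen_Ioi isPreconnected_Ioi
    ?_ ?_ (half_lt_self hx) (summable_logProd hb hx) (half_lt_self hx)
  · intro k y hy
    have hy0 : 0 < y := he.trans hy
    have ha : 0 < b * k + c := by positivity
    have p1 := one_sub_exp_neg_pos (mul_pos ha hy0)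
    have p2 := exp_sub_one_pos (mul_pos ha hy0)
    have h1 : HasDerivAt (fun y : ℝ => -((b * k + c) * y)) (-((b * k + c) * 1)) y :=
      ((hasDerivAt_id y).const_mul _).neg
    refine ((h1.exp.const_sub 1).log p1.ne').congr_deriv ?_
    rw [div_eq_div_iff p1.ne' p2.ne', Real.exp_neg]
    have := Real.exp_pos ((b * k + c) * y)
    field_simp
  · intro k y hy
    have hy0 : 0 < y := he.trans hy
    have ha : 0 < b * k + c := by positivity
    rw [Real.norm_of_nonneg (div_pos ha (exp_sub_one_pos (mul_pos ha hy0))).le]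
    exact logProd_term_deriv_bound hb hc he (le_of_lt hy) k

/-- The logarithmic derivative `x · (d/dx) log ∏ (1 - e^{-a_k x}) = Σ a_k x / (e^{a_k x} - 1)` is a
sum of strictly decreasing functions. -/
lemma mul_logProdDeriv_strictAnti {b c x y : ℝ} (hb : 0 < b) (hc : 0 < c) (hx : 0 < x)
    (hxy : x < y) : y * logProdDeriv b c y < x * logProdDeriv b c x := by
  have hy := hx.trans hxy
  have hlt : ∀ k : ℕ, y * ((b * k + c) / (Real.exp ((b * k + c) * y) - 1)) <
      x * ((b * k + c) / (Real.exp ((b * k + c) * x) - 1)) := by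
    intro k
    have ha : 0 < b * k + c := by positivity
    have := div_exp_sub_one_strictAnti (mul_pos ha hx) (mul_lt_mul_of_pos_left hxy ha)
    convert this using 1 <;> ring
  rw [logProdDeriv, logProdDeriv, ← tsum_mul_left, ← tsum_mul_left]
  exact Summable.tsum_lt_tsum (fun k => (hlt k).le) (hlt 0)
    ((summable_logProdDeriv hb hc hy).mul_left _) ((summable_logProdDeriv hb hc hx).mul_left _)

/-! ### Product and inversion formulas for the theta functions -/

/-- The logarithm of `(θ₃ θ₄)^{1/2}`, read off from the triple product. -/
noncomputable def halfLogTheta (x : ℝ) : ℝ :=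
  logProd (2 * Real.pi) (2 * Real.pi) x + logProd (4 * Real.pi) (2 * Real.pi) x

lemma tendsto_prod_exp_logProd {b c x : ℝ} (hb : 0 < b) (hc : 0 < c) (hx : 0 < x) :
    Tendsto (fun n => ∏ k ∈ Finset.range n, (1 - Real.exp (-((b * k + c) * x)))) atTop
      (𝓝 (Real.exp (logProd b c x))) := by
  have := tendsto_prod_one_add (f := fun k : ℕ => -Real.exp (-((b * k + c) * x)))
    (summable_exp_neg_linear hb hx).neg fun k => by
      have ha : 0 < b * k + c := by positivity
      simpa [sub_eq_add_neg] using one_sub_exp_neg_pos (mul_pos ha hx)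
  simpa only [← sub_eq_add_neg, logProd] using this

lemma theta3_mul_theta4 {x : ℝ} (hx : 0 < x) :
    theta3 x * theta4 x = Real.exp (2 * halfLogTheta x) := by
  have hpi := Real.pi_pos
  set q := Real.exp (-(Real.pi * x)) with hq
  have h0 : 0 < q := Real.exp_pos _
  have h1 : q < 1 := Real.exp_lt_one_iff.2 (neg_neg_of_pos (mul_pos hpi hx))
  have hpow : ∀ m : ℕ, q ^ m = Real.exp (-(m * (Real.pi * x))) := fun m => by
    rw [hq, ← Real.exp_nat_mul]; congr 1; ring
  have hsq : ∀ j : ℤ, Real.exp (-Real.pi * (j : ℝ) ^ 2 * x) = q ^ (j ^ 2) := fun j => by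
    rw [hq, ← Real.rpow_intCast, ← Real.exp_mul]; congr 1; push_cast; ring
  have hs : Summable fun j : ℤ => q ^ (j ^ 2) := by
    refine (HurwitzKernelBounds.summable_f_int 0 0 hx).congr fun j => ?_
    simp only [HurwitzKernelBounds.f_int, pow_zero, one_mul, add_zero]
    exact hsq j
  have hE : Tendsto (qPoch (q ^ 2)) atTop
      (𝓝 (Real.exp (logProd (2 * Real.pi) (2 * Real.pi) x))) := by
    refine (tendsto_prod_exp_logProd (by positivity) (by positivity) hx).congr fun n => ?_
    refine Finset.prod_congr rfl fun k _ => ?_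
    rw [← pow_mul, hpow]; congr 3; push_cast; ring
  have hR : Tendsto (fun n => ∏ k ∈ Finset.range n, (1 - (q ^ (2 * k + 1)) ^ 2)) atTop
      (𝓝 (Real.exp (logProd (4 * Real.pi) (2 * Real.pi) x))) := by
    refine (tendsto_prod_exp_logProd (by positivity) (by positivity) hx).congr fun n => ?_
    refine Finset.prod_congr rfl fun k _ => ?_
    rw [← pow_mul, hpow]; congr 3; push_cast; ring
  have l3 := triple_product h0 h1 (one_mul 1) (Real.exp_pos _) hE hs
  have l4 := triple_product (z := -1) h0 h1 (by norm_num) (Real.exp_pos _) hE hs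
  have e3 : ∑' j : ℤ, (1 : ℝ) ^ j * q ^ (j ^ 2) = theta3 x := by
    simp only [theta3, hsq, one_zpow, one_mul]
  have e4 : ∑' j : ℤ, (-1 : ℝ) ^ j * q ^ (j ^ 2) = theta4 x := by
    simp only [theta4, hsq]
  rw [e3] at l3
  rw [e4] at l4
  have huniq := tendsto_nhds_unique ((l3.mul l4).congr fun n => by
    rw [← Finset.prod_mul_distrib, ← Finset.prod_pow]
    exact Finset.prod_congr rfl fun k _ => by ring) (hR.pow 2)
  have hEp := Real.exp_pos (logProd (2 * Real.pi) (2 * Real.pi) x)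
  rw [halfLogTheta, two_mul, Real.exp_add, Real.exp_add]
  generalize Real.exp (logProd (2 * Real.pi) (2 * Real.pi) x) = E at huniq hEp ⊢
  generalize Real.exp (logProd (4 * Real.pi) (2 * Real.pi) x) = R at huniq ⊢
  field_simp at huniq
  linear_combination huniq

/-- The inversion formula for `θ₂ θ₃`, from Poisson summation. -/
lemma theta2_mul_theta3 {x : ℝ} (hx : 0 < x) :
    theta2 x * theta3 x = x⁻¹ * (theta3 x⁻¹ * theta4 x⁻¹) := by
  have ha : 0 < x⁻¹ := inv_pos.2 hx
  have hr : 0 < x⁻¹ ^ (1 / 2 : ℝ) := Real.rpow_pos_of_pos ha _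
  have hrr : x⁻¹ ^ (1 / 2 : ℝ) * x⁻¹ ^ (1 / 2 : ℝ) = x⁻¹ := by
    rw [← Real.rpow_add ha]; norm_num
  have h3 : theta3 x⁻¹ = 1 / x⁻¹ ^ (1 / 2 : ℝ) * theta3 x := by
    have := Real.tsum_exp_neg_mul_int_sq ha
    simp only [theta3]
    convert this using 4 with n n
    · ring_nf
    · rw [div_inv_eq_mul]; ring_nf
  have h4 : theta4 x⁻¹ = 1 / x⁻¹ ^ (1 / 2 : ℝ) * theta2 x := by
    have h := Complex.tsum_exp_neg_quadratic (a := (x⁻¹ : ℝ)) (by simpa using hx) (Complex.I / 2)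
    have e1 : ∀ n : ℤ, Complex.exp (-Real.pi * (x⁻¹ : ℝ) * n ^ 2 +
        2 * Real.pi * (Complex.I / 2) * n) =
        (((-1 : ℝ) ^ n * Real.exp (-Real.pi * (n : ℝ) ^ 2 * x⁻¹) : ℝ) : ℂ) := by
      intro n
      rw [Complex.exp_add, show 2 * (Real.pi : ℂ) * (Complex.I / 2) * n =
        n * (Real.pi * Complex.I) by ring, Complex.exp_int_mul, Complex.exp_pi_mul_I]
      push_cast
      rw [mul_comm]; congr 2; ring
    have e2 : ∀ n : ℤ, Complex.exp (-Real.pi / (x⁻¹ : ℝ) * (n + Complex.I * (Complex.I / 2)) ^ 2) =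
        ((Real.exp (-Real.pi * ((n : ℝ) - 1 / 2) ^ 2 * x) : ℝ) : ℂ) := by
      intro n
      have : Complex.I * (Complex.I / 2) = -(1 / 2) := by
        linear_combination (1 / 2 : ℂ) * Complex.I_mul_I
      rw [this]
      push_cast
      rw [div_inv_eq_mul]; congr 1; ring
    have e3 : ((x⁻¹ : ℝ) : ℂ) ^ (1 / 2 : ℂ) = ((x⁻¹ ^ (1 / 2 : ℝ) : ℝ) : ℂ) := by
      rw [Complex.ofReal_cpow ha.le]; norm_num
    rw [tsum_congr e1, tsum_congr e2, e3, ← Complex.ofReal_tsum, ← Complex.ofReal_tsum] at h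
    have h' : theta4 x⁻¹ = 1 / x⁻¹ ^ (1 / 2 : ℝ) *
        ∑' n : ℤ, Real.exp (-Real.pi * ((n : ℝ) - 1 / 2) ^ 2 * x) := by
      rw [theta4]; exact_mod_cast h
    rw [h', theta2, ← (Equiv.addRight (1 : ℤ)).tsum_eq
      fun n : ℤ => Real.exp (-Real.pi * ((n : ℝ) - 1 / 2) ^ 2 * x)]
    congr 1
    refine tsum_congr fun n => ?_
    simp only [Equiv.coe_addRight]
    push_cast
    congr 3; ring
  rw [h3, h4]
  nth_rw 1 [← hrr]
  field_simp

/-! ### The sign of the derivative -/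

/-- The common core: a positive multiple of `∏ exp (2 · halfLogTheta (c_i^t α))` increases strictly
before `t = 0` and decreases strictly afterwards. -/
lemma unique_maximum_core {d : ℕ} {α K : ℝ} (hα : 0 < α) (hK : 0 < K)
    {c : Fin d → ℝ} (hc : ∀ i, 0 < c i) (hprod : ∏ i, c i = 1) (hne : ¬ ∀ i, c i = 1)
    {f : ℝ → ℝ} (hf : ∀ t, f t = K * ∏ i, Real.exp (2 * halfLogTheta (c i ^ t * α))) :
    deriv f 0 = 0 ∧ (∀ t : ℝ, t < 0 → 0 < deriv f t) ∧
      (∀ t : ℝ, 0 < t → deriv f t < 0) ∧ (∀ t : ℝ, t ≠ 0 → f t < f 0) := by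
  have hpi := Real.pi_pos
  set G : ℝ → ℝ := fun x => x * logProdDeriv (2 * Real.pi) (2 * Real.pi) x +
    x * logProdDeriv (4 * Real.pi) (2 * Real.pi) x with hG
  have hGanti : ∀ {x y : ℝ}, 0 < x → x < y → G y < G x := fun hx hxy =>
    add_lt_add (mul_logProdDeriv_strictAnti (by positivity) (by positivity) hx hxy)
      (mul_logProdDeriv_strictAnti (by positivity) (by positivity) hx hxy)
  have hpos : ∀ (i : Fin d) (t : ℝ), 0 < c i ^ t * α := fun i t => mul_pos (Real.rpow_pos_of_pos (hc i) t) hα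
  have hfpos : ∀ t, 0 < f t := fun t => by
    rw [hf]; exact mul_pos hK (Finset.prod_pos fun i _ => Real.exp_pos _)
  have hlog : ∑ i, Real.log (c i) = 0 := by
    rw [← Real.log_prod fun i _ => (hc i).ne', hprod, Real.log_one]
  have hder : ∀ t, HasDerivAt f (f t * (2 * ∑ i, Real.log (c i) * G (c i ^ t * α))) t := by
    intro t
    have hfe : f = fun t => K * Real.exp (∑ i, 2 * halfLogTheta (c i ^ t * α)) := by
      funext t; rw [hf, Real.exp_sum]
    have hi : ∀ i ∈ Finset.univ, HasDerivAt (fun t => 2 * halfLogTheta (c i ^ t * α))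
        (2 * (Real.log (c i) * G (c i ^ t * α))) t := by
      intro i _
      have h1 : HasDerivAt (fun t => c i ^ t * α) (c i ^ t * Real.log (c i) * α) t :=
        (Real.hasStrictDerivAt_const_rpow (hc i) t).hasDerivAt.mul_const α
      have h2 := (hasDerivAt_logProd (b := 2 * Real.pi) (c := 2 * Real.pi) (by positivity)
        (by positivity) (hpos i t)).add
        (hasDerivAt_logProd (b := 4 * Real.pi) (c := 2 * Real.pi) (by positivity)
        (by positivity) (hpos i t))
      refine ((h2.comp t h1).const_mul 2).congr_deriv ?_
      simp only [hG]; ring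
    have h3 := ((HasDerivAt.fun_sum hi).exp).const_mul K
    rw [hfe]
    refine h3.congr_deriv ?_
    rw [← Finset.mul_sum Finset.univ (fun i => Real.log (c i) * G (c i ^ t * α)), mul_assoc]
  -- Since `∑ log c_i = 0`, subtracting the constant `G α` from each `G (c_i^t α)` changes nothing.
  have hsum : ∀ t : ℝ, ∑ i, Real.log (c i) * G (c i ^ t * α) =
      ∑ i, Real.log (c i) * (G (c i ^ t * α) - G α) := by
    intro t
    simp only [mul_sub, Finset.sum_sub_distrib, ← Finset.sum_mul, hlog, zero_mul, sub_zero]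
  push Not at hne
  obtain ⟨i₀, hi₀⟩ := hne
  have hterm : ∀ {t : ℝ}, 0 < t → ∀ i, c i ≠ 1 →
      Real.log (c i) * (G (c i ^ t * α) - G α) < 0 := by
    intro t ht i hi
    rcases lt_or_gt_of_ne hi with h | h
    · have h1 : c i ^ t * α < α :=
        mul_lt_of_lt_one_left hα (Real.rpow_lt_one (hc i).le h ht)
      exact mul_neg_of_neg_of_pos (Real.log_neg (hc i) h) (sub_pos.2 (hGanti (hpos i t) h1))
    · have h1 : α < c i ^ t * α := lt_mul_of_one_lt_left hα (Real.one_lt_rpow h ht)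
      exact mul_neg_of_pos_of_neg (Real.log_pos h) (sub_neg.2 (hGanti hα h1))
  have hterm' : ∀ {t : ℝ}, t < 0 → ∀ i, c i ≠ 1 →
      0 < Real.log (c i) * (G (c i ^ t * α) - G α) := by
    intro t ht i hi
    rcases lt_or_gt_of_ne hi with h | h
    · have h1 : α < c i ^ t * α :=
        lt_mul_of_one_lt_left hα (Real.one_lt_rpow_of_pos_of_lt_one_of_neg (hc i) h ht)
      exact mul_pos_of_neg_of_neg (Real.log_neg (hc i) h) (sub_neg.2 (hGanti hα h1))
    · have h1 : c i ^ t * α < α :=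
        mul_lt_of_lt_one_left hα (Real.rpow_lt_one_of_one_lt_of_neg h ht)
      exact mul_pos (Real.log_pos h) (sub_pos.2 (hGanti (hpos i t) h1))
  have hzero : deriv f 0 = 0 := by
    rw [(hder 0).deriv, hsum]; simp
  have hneg : ∀ t : ℝ, t < 0 → 0 < deriv f t := by
    intro t ht
    rw [(hder t).deriv, hsum]
    refine mul_pos (hfpos t) (mul_pos two_pos ?_)
    refine Finset.sum_pos' (fun i _ => ?_) ⟨i₀, Finset.mem_univ _, hterm' ht i₀ hi₀⟩
    by_cases h : c i = 1
    · simp [h]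
    · exact (hterm' ht i h).le
  have hposd : ∀ t : ℝ, 0 < t → deriv f t < 0 := by
    intro t ht
    rw [(hder t).deriv, hsum]
    refine mul_neg_of_pos_of_neg (hfpos t) (mul_neg_of_pos_of_neg two_pos ?_)
    refine Finset.sum_neg' (fun i _ => ?_) ⟨i₀, Finset.mem_univ _, hterm ht i₀ hi₀⟩
    by_cases h : c i = 1
    · simp [h]
    · exact (hterm ht i h).le
  have hcont : Continuous f := continuous_iff_continuousAt.2 fun t => (hder t).continuousAt
  refine ⟨hzero, hneg, hposd, fun t ht => ?_⟩
  rcases lt_or_gt_of_ne ht with h | h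
  · exact strictMonoOn_of_deriv_pos (convex_Iic 0) hcont.continuousOn
      (fun s hs => hneg s (by simpa using hs)) (Set.mem_Iic.2 h.le) Set.self_mem_Iic h
  · exact strictAntiOn_of_deriv_neg (convex_Ici 0) hcont.continuousOn
      (fun s hs => hposd s (by simpa using hs)) Set.self_mem_Ici (Set.mem_Ici.2 h.le) h

/-- with `c_i > 0`, `∏ c_i = 1`, not all `c_i = 1`, the functions
`P₃₄(t) = ∏ θ₃(c_i^t α)θ₄(c_i^t α)` and `P₂₃(t) = ∏ θ₂(c_i^t α)θ₃(c_i^t α)` both satisfy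
`f'(0)=0`, `f' > 0` on `t<0`, `f' < 0` on `t>0`; in particular `t = 0` is the unique
strict maximum of each. -/
theorem P34_P23_unique_maximum
    (d : ℕ) (hd : 1 ≤ d) (α : ℝ) (hα : 0 < α)
    (c : Fin d → ℝ) (hc : ∀ i, 0 < c i) (hprod : ∏ i, c i = 1)
    (hne : ¬ ∀ i, c i = 1)
    (P34 P23 : ℝ → ℝ)
    (hP34 : ∀ t : ℝ, P34 t = ∏ i, theta3 (Real.rpow (c i) t * α) * theta4 (Real.rpow (c i) t * α))
    (hP23 : ∀ t : ℝ, P23 t = ∏ i, theta2 (Real.rpow (c i) t * α) * theta3 (Real.rpow (c i) t * α)) :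
    (deriv P34 0 = 0 ∧ (∀ t : ℝ, t < 0 → 0 < deriv P34 t) ∧
      (∀ t : ℝ, 0 < t → deriv P34 t < 0) ∧ (∀ t : ℝ, t ≠ 0 → P34 t < P34 0)) ∧
    (deriv P23 0 = 0 ∧ (∀ t : ℝ, t < 0 → 0 < deriv P23 t) ∧
      (∀ t : ℝ, 0 < t → deriv P23 t < 0) ∧ (∀ t : ℝ, t ≠ 0 → P23 t < P23 0)) := by
  have hpos : ∀ (i : Fin d) (t : ℝ), 0 < c i ^ t * α := fun i t => mul_pos (Real.rpow_pos_of_pos (hc i) t) hα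
  constructor
  · refine unique_maximum_core hα one_pos hc hprod hne fun t => ?_
    rw [hP34, one_mul]
    exact Finset.prod_congr rfl fun i _ => theta3_mul_theta4 (hpos i t)
  · have hc' : ∀ i, 0 < (c i)⁻¹ := fun i => inv_pos.2 (hc i)
    refine unique_maximum_core (c := fun i => (c i)⁻¹) (α := α⁻¹) (K := α⁻¹ ^ d)
      (inv_pos.2 hα) (pow_pos (inv_pos.2 hα) d) hc' (by simp [hprod])
      (by simpa only [inv_eq_one] using hne) fun t => ?_
    have hone : ∏ i, (c i)⁻¹ ^ t = 1 := by
      rw [Real.finsetProd_rpow _ _ fun i _ => (hc' i).le, Finset.prod_inv_distrib, hprod,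
        inv_one, Real.one_rpow]
    have hterm : ∀ i, theta2 (Real.rpow (c i) t * α) * theta3 (Real.rpow (c i) t * α) =
        (c i)⁻¹ ^ t * α⁻¹ * Real.exp (2 * halfLogTheta ((c i)⁻¹ ^ t * α⁻¹)) := by
      intro i
      have e : (c i ^ t * α)⁻¹ = (c i)⁻¹ ^ t * α⁻¹ := by
        rw [mul_inv, Real.inv_rpow (hc i).le]
      have h := theta2_mul_theta3 (hpos i t)
      rw [theta3_mul_theta4 (inv_pos.2 (hpos i t)), e] at h
      exact h
    rw [hP23, Finset.prod_congr rfl fun i _ => hterm i, Finset.prod_mul_distrib,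
      Finset.prod_mul_distrib, hone, one_mul]
    simp
end

section
/- Let d ≥ 1 and α > 0. Assume c₁,…,c_d > 0 satisfy ∏_{i=1}^d c_i = 1 and not all c_i equal 1. Define Q(t) = ∏_{i=1}^{d} θ₂(c_i^t α)/θ₃(c_i^t α) for t ∈ ℝ. Then Q'(0) = 0, Q'(t) > 0 for t < 0, and Q'(t) < 0 for t > 0; in particular t = 0 is the unique strict maximum of Q. (This expresses the maximality of the simple cubic lattice among orthorhombic lattices for the periodic Gaussian function with translation to the center of the unit cell.) -/
/-!
Write `φ(s) = log (θ₂(e^s) / θ₃(e^s))`. Then `Q(t) = exp (∑ φ(t log c_i + log α))` with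
`∑ log c_i = 0`, so the sign pattern of `Q'` follows once `φ'` is strictly decreasing: subtracting
`φ'(log α) ∑ log c_i = 0` from `∑ log c_i · φ'(t log c_i + log α)` leaves a sum of terms
`log c_i · (φ'(log α + t log c_i) - φ'(log α))`, each having the sign of `-t` or vanishing.

To see that `φ'` is strictly decreasing, the modular transformation gives
`θ₂(x) / θ₃(x) = θ₄(1/x) / θ₃(1/x)`, and the product formulas for `θ₃` and `θ₄` turn the right side
into `∏ tanh² ((2k+1)π / (2x))` (`tendsto_prod_tanh`). Hence
`φ(s) = 2 ∑ log tanh (v_k)` with `v_k = (2k+1)π e^{-s} / 2`, and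
`φ'(s) = -2 ∑ 2v_k / sinh (2v_k)`; each summand is strictly monotone because `x / sinh x` is
strictly decreasing on `(0, ∞)` (`strictAntiOn_div_sinh`).

The product formulas come from a finite form of the Jacobi triple product at `z = ±1`
(`tsum_finiteTerm_eq_prod`), divided by its central coefficient. Its terms converge to `z^j q^{j²}`
and are dominated by `q^{j²}`, so Tannery's theorem applies; the normalizing constants do not depend
on `z` and cancel in the quotient `θ₄ / θ₃`.
-/

open scoped BigOperators

open Filter Topology

/-! ### The finite triple product -/

/-- The ratio of Gaussian binomial coefficients `[2n, n+j] / [2n, n]` in base `q²`. The natural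
subtraction `n - i` is deliberate: for `j > n` the factor `i = n` is `1 - q⁰ = 0`, so the ratio
vanishes as it should. -/
noncomputable def centralRatio (q : ℝ) (n j : ℕ) : ℝ :=
  ∏ i ∈ Finset.range j, (1 - q ^ (2 * (n - i))) / (1 - q ^ (2 * (n + 1 + i)))

lemma one_sub_pow_pos {q : ℝ} (h0 : 0 < q) (h1 : q < 1) {m : ℕ} (hm : m ≠ 0) : 0 < 1 - q ^ m := by
  have := pow_lt_one₀ h0.le h1 hm
  linarith

lemma centralRatio_succ {q : ℝ} (h0 : 0 < q) (h1 : q < 1) (n j : ℕ) :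
    centralRatio q n (j + 1) * (1 - q ^ (2 * (n + 1 + j))) =
      centralRatio q n j * (1 - q ^ (2 * (n - j))) := by
  have := (one_sub_pow_pos h0 h1 (m := 2 * (n + 1 + j)) (by omega)).ne'
  rw [centralRatio, Finset.prod_range_succ, ← centralRatio]
  field_simp

lemma centralRatio_eq_zero (q : ℝ) {n j : ℕ} (h : n < j) : centralRatio q n j = 0 :=
  Finset.prod_eq_zero (Finset.mem_range.2 h) (by simp)

lemma centralRatio_nonneg {q : ℝ} (h0 : 0 < q) (h1 : q < 1) (n j : ℕ) :
    0 ≤ centralRatio q n j := by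
  refine Finset.prod_nonneg fun i _ => div_nonneg ?_ ?_
  · have := pow_le_one₀ (n := 2 * (n - i)) h0.le h1.le
    linarith
  · exact (one_sub_pow_pos h0 h1 (by omega)).le

lemma centralRatio_le_one {q : ℝ} (h0 : 0 < q) (h1 : q < 1) (n j : ℕ) :
    centralRatio q n j ≤ 1 := by
  refine Finset.prod_le_one (fun i _ => div_nonneg ?_ ?_) fun i _ => ?_
  · have := pow_le_one₀ (n := 2 * (n - i)) h0.le h1.le
    linarith
  · exact (one_sub_pow_pos h0 h1 (by omega)).le
  · rw [div_le_one (one_sub_pow_pos h0 h1 (by omega))]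
    have := pow_le_pow_of_le_one h0.le h1.le (show 2 * (n - i) ≤ 2 * (n + 1 + i) by omega)
    linarith

lemma tendsto_centralRatio {q : ℝ} (h0 : 0 < q) (h1 : q < 1) (j : ℕ) :
    Tendsto (fun n => centralRatio q n j) atTop (𝓝 1) := by
  have key : ∀ e : ℕ → ℕ, Tendsto e atTop atTop → Tendsto (fun n => 1 - q ^ e n) atTop (𝓝 1) := by
    intro e he
    simpa using ((tendsto_pow_atTop_nhds_zero_of_lt_one h0.le h1).comp he).const_sub 1
  have : Tendsto (fun n => centralRatio q n j) atTop (𝓝 (∏ i ∈ Finset.range j, (1 / 1 : ℝ))) := by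
    refine tendsto_finsetProd _ fun i _ => (key _ ?_).div (key _ ?_) one_ne_zero
    · exact tendsto_atTop_atTop.2 fun b => ⟨b + i, fun a ha => by omega⟩
    · exact tendsto_atTop_atTop.2 fun b => ⟨b, fun a ha => by omega⟩
  simpa using this

lemma centralRatio_succ_left {q : ℝ} (h0 : 0 < q) (h1 : q < 1) {n j : ℕ} (hj : j ≤ n) :
    centralRatio q (n + 1) j * ((1 - q ^ (2 * (n + 1 - j))) * (1 - q ^ (2 * (n + 1 + j)))) =
      centralRatio q n j * (1 - q ^ (2 * (n + 1))) ^ 2 := by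
  induction j with
  | zero => simp [centralRatio]; ring
  | succ j ih =>
    have ih := ih (by omega)
    have r1 := centralRatio_succ h0 h1 (n + 1) j
    have r2 := centralRatio_succ h0 h1 n j
    have e1 : n + 1 - (j + 1) = n - j := by omega
    have e2 : n + 1 + 1 + j = n + 1 + (j + 1) := by omega
    rw [e2] at r1
    rw [e1]
    have hp := (one_sub_pow_pos h0 h1 (m := 2 * (n + 1 + j)) (by omega)).ne'
    apply mul_right_cancel₀ hp
    linear_combination (1 - q ^ (2 * (n - j))) * (1 - q ^ (2 * (n + 1 + j))) * r1
      + (1 - q ^ (2 * (n - j))) * ih - (1 - q ^ (2 * (n + 1))) ^ 2 * r2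

/-- The quotient `[2n+2, n+1] / [2n, n]` of consecutive central Gaussian binomial coefficients in
base `q²`. -/
noncomputable def stepConst (q : ℝ) (n : ℕ) : ℝ :=
  (1 - q ^ (4 * n + 2)) * (1 + q ^ (2 * n + 2)) / (1 - q ^ (2 * n + 2))

lemma stepConst_pos {q : ℝ} (h0 : 0 < q) (h1 : q < 1) (n : ℕ) : 0 < stepConst q n := by
  have a := one_sub_pow_pos h0 h1 (m := 4 * n + 2) (by omega)
  have b := one_sub_pow_pos h0 h1 (m := 2 * n + 2) (by omega)
  unfold stepConst
  positivity

lemma recurrence_zero {q : ℝ} (h0 : 0 < q) (h1 : q < 1) (n : ℕ) :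
    stepConst q n * centralRatio q (n + 1) 0 =
      (1 + q ^ (4 * n + 2)) * centralRatio q n 0 +
        2 * q ^ (2 * n + 1) * (centralRatio q n 1 * q) := by
  have b := (one_sub_pow_pos h0 h1 (m := 2 * n + 2) (by omega)).ne'
  have e : 2 * (n + 1 + 0) = 2 * n + 2 := by ring
  have r := centralRatio_succ h0 h1 n 0
  rw [e] at r
  simp only [centralRatio, Finset.prod_range_zero, Finset.prod_range_one, stepConst, 
    Nat.sub_zero, Nat.add_zero, show 2 * (n + 1) = 2 * n + 2 by ring] at *
  field_simp
  ring

/-- Comparison of coefficients of `z ^ (m + 1)` when the finite triple product is multiplied by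
`(1 + z q ^ (2n+1)) (1 + z⁻¹ q ^ (2n+1))`. -/
lemma recurrence_succ {q : ℝ} (h0 : 0 < q) (h1 : q < 1) (n m : ℕ) :
    stepConst q n * (centralRatio q (n + 1) (m + 1) * q ^ (m + 1) ^ 2) =
      (1 + q ^ (4 * n + 2)) * (centralRatio q n (m + 1) * q ^ (m + 1) ^ 2) +
        q ^ (2 * n + 1) * (centralRatio q n m * q ^ m ^ 2 +
          centralRatio q n (m + 2) * q ^ (m + 2) ^ 2) := by
  have b := (one_sub_pow_pos h0 h1 (m := 2 * n + 2) (by omega)).ne'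
  rcases lt_trichotomy m n with h | h | h
  · obtain ⟨k, rfl⟩ := Nat.exists_eq_add_of_lt h
    have r1 := centralRatio_succ h0 h1 (m + k + 1) m
    have r2 := centralRatio_succ h0 h1 (m + k + 1) (m + 1)
    have r3 := centralRatio_succ_left h0 h1 (n := m + k + 1) (j := m + 1) (by omega)
    rw [show m + k + 1 - m = k + 1 by omega] at r1
    rw [show m + k + 1 - (m + 1) = k by omega] at r2
    rw [show m + k + 1 + 1 - (m + 1) = k + 1 by omega] at r3
    have p1 := (one_sub_pow_pos h0 h1 (m := 2 * (k + 1)) (by omega)).ne'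
    have p2 := (one_sub_pow_pos h0 h1 (m := 2 * (m + k + 1 + 1 + (m + 1))) (by omega)).ne'
    rw [eq_comm, ← eq_div_iff p1] at r1
    rw [← eq_div_iff p2] at r2
    rw [← eq_div_iff (mul_ne_zero p1 p2)] at r3
    rw [r2, r3, r1, stepConst]
    field_simp
    ring
  · subst h
    have r1 := centralRatio_succ h0 h1 (m + 1) m
    have r3 := centralRatio_succ_left h0 h1 (le_refl m)
    rw [centralRatio_eq_zero q (show m < m + 1 by omega), centralRatio_eq_zero q (show m < m + 2 by omega)]
    rw [show m + 1 - m = 1 by omega] at r1 r3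
    have p0 := (one_sub_pow_pos h0 h1 (m := 2 * 1) (by omega)).ne'
    have p1 := (one_sub_pow_pos h0 h1 (m := 2 * (m + 1 + m)) (by omega)).ne'
    have p2 := (one_sub_pow_pos h0 h1 (m := 2 * (m + 1 + 1 + m)) (by omega)).ne'
    rw [← eq_div_iff p2] at r1
    rw [← eq_div_iff (mul_ne_zero p0 p1)] at r3
    rw [r1, r3, stepConst]
    field_simp
    ring
  · rw [centralRatio_eq_zero q (show n + 1 < m + 1 by omega),
      centralRatio_eq_zero q (show n < m + 1 by omega),
      centralRatio_eq_zero q (show n < m by omega), centralRatio_eq_zero q (show n < m + 2 by omega)]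
    ring

/-- The `j`-th term of the finite triple product sum, divided by the central coefficient. As it is
used for `z = ±1` only, `z ^ |j|` stands for `z ^ j`. -/
noncomputable def finiteTerm (q z : ℝ) (n : ℕ) (j : ℤ) : ℝ :=
  z ^ j.natAbs * (centralRatio q n j.natAbs * q ^ j.natAbs ^ 2)

lemma finiteTerm_recurrence {q z : ℝ} (h0 : 0 < q) (h1 : q < 1) (hz : z ^ 2 = 1) (n : ℕ) (j : ℤ) :
    stepConst q n * finiteTerm q z (n + 1) j =
      (1 + q ^ (4 * n + 2)) * finiteTerm q z n j +
        z * q ^ (2 * n + 1) * (finiteTerm q z n (j - 1) + finiteTerm q z n (j + 1)) := by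
  have key : ∀ m : ℕ, stepConst q n * (z ^ (m + 1) * (centralRatio q (n + 1) (m + 1) * q ^ (m + 1) ^ 2)) =
      (1 + q ^ (4 * n + 2)) * (z ^ (m + 1) * (centralRatio q n (m + 1) * q ^ (m + 1) ^ 2)) +
        z * q ^ (2 * n + 1) * (z ^ m * (centralRatio q n m * q ^ m ^ 2) +
          z ^ (m + 2) * (centralRatio q n (m + 2) * q ^ (m + 2) ^ 2)) := by
    intro m
    have hz2 : z ^ (m + 2) = z ^ m := by rw [pow_add, hz, mul_one]
    rw [hz2]
    linear_combination z ^ (m + 1) * recurrence_succ h0 h1 n m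
  unfold finiteTerm
  rcases lt_trichotomy j 0 with h | rfl | h
  · obtain ⟨m, rfl⟩ : ∃ m : ℕ, j = -((m : ℤ) + 1) := ⟨(-j - 1).toNat, by omega⟩
    rw [show (-((m : ℤ) + 1)).natAbs = m + 1 by omega,
      show (-((m : ℤ) + 1) - 1).natAbs = m + 2 by omega,
      show (-((m : ℤ) + 1) + 1).natAbs = m by omega, key m]
    ring
  · have := recurrence_zero h0 h1 n
    simp
    linear_combination this - 2 * q ^ (2 * n + 1) * (centralRatio q n 1 * q) * hz
  · obtain ⟨m, rfl⟩ : ∃ m : ℕ, j = (m : ℤ) + 1 := ⟨(j - 1).toNat, by omega⟩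
    rw [show ((m : ℤ) + 1).natAbs = m + 1 by omega,
      show ((m : ℤ) + 1 - 1).natAbs = m by omega,
      show ((m : ℤ) + 1 + 1).natAbs = m + 2 by omega, key m]

lemma summable_finiteTerm (q z : ℝ) (n : ℕ) : Summable (finiteTerm q z n) := by
  refine summable_of_ne_finset_zero (s := Finset.Icc (-(n : ℤ)) n) fun j hj => ?_
  rw [Finset.mem_Icc] at hj
  simp [finiteTerm, centralRatio_eq_zero q (show n < j.natAbs by omega)]

lemma tsum_finiteTerm_succ {q z : ℝ} (h0 : 0 < q) (h1 : q < 1) (hz : z ^ 2 = 1) (n : ℕ) :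
    stepConst q n * ∑' j, finiteTerm q z (n + 1) j =
      (1 + z * q ^ (2 * n + 1)) ^ 2 * ∑' j, finiteTerm q z n j := by
  have s := summable_finiteTerm q z n
  have e1 : ∑' j, finiteTerm q z n (j - 1) = ∑' j, finiteTerm q z n j :=
    (Equiv.subRight (1 : ℤ)).tsum_eq (finiteTerm q z n)
  have e2 : ∑' j, finiteTerm q z n (j + 1) = ∑' j, finiteTerm q z n j :=
    (Equiv.addRight (1 : ℤ)).tsum_eq (finiteTerm q z n)
  have s1 : Summable fun j => finiteTerm q z n (j - 1) :=
    (Equiv.subRight (1 : ℤ)).summable_iff.2 s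
  have s2 : Summable fun j => finiteTerm q z n (j + 1) :=
    (Equiv.addRight (1 : ℤ)).summable_iff.2 s
  rw [← tsum_mul_left]
  simp_rw [finiteTerm_recurrence h0 h1 hz]
  rw [(s.mul_left _).tsum_add ((s1.add s2).mul_left _), tsum_mul_left, tsum_mul_left,
    s1.tsum_add s2, e1, e2]
  have : (z * q ^ (2 * n + 1)) ^ 2 = q ^ (4 * n + 2) := by rw [mul_pow, hz]; ring
  linear_combination -this * ∑' j, finiteTerm q z n j

/-- The finite Jacobi triple product at `z = ±1`, normalized to have central coefficient `1`. -/
lemma tsum_finiteTerm_eq_prod {q z : ℝ} (h0 : 0 < q) (h1 : q < 1) (hz : z ^ 2 = 1) (n : ℕ) :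
    ∑' j, finiteTerm q z n j =
      ∏ k ∈ Finset.range n, ((1 + z * q ^ (2 * k + 1)) ^ 2 / stepConst q k) := by
  induction n with
  | zero =>
    rw [tsum_eq_single 0]
    · simp [finiteTerm, centralRatio]
    · intro j hj
      simp [finiteTerm, centralRatio_eq_zero q (show 0 < j.natAbs by omega)]
  | succ n ih =>
    have := (stepConst_pos h0 h1 n).ne'
    rw [Finset.prod_range_succ, ← ih, mul_div_assoc', eq_div_iff this, mul_comm,
      tsum_finiteTerm_succ h0 h1 hz, mul_comm]

lemma summable_pow_natAbs_sq {q : ℝ} (h0 : 0 < q) (h1 : q < 1) :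
    Summable fun j : ℤ => q ^ j.natAbs ^ 2 := by
  have : Summable fun n : ℕ => q ^ n ^ 2 :=
    (summable_geometric_of_lt_one h0.le h1).of_nonneg_of_le (fun n => by positivity)
      fun n => pow_le_pow_of_le_one h0.le h1.le (Nat.le_self_pow two_ne_zero n)
  exact Summable.of_nat_of_neg (by simpa using this) (by simpa using this)

lemma tendsto_tsum_finiteTerm {q z : ℝ} (h0 : 0 < q) (h1 : q < 1) (hz : |z| = 1) :
    Tendsto (fun n => ∑' j, finiteTerm q z n j) atTop
      (𝓝 (∑' j : ℤ, z ^ j.natAbs * q ^ j.natAbs ^ 2)) := by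
  refine tendsto_tsum_of_dominated_convergence (summable_pow_natAbs_sq h0 h1) (fun j => ?_)
    (Eventually.of_forall fun n j => ?_)
  · simpa [finiteTerm] using ((tendsto_centralRatio h0 h1 j.natAbs).mul_const (q ^ j.natAbs ^ 2)).const_mul
      (z ^ j.natAbs)
  · rw [finiteTerm, norm_mul, norm_pow, Real.norm_eq_abs, hz, one_pow, one_mul, Real.norm_eq_abs,
      abs_of_nonneg (mul_nonneg (centralRatio_nonneg h0 h1 _ _) (by positivity))]
    exact mul_le_of_le_one_left (by positivity) (centralRatio_le_one h0 h1 _ _)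

/-- The product formula for `θ₄ / θ₃` in terms of the nome `q`. -/
lemma tendsto_prod_ratio {q : ℝ} (h0 : 0 < q) (h1 : q < 1) :
    Tendsto (fun n => ∏ k ∈ Finset.range n, ((1 - q ^ (2 * k + 1)) / (1 + q ^ (2 * k + 1))) ^ 2)
      atTop (𝓝 ((∑' j : ℤ, (-1) ^ j.natAbs * q ^ j.natAbs ^ 2) / ∑' j : ℤ, q ^ j.natAbs ^ 2)) := by
  have hpos : (∑' j : ℤ, q ^ j.natAbs ^ 2) ≠ 0 :=
    ((summable_pow_natAbs_sq h0 h1).tsum_pos (fun j => by positivity) 0 (by simp)).ne'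
  have hp := tendsto_tsum_finiteTerm h0 h1 (z := 1) (by simp)
  have hm := tendsto_tsum_finiteTerm h0 h1 (z := -1) (by simp)
  simp only [one_pow, one_mul] at hp
  refine (hm.div hp hpos).congr fun n => ?_
  rw [Pi.div_apply, tsum_finiteTerm_eq_prod h0 h1 (by norm_num), tsum_finiteTerm_eq_prod h0 h1 (by norm_num),
    ← Finset.prod_div_distrib]
  refine Finset.prod_congr rfl fun k _ => ?_
  have := (stepConst_pos h0 h1 k).ne'
  rw [div_div_div_cancel_right₀ this, div_pow]
  ring

/-! ### Theta functions and the `tanh` product -/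

lemma theta3_eq (y : ℝ) :
    theta3 y = ∑' j : ℤ, Real.exp (-Real.pi * y) ^ j.natAbs ^ 2 := by
  refine tsum_congr fun j => ?_
  rw [← Real.exp_nat_mul]
  push_cast
  rw [Nat.cast_natAbs, Int.cast_abs, sq_abs]
  ring_nf

lemma theta3_modular {x : ℝ} (hx : 0 < x) :
    theta3 x = 1 / x ^ (1 / 2 : ℝ) * theta3 (1 / x) := by
  have := Real.tsum_exp_neg_mul_int_sq hx
  unfold theta3
  convert this using 4
  · ring_nf
  · ring_nf

/-- The modular transformation `θ₂(x) = x^{-1/2} θ₄(1/x)`, which is Poisson summation for a Gaussian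
with the character `n ↦ (-1)ⁿ`. -/
lemma theta2_modular {x : ℝ} (hx : 0 < x) :
    theta2 x = 1 / x ^ (1 / 2 : ℝ) *
      ∑' j : ℤ, (-1) ^ j.natAbs * Real.exp (-Real.pi * (1 / x)) ^ j.natAbs ^ 2 := by
  have hx' : 0 < ((1 / x : ℝ) : ℂ).re := by rw [Complex.ofReal_re]; positivity
  have := Complex.tsum_exp_neg_quadratic hx' (-Complex.I / 2)
  have e1 : (∑' n : ℤ, Complex.exp (-Real.pi * ((1 / x : ℝ) : ℂ) * n ^ 2 +
      2 * Real.pi * (-Complex.I / 2) * n)) =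
      ((∑' j : ℤ, (-1) ^ j.natAbs * Real.exp (-Real.pi * (1 / x)) ^ j.natAbs ^ 2 : ℝ) : ℂ) := by
    rw [Complex.ofReal_tsum]
    refine tsum_congr fun j => ?_
    rw [← Real.exp_nat_mul, Complex.exp_add, mul_comm]
    push_cast
    congr 1
    · rw [show 2 * (Real.pi : ℂ) * (-Complex.I / 2) * j = ((-j : ℤ) : ℂ) * (Real.pi * Complex.I) by
        push_cast; ring, Complex.exp_int_mul, Complex.exp_pi_mul_I]
      rcases Int.natAbs_eq j with h | h
      · conv_lhs => rw [h, zpow_neg, zpow_natCast, ← inv_pow]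
        norm_num
      · conv_lhs => rw [h, neg_neg, zpow_natCast]
    · have : ((j.natAbs : ℂ)) ^ 2 = (j : ℂ) ^ 2 := by
        rw [← Int.cast_natCast, ← Int.cast_pow, ← Int.cast_pow, Int.natAbs_sq]
      rw [this]
      ring_nf
  have e2 : (∑' n : ℤ, Complex.exp (-Real.pi / ((1 / x : ℝ) : ℂ) *
      (n + Complex.I * (-Complex.I / 2)) ^ 2)) = ((theta2 x : ℝ) : ℂ) := by
    rw [theta2, Complex.ofReal_tsum]
    refine tsum_congr fun j => ?_
    push_cast
    congr 1
    rw [show Complex.I * (-Complex.I / 2) = 1 / 2 by linear_combination (-1/2) * Complex.I_sq]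
    have : (x : ℂ) ≠ 0 := by exact_mod_cast hx.ne'
    field_simp
  rw [e1, e2, show (1 / 2 : ℂ) = ((1 / 2 : ℝ) : ℂ) by push_cast; rfl,
    ← Complex.ofReal_cpow (by positivity)] at this
  have h : (∑' j : ℤ, (-1) ^ j.natAbs * Real.exp (-Real.pi * (1 / x)) ^ j.natAbs ^ 2) =
      1 / (1 / x) ^ (1 / 2 : ℝ) * theta2 x := by exact_mod_cast this
  rw [h, Real.div_rpow zero_le_one hx.le, Real.one_rpow]
  have : x ^ (1 / 2 : ℝ) ≠ 0 := (Real.rpow_pos_of_pos hx _).ne'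
  field_simp

/-- The product formula `θ₂(x) / θ₃(x) = ∏ tanh² ((2k+1)π / (2x))`. -/
lemma tendsto_prod_tanh {x : ℝ} (hx : 0 < x) :
    Tendsto (fun n => ∏ k ∈ Finset.range n, Real.tanh ((2 * k + 1) * Real.pi / 2 * x⁻¹) ^ 2)
      atTop (𝓝 (theta2 x / theta3 x)) := by
  have h1 : Real.exp (-Real.pi * (1 / x)) < 1 := by
    rw [Real.exp_lt_one_iff]
    have := Real.pi_pos
    have : 0 < Real.pi * (1 / x) := by positivity
    linarith
  have := tendsto_prod_ratio (Real.exp_pos _) h1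
  rw [theta2_modular hx, theta3_modular hx, theta3_eq (1 / x), mul_div_mul_left _ _
    (one_div_pos.2 (Real.rpow_pos_of_pos hx _)).ne']
  refine this.congr fun n => Finset.prod_congr rfl fun k _ => ?_
  congr 1
  set v := (2 * (k : ℝ) + 1) * Real.pi / 2 * x⁻¹ with hv
  have e : Real.exp (-Real.pi * (1 / x)) ^ (2 * k + 1) = Real.exp (-v) * Real.exp (-v) := by
    rw [← Real.exp_nat_mul, ← Real.exp_add]
    congr 1
    rw [hv]; push_cast; ring
  rw [e, Real.tanh_eq_sinh_div_cosh, Real.sinh_eq, Real.cosh_eq, Real.exp_neg]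
  have := Real.exp_pos v
  field_simp

/-! ### Monotonicity of the logarithmic derivative -/

lemma strictAntiOn_div_sinh : StrictAntiOn (fun x : ℝ => x / Real.sinh x) (Set.Ioi 0) := by
  refine strictAntiOn_of_deriv_neg (convex_Ioi 0) ?_ ?_
  · exact continuousOn_id.div Real.continuous_sinh.continuousOn
      fun x hx => (Real.sinh_pos_iff.2 hx).ne'
  · intro x hx
    rw [interior_Ioi, Set.mem_Ioi] at hx
    have hs := Real.sinh_pos_iff.2 hx
    have hd : HasDerivAt (fun x : ℝ => x / Real.sinh x)
        ((1 * Real.sinh x - x * Real.cosh x) / Real.sinh x ^ 2) x :=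
      (hasDerivAt_id' x).div (Real.hasDerivAt_sinh x) hs.ne'
    rw [hd.deriv]
    refine div_neg_of_neg_of_pos ?_ (by positivity)
    -- The numerator is negative, as `x cosh x - sinh x` vanishes at `0` and has derivative
    -- `x sinh x > 0`.
    have hmono : StrictMonoOn (fun x : ℝ => x * Real.cosh x - Real.sinh x) (Set.Ici 0) := by
      refine strictMonoOn_of_deriv_pos (convex_Ici 0) (by fun_prop) fun y hy => ?_
      rw [interior_Ici, Set.mem_Ioi] at hy
      have hd : HasDerivAt (fun x : ℝ => x * Real.cosh x - Real.sinh x)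
          (1 * Real.cosh y + y * Real.sinh y - Real.cosh y) y :=
        ((hasDerivAt_id' y).mul (Real.hasDerivAt_cosh y)).sub (Real.hasDerivAt_sinh y)
      rw [hd.deriv]
      have := mul_pos hy (Real.sinh_pos_iff.2 hy)
      linarith
    have := hmono Set.self_mem_Ici hx.le hx
    simp at this
    linarith

lemma div_sinh_le {x : ℝ} (hx : 0 < x) : x / Real.sinh x ≤ 2 * Real.exp (-(x / 2)) := by
  have h1 : x / 2 ≤ Real.sinh (x / 2) := Real.self_le_sinh_iff.2 (by positivity)
  have h2 : Real.sinh x = 2 * Real.sinh (x / 2) * Real.cosh (x / 2) := by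
    rw [← Real.sinh_two_mul]; ring_nf
  have h3 : Real.exp (x / 2) ≤ 2 * Real.cosh (x / 2) := by
    rw [Real.cosh_eq]
    have := Real.exp_pos (-(x / 2))
    linarith
  have h4 := Real.exp_pos (x / 2)
  rw [div_le_iff₀ (Real.sinh_pos_iff.2 hx), h2]
  calc x = 2 * (x / 2) * (Real.exp (-(x / 2)) * Real.exp (x / 2)) := by
        rw [← Real.exp_add, neg_add_cancel, Real.exp_zero]; ring
    _ ≤ 2 * Real.sinh (x / 2) * (Real.exp (-(x / 2)) * (2 * Real.cosh (x / 2))) := by gcongr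
    _ = _ := by ring

/-- The coefficient `(2k+1)π/2` in the arguments of the `tanh` product. -/
noncomputable def freq (k : ℕ) : ℝ := (2 * k + 1) * Real.pi / 2

lemma freq_pos (k : ℕ) : 0 < freq k := by
  have := Real.pi_pos
  unfold freq
  positivity

/-- The logarithm of the `k`-th factor of the product for `θ₂(x) / θ₃(x)` at `x = e^s`. -/
noncomputable def logTanhTerm (k : ℕ) (s : ℝ) : ℝ :=
  2 * Real.log (Real.tanh (freq k * Real.exp (-s)))

/-- The derivative of `logTanhTerm k`, see `hasDerivAt_logTanhTerm`. -/
noncomputable def logTanhDeriv (k : ℕ) (s : ℝ) : ℝ :=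
  -2 * (2 * freq k * Real.exp (-s) / Real.sinh (2 * freq k * Real.exp (-s)))

lemma hasDerivAt_logTanhTerm (k : ℕ) (s : ℝ) :
    HasDerivAt (logTanhTerm k) (logTanhDeriv k s) s := by
  have hpos : ∀ s, 0 < freq k * Real.exp (-s) := fun s => mul_pos (freq_pos k) (Real.exp_pos _)
  set v := freq k * Real.exp (-s) with hv
  have hi : HasDerivAt (fun s : ℝ => freq k * Real.exp (-s)) (-v) s := by
    exact ((hasDerivAt_neg' s).exp.const_mul (freq k)).congr_deriv (by rw [hv]; ring)
  have hs := Real.sinh_pos_iff.2 (hpos s)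
  have hc := Real.cosh_pos v
  have h1 := ((hi.sinh.log hs.ne').sub (hi.cosh.log hc.ne')).const_mul 2
  have hfun : logTanhTerm k = fun s => 2 * (Real.log (Real.sinh (freq k * Real.exp (-s))) -
      Real.log (Real.cosh (freq k * Real.exp (-s)))) := by
    funext s
    rw [logTanhTerm, Real.tanh_eq_sinh_div_cosh, Real.log_div (Real.sinh_pos_iff.2 (hpos s)).ne'
      (Real.cosh_pos _).ne']
  rw [hfun]
  refine h1.congr_deriv ?_
  rw [logTanhDeriv, mul_assoc 2 (freq k), ← hv, Real.sinh_two_mul]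
  rw [← hv] at hs
  field_simp
  linear_combination (-v) * Real.cosh_sq v

lemma summable_exp_neg_freq {c : ℝ} (hc : 0 < c) : Summable fun k => Real.exp (-(freq k * c)) := by
  have h : ∀ k, Real.exp (-(freq k * c)) =
      Real.exp (-(Real.pi / 2 * c)) * Real.exp (-(Real.pi * c)) ^ k := by
    intro k
    rw [← Real.exp_nat_mul, ← Real.exp_add, freq]
    ring_nf
  simp_rw [h]
  refine (summable_geometric_of_lt_one (Real.exp_pos _).le ?_).mul_left _
  rw [Real.exp_lt_one_iff, neg_lt_zero]
  exact mul_pos Real.pi_pos hc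

lemma abs_logTanhDeriv_le (k : ℕ) {s R : ℝ} (h : s ≤ R) :
    ‖logTanhDeriv k s‖ ≤ 4 * Real.exp (-(freq k * Real.exp (-R))) := by
  have hk := freq_pos k
  have hx : 0 < 2 * freq k * Real.exp (-s) := by positivity
  have hs := Real.sinh_pos_iff.2 hx
  have h1 := div_sinh_le hx
  have h2 : Real.exp (-(2 * freq k * Real.exp (-s) / 2)) ≤ Real.exp (-(freq k * Real.exp (-R))) := by
    have : freq k * Real.exp (-R) ≤ freq k * Real.exp (-s) := by gcongr
    rw [Real.exp_le_exp]
    linarith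
  rw [logTanhDeriv, norm_mul, Real.norm_of_nonneg (div_nonneg hx.le hs.le)]
  norm_num
  linarith

lemma summable_logTanhDeriv (s : ℝ) : Summable fun k => logTanhDeriv k s :=
  .of_norm_bounded ((summable_exp_neg_freq (Real.exp_pos (-s))).mul_left 4)
    fun k => abs_logTanhDeriv_le k le_rfl

lemma summable_logTanhTerm (s : ℝ) : Summable fun k => logTanhTerm k s := by
  have hc := Real.exp_pos (-s)
  set c := Real.exp (-s) with hcdef
  have hπ := Real.pi_pos
  refine .of_norm_bounded
    ((summable_exp_neg_freq hc).mul_left (2 / (Real.pi / 2 * c))) fun k => ?_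
  set v := freq k * c with hv
  have hv0 : 0 < v := mul_pos (freq_pos k) hc
  have hs := Real.sinh_pos_iff.2 hv0
  have ht : 0 < Real.tanh v := by
    rw [Real.tanh_eq_sinh_div_cosh]; exact div_pos hs (Real.cosh_pos v)
  have hle : Real.log (Real.tanh v) ≤ 0 := Real.log_nonpos ht.le (Real.tanh_lt_one v).le
  have hge := Real.one_sub_inv_le_log_of_pos ht
  have h1 : (Real.tanh v)⁻¹ - 1 = Real.exp (-v) / Real.sinh v := by
    rw [← Real.cosh_sub_sinh, Real.tanh_eq_sinh_div_cosh, inv_div]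
    field_simp
  have h2 : Real.pi / 2 * c ≤ Real.sinh v := by
    refine le_trans ?_ (Real.self_le_sinh_iff.2 hv0.le)
    rw [hv, freq]
    gcongr
    have : (0 : ℝ) ≤ k := k.cast_nonneg
    nlinarith
  have h3 : Real.exp (-v) / Real.sinh v ≤ Real.exp (-v) / (Real.pi / 2 * c) := by gcongr
  rw [logTanhTerm, ← hcdef, ← hv, Real.norm_of_nonpos (by linarith)]
  calc -(2 * Real.log (Real.tanh v)) ≤ 2 * (Real.exp (-v) / (Real.pi / 2 * c)) := by linarith
    _ = _ := by ring

/-- The function `s ↦ log (θ₂(e^s) / θ₃(e^s))`, defined through the logarithm of its product; see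
`theta_ratio_eq_exp`. -/
noncomputable def logRatio (s : ℝ) : ℝ := ∑' k, logTanhTerm k s

/-- The derivative of `logRatio`, see `hasDerivAt_logRatio`. -/
noncomputable def logRatioDeriv (s : ℝ) : ℝ := ∑' k, logTanhDeriv k s

lemma hasDerivAt_logRatio (s : ℝ) : HasDerivAt logRatio (logRatioDeriv s) s := by
  have hmem : s ∈ Set.Iio (s + 1) := lt_add_one s
  exact hasDerivAt_tsum_of_isPreconnected
    ((summable_exp_neg_freq (Real.exp_pos (-(s + 1)))).mul_left 4) isOpen_Iio isPreconnected_Iio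
    (fun k y _ => hasDerivAt_logTanhTerm k y) (fun k y hy => abs_logTanhDeriv_le k (le_of_lt hy))
    hmem (summable_logTanhTerm s) hmem

lemma strictAnti_logTanhDeriv (k : ℕ) : StrictAnti (logTanhDeriv k) := by
  intro s t hst
  have hk := freq_pos k
  have h : 2 * freq k * Real.exp (-t) < 2 * freq k * Real.exp (-s) := by gcongr
  have := strictAntiOn_div_sinh (Set.mem_Ioi.2 (by positivity)) (Set.mem_Ioi.2 (by positivity)) h
  simp only [logTanhDeriv] at this ⊢
  linarith

lemma strictAnti_logRatioDeriv : StrictAnti logRatioDeriv := fun s t hst =>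
  Summable.tsum_lt_tsum (fun k => (strictAnti_logTanhDeriv k hst).le)
    (strictAnti_logTanhDeriv 0 hst) (summable_logTanhDeriv t) (summable_logTanhDeriv s)

lemma theta_ratio_eq_exp (s : ℝ) :
    theta2 (Real.exp s) / theta3 (Real.exp s) = Real.exp (logRatio s) := by
  refine tendsto_nhds_unique (tendsto_prod_tanh (Real.exp_pos s)) ?_
  have h := (Real.continuous_exp.tendsto _).comp (summable_logTanhTerm s).hasSum.tendsto_sum_nat
  refine h.congr fun n => ?_
  rw [Function.comp_apply, Real.exp_sum]
  refine Finset.prod_congr rfl fun k _ => ?_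
  have hv : 0 < freq k * Real.exp (-s) := mul_pos (freq_pos k) (Real.exp_pos _)
  have ht : 0 < Real.tanh (freq k * Real.exp (-s)) := by
    rw [Real.tanh_eq_sinh_div_cosh]
    exact div_pos (Real.sinh_pos_iff.2 hv) (Real.cosh_pos _)
  rw [logTanhTerm, two_mul, Real.exp_add, Real.exp_log ht, ← sq, Real.exp_neg, freq]

/-- with `c_i > 0`, `∏ c_i = 1`, not all `c_i = 1`, the function
`Q(t) = ∏ θ₂(c_i^t α)/θ₃(c_i^t α)` satisfies `Q'(0)=0`, `Q' > 0` on `t<0`, `Q' < 0` on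
`t>0`; in particular `t = 0` is the unique strict maximum of `Q`. -/
theorem Q_unique_maximum
    (d : ℕ) (hd : 1 ≤ d) (α : ℝ) (hα : 0 < α)
    (c : Fin d → ℝ) (hc : ∀ i, 0 < c i) (hprod : ∏ i, c i = 1)
    (hne : ¬ ∀ i, c i = 1)
    (Q : ℝ → ℝ)
    (hQ : ∀ t : ℝ, Q t = ∏ i, theta2 (Real.rpow (c i) t * α) / theta3 (Real.rpow (c i) t * α)) :
    deriv Q 0 = 0 ∧ (∀ t : ℝ, t < 0 → 0 < deriv Q t) ∧
      (∀ t : ℝ, 0 < t → deriv Q t < 0) ∧ (∀ t : ℝ, t ≠ 0 → Q t < Q 0) := by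
  set l : Fin d → ℝ := fun i => Real.log (c i) with hl
  set a := Real.log α with ha
  have hsum : ∑ i, l i = 0 := by
    rw [hl, ← Real.log_prod fun i _ => (hc i).ne', hprod, Real.log_one]
  obtain ⟨i₀, hi₀⟩ : ∃ i, l i ≠ 0 := by
    by_contra! h
    exact hne fun i => Real.eq_one_of_pos_of_log_eq_zero (hc i) (h i)
  have hQexp : Q = fun t => Real.exp (∑ i, logRatio (l i * t + a)) := by
    funext t
    rw [hQ, Real.exp_sum]
    refine Finset.prod_congr rfl fun i _ => ?_
    rw [← theta_ratio_eq_exp, Real.exp_add, ha, Real.exp_log hα,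
      ← Real.rpow_def_of_pos (hc i)]
    rfl
  have hderiv : ∀ t, HasDerivAt Q (Q t * ∑ i, logRatioDeriv (l i * t + a) * l i) t := by
    intro t
    rw [hQexp]
    refine HasDerivAt.exp (HasDerivAt.fun_sum fun i _ => ?_)
    have hlin : HasDerivAt (fun t => l i * t + a) (l i) t := by
      simpa using ((hasDerivAt_id' t).const_mul (l i)).add_const a
    exact (hasDerivAt_logRatio (l i * t + a)).comp t hlin
  have hpos : ∀ t, 0 < Q t := fun t => by rw [hQexp]; exact Real.exp_pos _
  -- Since `∑ l i = 0`, the constant `logRatioDeriv a` may be subtracted from each factor.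
  have hshift : ∀ t, ∑ i, logRatioDeriv (l i * t + a) * l i =
      ∑ i, (logRatioDeriv (l i * t + a) - logRatioDeriv a) * l i := by
    intro t
    simp_rw [sub_mul]
    rw [Finset.sum_sub_distrib, ← Finset.mul_sum, hsum, mul_zero, sub_zero]
  have hterm : ∀ x t, x ≠ 0 → 0 < t → (logRatioDeriv (x * t + a) - logRatioDeriv a) * x < 0 := by
    intro x t hx ht
    rcases hx.lt_or_gt with hx | hx
    · have := strictAnti_logRatioDeriv (show x * t + a < a by nlinarith)
      exact mul_neg_of_pos_of_neg (by linarith) hx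
    · have := strictAnti_logRatioDeriv (show a < x * t + a by nlinarith)
      exact mul_neg_of_neg_of_pos (by linarith) hx
  have hterm' : ∀ x t, x ≠ 0 → t < 0 → 0 < (logRatioDeriv (x * t + a) - logRatioDeriv a) * x := by
    intro x t hx ht
    have := hterm (-x) (-t) (neg_ne_zero.2 hx) (neg_pos.2 ht)
    rw [neg_mul_neg] at this
    linarith
  have hneg : ∀ t, 0 < t → deriv Q t < 0 := by
    intro t ht
    rw [(hderiv t).deriv, hshift]
    refine mul_neg_of_pos_of_neg (hpos t) (Finset.sum_neg'
      (fun i _ => ?_) ⟨i₀, Finset.mem_univ _, hterm _ _ hi₀ ht⟩)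
    rcases eq_or_ne (l i) 0 with h | h
    · simp [h]
    · exact (hterm _ _ h ht).le
  have hposd : ∀ t, t < 0 → 0 < deriv Q t := by
    intro t ht
    rw [(hderiv t).deriv, hshift]
    refine mul_pos (hpos t) (Finset.sum_pos'
      (fun i _ => ?_) ⟨i₀, Finset.mem_univ _, hterm' _ _ hi₀ ht⟩)
    rcases eq_or_ne (l i) 0 with h | h
    · simp [h]
    · exact (hterm' _ _ h ht).le
  have hcont : Continuous Q := continuous_iff_continuousAt.2 fun t => (hderiv t).continuousAt
  refine ⟨?_, hposd, hneg, fun t ht => ?_⟩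
  · rw [(hderiv 0).deriv, hshift]
    simp
  · rcases ht.lt_or_gt with ht | ht
    · exact strictMonoOn_of_deriv_pos (convex_Iic 0) hcont.continuousOn
        (fun x hx => hposd x (by simpa using hx)) ht.le Set.self_mem_Iic ht
    · exact strictAntiOn_of_deriv_neg (convex_Ici 0) hcont.continuousOn
        (fun x hx => hneg x (by simpa using hx)) Set.self_mem_Ici ht.le ht
end

section
/- Let Λ = Mℤ^d ⊂ ℝ^d be a Bravais lattice (M an invertible real d×d matrix). Then every bijection φ : Λ → Λ satisfying |φ(p) − φ(q)| = |p − q| for all p, q ∈ Λ is the restriction to Λ of an affine isometry of ℝ^d; that is, there exists an affine isometry ψ : ℝ^d → ℝ^d with ψ(p) = φ(p) for all p ∈ Λ. -/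
/-!
After subtracting the image of the origin, a distance-preserving map `f` of the lattice fixes `0`,
so by polarization it preserves inner products. The columns `b j` of `M` are lattice points forming
a basis of `ℝ^d`, and `R` is the linear map with `R (b j) = f (b j)`. Comparing bilinear forms on
the basis gives `⟪R x, R y⟫ = ⟪x, y⟫` for all `x, y`, and comparing linear forms gives
`⟪f p, R y⟫ = ⟪p, y⟫` for every lattice point `p`. Hence
`‖f p - R p‖² = ‖p‖² - 2 ⟪p, p⟫ + ‖p‖² = 0`.
-/

open scoped BigOperators

/-- A map on a subset of an inner product space that fixes the origin and preserves distances
agrees with a linear isometry as soon as the subset contains a basis. -/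
lemma exists_linearIsometry_of_basis_mem {E ι : Type*} [NormedAddCommGroup E]
    [InnerProductSpace ℝ E] (b : Module.Basis ι ℝ E) (L : Set E) (h0 : (0 : E) ∈ L)
    (hb : ∀ j, b j ∈ L) (f : L → E) (hf0 : f ⟨0, h0⟩ = 0)
    (hf : ∀ p q : L, ‖f p - f q‖ = ‖(p : E) - q‖) :
    ∃ R : E →ₗᵢ[ℝ] E, ∀ p : L, f p = R p := by
  have hnorm : ∀ p : L, ‖f p‖ = ‖(p : E)‖ := fun p => by
    simpa [hf0] using hf p ⟨0, h0⟩
  have hinner : ∀ p q : L, inner ℝ (f p) (f q) = inner ℝ (p : E) (q : E) := fun p q => by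
    have h1 := norm_sub_sq_real (f p) (f q)
    have h2 := norm_sub_sq_real (p : E) (q : E)
    rw [hf, hnorm, hnorm] at h1
    linarith
  let T : E →ₗ[ℝ] E := b.constr ℝ fun j => f ⟨b j, hb j⟩
  have hTb : ∀ j, T (b j) = f ⟨b j, hb j⟩ := fun j => b.constr_basis ℝ _ j
  have hmixed : ∀ (p : L) (y : E), inner ℝ (f p) (T y) = inner ℝ (p : E) y := fun p y => by
    have h : (innerₗ E (f p)) ∘ₗ T = innerₗ E (p : E) :=
      b.ext fun j => by simp [hTb, hinner]
    simpa using LinearMap.congr_fun h y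
  have hTT : ∀ x y : E, inner ℝ (T x) (T y) = inner ℝ x y := fun x y => by
    have h : (innerₗ E (T y)) ∘ₗ T = innerₗ E y :=
      b.ext fun j => by
        simp only [LinearMap.comp_apply, innerₗ_apply_apply]
        rw [real_inner_comm, hTb, hmixed, real_inner_comm]
    have := LinearMap.congr_fun h x
    simp only [LinearMap.comp_apply, innerₗ_apply_apply] at this
    rw [real_inner_comm, this, real_inner_comm]
  refine ⟨T.isometryOfInner hTT, fun p => ?_⟩
  have hT : ‖T p‖ ^ 2 = ‖(p : E)‖ ^ 2 := by
    rw [← real_inner_self_eq_norm_sq, ← real_inner_self_eq_norm_sq, hTT]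
  have h := norm_sub_sq_real (f p) (T p)
  rw [hmixed, hnorm, hT, real_inner_self_eq_norm_sq] at h
  have hzero : ‖f p - T p‖ ^ 2 = 0 := by linarith
  simpa [sub_eq_zero] using hzero

/-- every distance-preserving bijection of a Bravais lattice `Λ = Mℤ^d` onto
itself is the restriction of an affine isometry `x ↦ Rx + v` of `ℝ^d` (Euclidean). -/
theorem lattice_isometry_is_affine
    (d : ℕ) (M : Matrix (Fin d) (Fin d) ℝ) (hM : IsUnit M.det)
    (L : Set (EuclideanSpace ℝ (Fin d)))
    (hL : L = {v : EuclideanSpace ℝ (Fin d) |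
      ∃ k : Fin d → ℤ, ∀ i, v i = M.mulVec (fun j => (k j : ℝ)) i})
    (φ : L ≃ L)
    (hφ : ∀ p q : L,
      dist (φ p : EuclideanSpace ℝ (Fin d)) (φ q : EuclideanSpace ℝ (Fin d))
        = dist (p : EuclideanSpace ℝ (Fin d)) (q : EuclideanSpace ℝ (Fin d))) :
    ∃ (R : EuclideanSpace ℝ (Fin d) →ₗᵢ[ℝ] EuclideanSpace ℝ (Fin d))
      (v : EuclideanSpace ℝ (Fin d)),
      ∀ p : L, (φ p : EuclideanSpace ℝ (Fin d)) = R (p : EuclideanSpace ℝ (Fin d)) + v := by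
  have h0 : (0 : EuclideanSpace ℝ (Fin d)) ∈ L := by
    rw [hL]
    refine ⟨0, fun i => ?_⟩
    simp [Matrix.mulVec, dotProduct]
  let b : Module.Basis (Fin d) ℝ (EuclideanSpace ℝ (Fin d)) :=
    (Pi.basisFun ℝ (Fin d)).map
      ((M.toLinearEquiv' (M.invertibleOfIsUnitDet hM)).trans
        (WithLp.linearEquiv 2 ℝ (Fin d → ℝ)).symm)
  have hb : ∀ j, b j ∈ L := fun j => by
    rw [hL]
    refine ⟨Pi.single j 1, fun i => ?_⟩
    have hs : (fun l => (((Pi.single j 1 : Fin d → ℤ) l : ℤ) : ℝ)) = Pi.single j 1 := by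
      ext l
      by_cases h : l = j <;> simp [h]
    rw [hs]
    simp [b, Matrix.toLinearEquiv']
  obtain ⟨R, hR⟩ := exists_linearIsometry_of_basis_mem b L h0 hb
    (fun p => (φ p : EuclideanSpace ℝ (Fin d)) - φ ⟨0, h0⟩) (sub_self _)
    (fun p q => by simpa [dist_eq_norm] using hφ p q)
  exact ⟨R, φ ⟨0, h0⟩, fun p => sub_eq_iff_eq_add.mp (hR p)⟩
end
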